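/- Let n > n₁ ≥ 2 and m > m₁ ≥ 2 be integers with F_n - F_{n₁} = T_m - T_{m₁}. Then max{(n-n₁)·log α, (m-m₁)·log α_T} < 1.66×10^30·(log n)², and moreover n < 8×10^51; here α = (1+√5)/2 and α_T is the unique real root of x³ - x² - x - 1. -/

import Mathlib

/-- The Tribonacci sequence: T 0 = 0, T 1 = T 2 = 1,
    T (k+3) = T (k+2) + T (k+1) + T k. -/
def trib : ℕ → ℤ
  | 0 => 0
  | 1 => 1
  | 2 => 1
  | n + 3 => trib (n + 2) + trib (n + 1) + trib n


namespace FT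

/-- value of the functional `g ↦ g^{(s)}(z)/s!` on the monomial `t^k`. -/
noncomputable def ev (z : ℝ) (s k : ℕ) : ℝ := (k.choose s : ℝ) * z ^ (k - s)

/-- the sequence operator "division by `t - ν`". -/
noncomputable def Lop (ν : ℝ) (u : ℕ → ℝ) : ℕ → ℝ
  | 0 => 0
  | k + 1 => ν * Lop ν u k + u k

def Rep (I : Finset (ℕ × ℕ)) (N : ℝ) (u : ℕ → ℝ) : Prop :=
  ∃ b : ℕ × ℕ → ℝ, ∑ i ∈ I, 2 ^ i.2 * |b i| ≤ N ∧ ∀ k, u k = ∑ i ∈ I, b i * ev i.1 i.2 k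

lemma Rep.mono {I : Finset (ℕ × ℕ)} {N N' : ℝ} {u : ℕ → ℝ} (h : Rep I N u) (hN : N ≤ N') :
    Rep I N' u := by
  obtain ⟨b, h1, h2⟩ := h
  exact ⟨b, h1.trans hN, h2⟩

lemma Rep.add {I : Finset (ℕ × ℕ)} {N N' : ℝ} {u u' : ℕ → ℝ} (h : Rep I N u) (h' : Rep I N' u') :
    Rep I (N + N') (fun k => u k + u' k) := by
  obtain ⟨b, h1, h2⟩ := h
  obtain ⟨b', h1', h2'⟩ := h'
  refine ⟨fun i => b i + b' i, ?_, fun k => ?_⟩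
  · calc ∑ i ∈ I, 2 ^ i.2 * |b i + b' i| ≤ ∑ i ∈ I, (2 ^ i.2 * |b i| + 2 ^ i.2 * |b' i|) := by
          apply Finset.sum_le_sum
          intro i _
          rw [← mul_add]
          exact mul_le_mul_of_nonneg_left (abs_add_le _ _) (by positivity)
      _ ≤ _ := by rw [Finset.sum_add_distrib]; linarith
  · simp only [h2, h2', ← Finset.sum_add_distrib]
    exact Finset.sum_congr rfl fun i _ => by ring

lemma Rep.smul {I : Finset (ℕ × ℕ)} {N : ℝ} {u : ℕ → ℝ} (c : ℝ) (h : Rep I N u) :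
    Rep I (|c| * N) (fun k => c * u k) := by
  obtain ⟨b, h1, h2⟩ := h
  refine ⟨fun i => c * b i, ?_, fun k => ?_⟩
  · calc ∑ i ∈ I, 2 ^ i.2 * |c * b i| = |c| * ∑ i ∈ I, 2 ^ i.2 * |b i| := by
          rw [Finset.mul_sum]
          exact Finset.sum_congr rfl fun i _ => by rw [abs_mul]; ring
      _ ≤ _ := mul_le_mul_of_nonneg_left h1 (abs_nonneg _)
  · simp only [h2, Finset.mul_sum]
    exact Finset.sum_congr rfl fun i _ => by ring

lemma Rep.zero (I : Finset (ℕ × ℕ)) : Rep I 0 (fun _ => 0) :=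
  ⟨fun _ => 0, by simp, by simp⟩

lemma Rep.single {I : Finset (ℕ × ℕ)} {z s : ℕ} (h : (z, s) ∈ I) :
    Rep I (2 ^ s) (ev z s) := by
  refine ⟨fun i => if i = (z, s) then 1 else 0, ?_, fun k => ?_⟩
  · rw [Finset.sum_eq_single (z, s)] <;> simp +contextual [h]
  · rw [Finset.sum_eq_single (z, s)] <;> simp +contextual [h]

lemma Rep.sum {κ : Type*} {I : Finset (ℕ × ℕ)} (A : Finset κ) (N : κ → ℝ) (u : κ → ℕ → ℝ)
    (h : ∀ a ∈ A, Rep I (N a) (u a)) : Rep I (∑ a ∈ A, N a) (fun k => ∑ a ∈ A, u a k) := by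
  classical
  induction A using Finset.induction_on with
  | empty => simpa using Rep.zero I
  | insert a A ha ih =>
    simp only [Finset.sum_insert ha]
    exact (h a (Finset.mem_insert_self _ _)).add
      (ih fun b hb => h b (Finset.mem_insert_of_mem hb))

lemma Lop_sum {κ : Type*} (ν : ℝ) (A : Finset κ) (c : κ → ℝ) (u : κ → ℕ → ℝ) (k : ℕ) :
    Lop ν (fun k => ∑ a ∈ A, c a * u a k) k = ∑ a ∈ A, c a * Lop ν (u a) k := by
  induction k with
  | zero => simp [Lop]
  | succ k ih =>
    simp only [Lop, ih, Finset.mul_sum, ← Finset.sum_add_distrib]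
    exact Finset.sum_congr rfl fun i _ => by ring

lemma ev_succ (z : ℝ) (s k : ℕ) : ev z (s + 1) (k + 1) = z * ev z (s + 1) k + ev z s k := by
  unfold ev
  rw [Nat.choose_succ_succ]
  rcases lt_or_ge s k with h | h
  · have e1 : k + 1 - (s + 1) = (k - (s + 1)) + 1 := by omega
    have e2 : k - s = (k - (s + 1)) + 1 := by omega
    rw [e1, e2]
    push_cast
    ring
  · have : k.choose (s + 1) = 0 := Nat.choose_eq_zero_of_lt (by omega)
    rw [this]
    have e1 : k + 1 - (s + 1) = k - s := by omega
    rw [e1]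
    push_cast
    ring

lemma ev_zero_succ (z : ℝ) (k : ℕ) : ev z 0 (k + 1) = z * ev z 0 k := by
  simp [ev, pow_succ, mul_comm]

lemma Lop_ev_same (ν : ℝ) (s k : ℕ) : Lop ν (ev ν s) k = ev ν (s + 1) k := by
  induction k with
  | zero => simp [Lop, ev]
  | succ k ih => rw [Lop, ih, ev_succ]

lemma Lop_ev_zero {z ν : ℝ} (h : z ≠ ν) (k : ℕ) :
    Lop ν (ev z 0) k = (z - ν)⁻¹ * (ev z 0 k - ev ν 0 k) := by
  have h' : z - ν ≠ 0 := sub_ne_zero.mpr h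
  induction k with
  | zero => simp [Lop, ev]
  | succ k ih =>
    rw [Lop, ih, ev_zero_succ, ev_zero_succ]
    field_simp
    ring

lemma Lop_ev_succ {z ν : ℝ} (h : z ≠ ν) (s k : ℕ) :
    Lop ν (ev z (s + 1)) k = (z - ν)⁻¹ * (ev z (s + 1) k - Lop ν (ev z s) k) := by
  have h' : z - ν ≠ 0 := sub_ne_zero.mpr h
  induction k with
  | zero => simp [Lop, ev]
  | succ k ih =>
    rw [Lop, ih, ev_succ, Lop]
    field_simp
    ring

lemma inv_le_one_of_ne {z ν : ℕ} (h : z ≠ ν) : |((z : ℝ) - ν)⁻¹| ≤ 1 := by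
  rw [abs_inv]
  apply inv_le_one_of_one_le₀
  have : (1 : ℤ) ≤ |(z : ℤ) - ν| := Int.one_le_abs (by omega)
  exact_mod_cast this

lemma Rep_Lop_ev {I : Finset (ℕ × ℕ)} {z ν : ℕ} (h : z ≠ ν) (s : ℕ) (hν : (ν, 0) ∈ I)
    (hz : ∀ i ≤ s, (z, i) ∈ I) : Rep I (2 * 2 ^ s) (Lop ν (ev z s)) := by
  have hne : (z : ℝ) ≠ ν := by exact_mod_cast h
  have hi := inv_le_one_of_ne h
  induction s with
  | zero =>
    have : Lop (ν : ℝ) (ev z 0) = fun k => ((z : ℝ) - ν)⁻¹ * (ev z 0 k + (-1) * ev ν 0 k) := by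
      funext k; rw [Lop_ev_zero hne]; ring
    rw [this]
    refine (Rep.smul _ ((Rep.single (hz 0 le_rfl)).add (Rep.smul (-1) (Rep.single hν)))).mono ?_
    simp only [pow_zero, abs_neg, abs_one]
    nlinarith
  | succ s ih =>
    have : Lop (ν : ℝ) (ev z (s + 1)) =
        fun k => ((z : ℝ) - ν)⁻¹ * (ev z (s + 1) k + (-1) * Lop ν (ev z s) k) := by
      funext k; rw [Lop_ev_succ hne]; ring
    rw [this]
    refine (Rep.smul _ ((Rep.single (hz (s + 1) le_rfl)).add
      (Rep.smul (-1) (ih fun i hi => hz i (by omega))))).mono ?_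
    simp only [abs_neg, abs_one, pow_succ]
    have : (0 : ℝ) < 2 ^ s := by positivity
    nlinarith

/-- index set: node `z < Z` with multiplicity `μ z`. -/
def Idx (Z : ℕ) (μ : ℕ → ℕ) : Finset (ℕ × ℕ) :=
  (Finset.range Z).biUnion fun z => (Finset.range (μ z)).image fun s => (z, s)

lemma mem_Idx {Z : ℕ} {μ : ℕ → ℕ} {z s : ℕ} : (z, s) ∈ Idx Z μ ↔ z < Z ∧ s < μ z := by
  simp only [Idx, Finset.mem_biUnion, Finset.mem_image, Finset.mem_range, Prod.mk.injEq]
  constructor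
  · rintro ⟨a, ha, b, hb, rfl, rfl⟩
    exact ⟨ha, hb⟩
  · rintro ⟨ha, hb⟩
    exact ⟨z, ha, s, hb, rfl, rfl⟩

lemma Rep_step {Z : ℕ} {μ : ℕ → ℕ} {ν : ℕ} (hν : ν < Z) {N : ℝ} {u : ℕ → ℝ}
    (h : Rep (Idx Z μ) N u) :
    Rep (Idx Z (Function.update μ ν (μ ν + 1))) (2 * N) (Lop ν u) := by
  obtain ⟨b, h1, h2⟩ := h
  have hu : u = fun k => ∑ i ∈ Idx Z μ, b i * ev i.1 i.2 k := funext h2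
  have : Lop ν u = fun k => ∑ i ∈ Idx Z μ, b i * Lop ν (ev i.1 i.2) k := by
    rw [hu]; funext k; rw [Lop_sum]
  rw [this]
  refine (Rep.sum (Idx Z μ) (fun i => |b i| * (2 * 2 ^ i.2)) (fun i k => b i * Lop ν (ev i.1 i.2) k)
    ?_).mono ?_
  · rintro ⟨z, s⟩ hi
    rw [mem_Idx] at hi
    apply Rep.smul
    by_cases hz : z = ν
    · subst hz
      have : Lop (z : ℝ) (ev z s) = ev z (s + 1) := funext fun k => Lop_ev_same _ _ _
      simp only [this]
      refine (Rep.single (mem_Idx.2 ⟨hν, ?_⟩)).mono (by rw [pow_succ]; linarith)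
      simp; omega
    · refine Rep_Lop_ev hz s (mem_Idx.2 ⟨hν, by simp⟩) fun i hi' => mem_Idx.2 ⟨hi.1, ?_⟩
      simp [Function.update_of_ne hz]; omega
  · calc ∑ i ∈ Idx Z μ, |b i| * (2 * 2 ^ i.2) = 2 * ∑ i ∈ Idx Z μ, 2 ^ i.2 * |b i| := by
          rw [Finset.mul_sum]; exact Finset.sum_congr rfl fun i _ => by ring
      _ ≤ _ := by linarith

lemma Lop_bound {ν x : ℝ} (h0 : 0 ≤ ν) (hx : ν ≤ x) {u : ℕ → ℝ} {j : ℕ}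
    (h : ∀ k, |u k| ≤ ev x j k) (k : ℕ) : |Lop ν u k| ≤ ev x (j + 1) k := by
  have hev : ∀ s k, 0 ≤ ev x s k := fun s k => by
    unfold ev; have := h0.trans hx; positivity
  induction k with
  | zero => simp [Lop, ev]
  | succ k ih =>
    rw [Lop, ev_succ]
    refine (abs_add_le _ _).trans (add_le_add ?_ (h k))
    rw [abs_mul, abs_of_nonneg h0]
    exact mul_le_mul hx ih (abs_nonneg _) (h0.trans hx)

/-- the state of the Newton process after `j` nodes. -/
def St (Z x : ℕ) (μ : ℕ → ℕ) (j : ℕ) : Prop :=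
  ∃ (c : ℝ) (r : ℕ → ℝ), 0 < c ∧ c ≤ 1 ∧ 1 ≤ c * (x : ℝ) ^ j ∧ Rep (Idx Z μ) (2 ^ j - 1) r ∧
    ∀ k, |c * ev x 0 k + r k| ≤ ev x j k

lemma Lop_add (ν : ℝ) (c : ℝ) (u v : ℕ → ℝ) (k : ℕ) :
    Lop ν (fun k => c * u k + v k) k = c * Lop ν u k + Lop ν v k := by
  induction k with
  | zero => simp [Lop]
  | succ k ih => simp only [Lop, ih]; ring

lemma St_step {Z x : ℕ} (hZ : Z ≤ x) {μ : ℕ → ℕ} {ν : ℕ} (hν : ν < Z) {j : ℕ} (h : St Z x μ j) :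
    St Z x (Function.update μ ν (μ ν + 1)) (j + 1) := by
  obtain ⟨c, r, hc, hc1, hc2, hr, hb⟩ := h
  have hx : (ν : ℝ) + 1 ≤ x := by exact_mod_cast (by omega : ν + 1 ≤ x)
  have hν0 : (0 : ℝ) ≤ ν := by positivity
  have hpos : 0 < (x : ℝ) - ν := by linarith
  have hne : (x : ℝ) ≠ ν := by intro h; linarith
  have hci : c * ((x : ℝ) - ν)⁻¹ ≤ c := by
    have : ((x : ℝ) - ν)⁻¹ ≤ 1 := inv_le_one_of_one_le₀ (by linarith)
    nlinarith
  have hci0 : 0 < c * ((x : ℝ) - ν)⁻¹ := by positivity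
  have hmem : (ν, 0) ∈ Idx Z (Function.update μ ν (μ ν + 1)) := mem_Idx.2 ⟨hν, by simp⟩
  refine ⟨c * ((x : ℝ) - ν)⁻¹, fun k => Lop ν r k + (-(c * ((x : ℝ) - ν)⁻¹)) * ev ν 0 k,
    hci0, by linarith, ?_, ?_, fun k => ?_⟩
  · have h1 : (x : ℝ) - ν ≤ x := by linarith
    have h2 : 1 ≤ ((x : ℝ) - ν)⁻¹ * x := by
      rw [inv_mul_eq_div, le_div_iff₀ hpos]; linarith
    calc (1 : ℝ) ≤ (c * x ^ j) * (((x : ℝ) - ν)⁻¹ * x) := by nlinarith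
      _ = _ := by rw [pow_succ]; ring
  · have hc' : c * ((x : ℝ) - ν)⁻¹ ≤ 1 := by linarith
    refine ((Rep_step hν hr).add (Rep.smul _ (Rep.single hmem))).mono ?_
    rw [abs_neg, abs_of_pos hci0, pow_zero, pow_succ]
    linarith
  · have := Lop_bound hν0 (by linarith : (ν : ℝ) ≤ x) hb k
    rw [Lop_add, Lop_ev_zero hne] at this
    convert this using 2
    ring

lemma St_iter {Z x : ℕ} (hZ : Z ≤ x) {μ : ℕ → ℕ} {ν : ℕ} (hν : ν < Z) {j : ℕ} (h : St Z x μ j)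
    (s : ℕ) : St Z x (Function.update μ ν (μ ν + s)) (j + s) := by
  induction s with
  | zero => simpa using h
  | succ s ih =>
    have := St_step hZ hν ih
    simpa [add_assoc] using this

lemma St_all {Z x : ℕ} (hZ : Z ≤ x) (S z0 : ℕ) (hz : z0 ≤ Z) :
    St Z x (fun z => if z < z0 then S else 0) (S * z0) := by
  induction z0 with
  | zero =>
    refine ⟨1, fun _ => 0, one_pos, le_rfl, by simp, ?_, fun k => ?_⟩
    · simpa using Rep.zero _
    · have : (0 : ℝ) ≤ ev x 0 k := by unfold ev; positivity
      simp [abs_of_nonneg this]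
  | succ z0 ih =>
    have := St_iter hZ (show z0 < Z by omega) (ih (by omega)) S
    rw [Nat.mul_succ]
    convert this using 1
    funext z
    rcases lt_trichotomy z z0 with h | h | h
    · rw [Function.update_of_ne (by omega)]; simp [h]; omega
    · subst h; simp
    · rw [Function.update_of_ne (by omega)]; rw [if_neg (by omega), if_neg (by omega)]

lemma HasSum.congr2 {f g : ℕ → ℝ} {a b : ℝ} (h : HasSum f a) (h1 : g = f) (h2 : b = a) :
    HasSum g b := by
  rw [h1, h2]; exact h

lemma hasSum_ev (w z : ℝ) (s : ℕ) :
    HasSum (fun k : ℕ => w ^ k / k.factorial * ev z s k)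
      (w ^ s * Real.exp (w * z) / s.factorial) := by
  have h1 : HasSum (fun k : ℕ => (w * z) ^ k / k.factorial) (Real.exp (w * z)) := by
    rw [Real.exp_eq_exp_ℝ]
    exact NormedSpace.expSeries_div_hasSum_exp (w * z)
  have h2 := h1.mul_left (w ^ s / s.factorial)
  have h3 : w ^ s * Real.exp (w * z) / s.factorial = w ^ s / s.factorial * Real.exp (w * z) := by
    ring
  rw [h3]
  have hinj : Function.Injective (fun k : ℕ => k + s) := add_left_injective s
  rw [← hinj.hasSum_iff]
  · refine HasSum.congr2 h2 ?_ rfl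
    funext k
    simp only [Function.comp, ev, Nat.add_sub_cancel]
    have := Nat.add_choose_mul_factorial_mul_factorial k s
    have h4 : (((k + s).choose s : ℕ) : ℝ) * k.factorial * s.factorial = (k + s).factorial := by
      exact_mod_cast this
    have p1 : (k.factorial : ℝ) ≠ 0 := by positivity
    have p2 : (s.factorial : ℝ) ≠ 0 := by positivity
    rw [← h4]
    have p3 : (((k + s).choose s : ℕ) : ℝ) ≠ 0 := by
      have : 0 < (k + s).choose s := Nat.choose_pos (by omega)
      positivity
    field_simp
    ring
  · intro k hk
    have : k < s := by
      by_contra h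
      exact hk ⟨k - s, by simp; omega⟩
    simp [ev, Nat.choose_eq_zero_of_lt this]

theorem newton (Z S x : ℕ) (hZ : Z ≤ x) : ∃ (c : ℝ) (b : ℕ → ℕ → ℝ), 0 < c ∧ c ≤ 1 ∧
    1 ≤ c * (x : ℝ) ^ (S * Z) ∧
    ∑ z ∈ Finset.range Z, ∑ s ∈ Finset.range S, 2 ^ s * |b z s| ≤ 2 ^ (S * Z) ∧
    ∀ w : ℝ, |c * Real.exp (w * x) + ∑ z ∈ Finset.range Z, ∑ s ∈ Finset.range S,
      b z s * (w ^ s * Real.exp (w * z) / s.factorial)| ≤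
      |w| ^ (S * Z) * Real.exp (|w| * x) / (S * Z).factorial := by
  obtain ⟨c, r, hc, hc1, hc2, ⟨b, hb, hr⟩, hbd⟩ := St_all hZ S Z le_rfl
  have hI : Idx Z (fun z => if z < Z then S else 0) = Finset.range Z ×ˢ Finset.range S := by
    ext ⟨z, s⟩
    rw [mem_Idx]
    simp only [Finset.mem_product, Finset.mem_range]
    constructor
    · rintro ⟨h1, h2⟩; rw [if_pos h1] at h2; exact ⟨h1, h2⟩
    · rintro ⟨h1, h2⟩; rw [if_pos h1]; exact ⟨h1, h2⟩
  rw [hI] at hb hr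
  refine ⟨c, fun z s => b (z, s), hc, hc1, hc2, ?_, fun w => ?_⟩
  · rw [Finset.sum_product] at hb
    linarith
  · have e1 : HasSum (fun k : ℕ => w ^ k / k.factorial * (c * ev x 0 k + r k))
        (c * Real.exp (w * x) + ∑ z ∈ Finset.range Z, ∑ s ∈ Finset.range S,
          b (z, s) * (w ^ s * Real.exp (w * z) / s.factorial)) := by
      have h1 := (hasSum_ev w x 0).mul_left c
      have h2 : HasSum (fun k : ℕ => ∑ i ∈ Finset.range Z ×ˢ Finset.range S,
          b i * (w ^ k / k.factorial * ev i.1 i.2 k))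
          (∑ i ∈ Finset.range Z ×ˢ Finset.range S,
            b i * (w ^ i.2 * Real.exp (w * i.1) / i.2.factorial)) :=
        hasSum_sum fun i _ => (hasSum_ev w i.1 i.2).mul_left (b i)
      rw [Finset.sum_product] at h2
      refine HasSum.congr2 (h1.add h2) ?_ ?_
      · funext k
        rw [hr k, mul_add, Finset.mul_sum]
        congr 1
        · ring
        · exact Finset.sum_congr rfl fun i _ => by ring
      · simp
    have e2 := hasSum_ev |w| x (S * Z)
    rw [← e1.tsum_eq, ← e2.tsum_eq]
    rw [← Real.norm_eq_abs]
    refine tsum_of_norm_bounded e2.summable.hasSum fun k => ?_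
    rw [Real.norm_eq_abs, abs_mul, abs_div, abs_pow, Nat.abs_cast]
    exact mul_le_mul_of_nonneg_left (hbd k) (by positivity)

end FT

namespace FT
open IntermediateField Polynomial

/-- `x` is an integer combination of `α^i t^j`, with coefficient sum at most `ℓ`. -/
def HasLen (α t x ℓ : ℝ) : Prop :=
  ∃ c : Fin 2 → Fin 3 → ℤ, ∑ i, ∑ j, |(c i j : ℝ)| ≤ ℓ ∧
    x = ∑ i, ∑ j, (c i j : ℝ) * (α ^ (i : ℕ) * t ^ (j : ℕ))

section
variable {α t : ℝ}

lemma HasLen.mono {x ℓ ℓ' : ℝ} (h : HasLen α t x ℓ) (hl : ℓ ≤ ℓ') : HasLen α t x ℓ' := by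
  obtain ⟨c, h1, h2⟩ := h
  exact ⟨c, h1.trans hl, h2⟩

lemma HasLen.mk {x ℓ : ℝ} (a b c d e f : ℤ)
    (hl : |(a : ℝ)| + |(b : ℝ)| + |(c : ℝ)| + (|(d : ℝ)| + |(e : ℝ)| + |(f : ℝ)|) ≤ ℓ)
    (hx : x = a + b * t + c * t ^ 2 + (d * α + e * (α * t) + f * (α * t ^ 2))) :
    HasLen α t x ℓ := by
  refine ⟨![![a, b, c], ![d, e, f]], ?_, ?_⟩
  · simpa [Fin.sum_univ_two, Fin.sum_univ_three] using hl
  · simp [Fin.sum_univ_two, Fin.sum_univ_three, hx]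

lemma HasLen.elim {x ℓ : ℝ} (h : HasLen α t x ℓ) : ∃ a b c d e f : ℤ,
    |(a : ℝ)| + |(b : ℝ)| + |(c : ℝ)| + (|(d : ℝ)| + |(e : ℝ)| + |(f : ℝ)|) ≤ ℓ ∧
    x = a + b * t + c * t ^ 2 + (d * α + e * (α * t) + f * (α * t ^ 2)) := by
  obtain ⟨c, h1, h2⟩ := h
  refine ⟨c 0 0, c 0 1, c 0 2, c 1 0, c 1 1, c 1 2, ?_, ?_⟩
  · simpa [Fin.sum_univ_two, Fin.sum_univ_three] using h1
  · simpa [Fin.sum_univ_two, Fin.sum_univ_three] using h2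

lemma HasLen.nonneg {x ℓ : ℝ} (h : HasLen α t x ℓ) : 0 ≤ ℓ := by
  obtain ⟨c, h1, h2⟩ := h
  exact le_trans (by positivity) h1

lemma HasLen.int (a : ℤ) : HasLen α t a |(a : ℝ)| :=
  HasLen.mk a 0 0 0 0 0 (by simp) (by simp)

lemma HasLen.one : HasLen α t 1 1 := by simpa using HasLen.int (α := α) (t := t) 1

lemma HasLen.zero : HasLen α t 0 0 := by simpa using HasLen.int (α := α) (t := t) 0

lemma HasLen.add {x y ℓ ℓ' : ℝ} (h : HasLen α t x ℓ) (h' : HasLen α t y ℓ') :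
    HasLen α t (x + y) (ℓ + ℓ') := by
  obtain ⟨c, h1, h2⟩ := h
  obtain ⟨d, h3, h4⟩ := h'
  refine ⟨fun i j => c i j + d i j, ?_, ?_⟩
  · refine le_trans ?_ (add_le_add h1 h3)
    simp only [← Finset.sum_add_distrib]
    gcongr with i _ j _
    push_cast
    exact abs_add_le _ _
  · rw [h2, h4]
    simp only [← Finset.sum_add_distrib]
    push_cast
    simp only [add_mul]

lemma HasLen.smul {x ℓ : ℝ} (a : ℤ) (h : HasLen α t x ℓ) : HasLen α t (a * x) (|(a : ℝ)| * ℓ) := by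
  obtain ⟨c, h1, h2⟩ := h
  refine ⟨fun i j => a * c i j, ?_, ?_⟩
  · refine le_trans (le_of_eq ?_) (mul_le_mul_of_nonneg_left h1 (abs_nonneg _))
    push_cast
    simp only [Finset.mul_sum, abs_mul]
  · rw [h2]
    push_cast
    simp only [Finset.mul_sum, mul_assoc]

lemma HasLen.neg {x ℓ : ℝ} (h : HasLen α t x ℓ) : HasLen α t (-x) ℓ := by
  have := h.smul (-1)
  simpa using this

lemma HasLen.sub {x y ℓ ℓ' : ℝ} (h : HasLen α t x ℓ) (h' : HasLen α t y ℓ') :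
    HasLen α t (x - y) (ℓ + ℓ') := by
  rw [sub_eq_add_neg]; exact h.add h'.neg

lemma HasLen.sum {ι : Type*} (A : Finset ι) {x ℓ : ι → ℝ} (h : ∀ i ∈ A, HasLen α t (x i) (ℓ i)) :
    HasLen α t (∑ i ∈ A, x i) (∑ i ∈ A, ℓ i) := by
  classical
  induction A using Finset.induction_on with
  | empty => simpa using HasLen.zero
  | insert a A ha ih =>
    simp only [Finset.sum_insert ha]
    exact (h a (Finset.mem_insert_self _ _)).add (ih fun b hb => h b (Finset.mem_insert_of_mem hb))

variable (hα : α ^ 2 = α + 1) (ht : t ^ 3 = t ^ 2 + t + 1)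
include hα

lemma HasLen.mulα {x ℓ : ℝ} (h : HasLen α t x ℓ) : HasLen α t (α * x) (2 * ℓ) := by
  obtain ⟨a, b, c, d, e, f, h1, h2⟩ := h.elim
  refine HasLen.mk d e f (a + d) (b + e) (c + f) ?_ ?_
  · push_cast
    have := abs_add_le (a : ℝ) d
    have := abs_add_le (b : ℝ) e
    have := abs_add_le (c : ℝ) f
    have := abs_nonneg (a : ℝ)
    have := abs_nonneg (b : ℝ)
    have := abs_nonneg (c : ℝ)
    linarith
  · rw [h2]; push_cast; linear_combination (d + e * t + f * t ^ 2) * hα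

lemma HasLen.mulαinv {x ℓ : ℝ} (h : HasLen α t x ℓ) : HasLen α t ((α - 1) * x) (2 * ℓ) := by
  obtain ⟨a, b, c, d, e, f, h1, h2⟩ := h.elim
  refine HasLen.mk (d - a) (e - b) (f - c) a b c ?_ ?_
  · push_cast
    have := abs_sub (d : ℝ) a
    have := abs_sub (e : ℝ) b
    have := abs_sub (f : ℝ) c
    have := abs_nonneg (d : ℝ)
    have := abs_nonneg (e : ℝ)
    have := abs_nonneg (f : ℝ)
    linarith
  · rw [h2]; push_cast; linear_combination (d + e * t + f * t ^ 2) * hα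

omit hα
include ht

lemma HasLen.mult {x ℓ : ℝ} (h : HasLen α t x ℓ) : HasLen α t (t * x) (3 * ℓ) := by
  obtain ⟨a, b, c, d, e, f, h1, h2⟩ := h.elim
  refine HasLen.mk c (a + c) (b + c) f (d + f) (e + f) ?_ ?_
  · push_cast
    have := abs_add_le (a : ℝ) c
    have := abs_add_le (b : ℝ) c
    have := abs_add_le (d : ℝ) f
    have := abs_add_le (e : ℝ) f
    have := abs_nonneg (a : ℝ)
    have := abs_nonneg (b : ℝ)
    have := abs_nonneg (d : ℝ)
    have := abs_nonneg (e : ℝ)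
    linarith
  · rw [h2]; push_cast; linear_combination (c + f * α) * ht

lemma HasLen.multinv {x ℓ : ℝ} (h : HasLen α t x ℓ) :
    HasLen α t ((t ^ 2 - t - 1) * x) (3 * ℓ) := by
  obtain ⟨a, b, c, d, e, f, h1, h2⟩ := h.elim
  refine HasLen.mk (b - a) (c - a) a (e - d) (f - d) d ?_ ?_
  · push_cast
    have := abs_sub (b : ℝ) a
    have := abs_sub (c : ℝ) a
    have := abs_sub (e : ℝ) d
    have := abs_sub (f : ℝ) d
    have := abs_nonneg (b : ℝ)
    have := abs_nonneg (c : ℝ)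
    have := abs_nonneg (e : ℝ)
    have := abs_nonneg (f : ℝ)
    linarith
  · rw [h2]; push_cast; linear_combination (b + c * t + e * α + f * (α * t)) * ht

include hα

lemma HasLen.monom {x ℓ : ℝ} (h : HasLen α t x ℓ) (i j : ℕ) :
    HasLen α t (α ^ i * t ^ j * x) (2 ^ i * 3 ^ j * ℓ) := by
  induction i with
  | zero =>
    induction j with
    | zero => simpa using h
    | succ j ih =>
      convert ih.mult ht using 1 <;> ring
  | succ i ih => convert ih.mulα hα using 1 <;> ring

lemma HasLen.mul {x y ℓ ℓ' : ℝ} (h : HasLen α t x ℓ) (h' : HasLen α t y ℓ') :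
    HasLen α t (x * y) (18 * ℓ * ℓ') := by
  obtain ⟨c, h1, h2⟩ := h
  have := HasLen.sum Finset.univ (x := fun i : Fin 2 =>
      ∑ j : Fin 3, (c i j : ℝ) * (α ^ (i : ℕ) * t ^ (j : ℕ) * y))
    (ℓ := fun i => ∑ j : Fin 3, |(c i j : ℝ)| * (18 * ℓ'))
    (fun i _ => HasLen.sum Finset.univ fun j _ => HasLen.smul _ ((HasLen.monom hα ht h' i j).mono (by
      have hi : (2 : ℝ) ^ (i : ℕ) ≤ 2 ^ 1 := pow_le_pow_right₀ (by norm_num) (by omega)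
      have hj : (3 : ℝ) ^ (j : ℕ) ≤ 3 ^ 2 := pow_le_pow_right₀ (by norm_num) (by omega)
      have := h'.nonneg
      calc (2 : ℝ) ^ (i : ℕ) * 3 ^ (j : ℕ) * ℓ' ≤ 2 ^ 1 * 3 ^ 2 * ℓ' := by gcongr
        _ = 18 * ℓ' := by ring)))
  convert this.mono ?_ using 1
  · rw [h2]; simp only [Finset.sum_mul]
    exact Finset.sum_congr rfl fun i _ => Finset.sum_congr rfl fun j _ => by ring
  · simp only [← Finset.sum_mul]
    have := h'.nonneg
    nlinarith

lemma HasLen.pow {x ℓ : ℝ} (h : HasLen α t x ℓ) (k : ℕ) : HasLen α t (x ^ k) ((18 * ℓ) ^ k) := by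
  induction k with
  | zero => simpa using HasLen.one
  | succ k ih =>
    convert HasLen.mul hα ht ih h using 1 <;> ring

end

lemma croot_bound {z : ℂ} (h : z ^ 3 = z ^ 2 + z + 1) : ‖z‖ ≤ 1.84 := by
  have h1 : ‖z‖ ^ 3 ≤ ‖z‖ ^ 2 + ‖z‖ + 1 := by
    rw [← norm_pow, h]
    refine (norm_add_le _ _).trans ?_
    rw [norm_one]
    gcongr
    refine (norm_add_le _ _).trans ?_
    rw [norm_pow]
  by_contra hc
  push Not at hc
  nlinarith [norm_nonneg z, mul_pos (sub_pos.2 hc) (sub_pos.2 hc)]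

lemma croot_bound2 {z : ℂ} (h : z ^ 2 = z + 1) : ‖z‖ ≤ 1.62 := by
  have h1 : ‖z‖ ^ 2 ≤ ‖z‖ + 1 := by
    rw [← norm_pow, h]
    refine (norm_add_le _ _).trans ?_
    rw [norm_one]
  by_contra hc
  push Not at hc
  nlinarith [norm_nonneg z]

lemma finrank_α {α : ℝ} (hα : α ^ 2 = α + 1) : IsIntegral ℚ α ∧
    Module.finrank ℚ ℚ⟮α⟯ ≤ 2 := by
  have hm : (X ^ 2 - X - 1 : ℚ[X]).Monic := by monicity!
  have hd : (X ^ 2 - X - 1 : ℚ[X]).natDegree = 2 := by compute_degree!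
  have hi : IsIntegral ℚ α := ⟨_, hm, by simp [hα]⟩
  refine ⟨hi, ?_⟩
  rw [IntermediateField.adjoin.finrank hi, ← hd]
  apply Polynomial.natDegree_le_of_dvd _ hm.ne_zero
  exact minpoly.dvd _ _ (by simp [hα])

lemma finrank_t {t : ℝ} (ht : t ^ 3 = t ^ 2 + t + 1) : IsIntegral ℚ t ∧
    Module.finrank ℚ ℚ⟮t⟯ ≤ 3 := by
  have hm : (X ^ 3 - X ^ 2 - X - 1 : ℚ[X]).Monic := by monicity!
  have hd : (X ^ 3 - X ^ 2 - X - 1 : ℚ[X]).natDegree = 3 := by compute_degree!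
  have hi : IsIntegral ℚ t := ⟨_, hm, by simp [ht]; ring⟩
  refine ⟨hi, ?_⟩
  rw [IntermediateField.adjoin.finrank hi, ← hd]
  apply Polynomial.natDegree_le_of_dvd _ hm.ne_zero
  exact minpoly.dvd _ _ (by simp [ht]; ring)

theorem liouville {α t : ℝ} (hα : α ^ 2 = α + 1) (ht : t ^ 3 = t ^ 2 + t + 1) {x ℓ : ℝ}
    (h : HasLen α t x ℓ) (hx : x ≠ 0) : 1 ≤ |x| * (6 * ℓ) ^ 5 := by
  obtain ⟨c, h1, h2⟩ := h
  classical
  obtain ⟨iα, fα⟩ := finrank_α hα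
  obtain ⟨it, ft⟩ := finrank_t ht
  have := adjoin.finiteDimensional iα
  have := adjoin.finiteDimensional it
  let K : IntermediateField ℚ ℝ := ℚ⟮α⟯ ⊔ ℚ⟮t⟯
  have : FiniteDimensional ℚ K := IntermediateField.finiteDimensional_sup _ _
  have hK : Module.finrank ℚ K ≤ 6 :=
    (IntermediateField.finrank_sup_le _ _).trans (by
      calc _ ≤ 2 * 3 := Nat.mul_le_mul fα ft
        _ = 6 := rfl)
  have mα : α ∈ K := (le_sup_left : ℚ⟮α⟯ ≤ K) (mem_adjoin_simple_self ℚ α)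
  have mt : t ∈ K := (le_sup_right : ℚ⟮t⟯ ≤ K) (mem_adjoin_simple_self ℚ t)
  let a' : K := ⟨α, mα⟩
  let t' : K := ⟨t, mt⟩
  have ha' : a' ^ 2 = a' + 1 := Subtype.ext (by simpa [a'] using hα)
  have ht' : t' ^ 3 = t' ^ 2 + t' + 1 := Subtype.ext (by simpa [t'] using ht)
  let x' : K := ∑ i : Fin 2, ∑ j : Fin 3, (c i j : K) * (a' ^ (i : ℕ) * t' ^ (j : ℕ))
  have hxx : (x' : ℝ) = x := by
    rw [h2]; simp [x', a', t']
  have hx0 : x' ≠ 0 := by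
    intro h0; apply hx; rw [← hxx, h0]; rfl
  have hint : IsIntegral ℤ x' := by
    have i1 : IsIntegral ℤ a' := ⟨X ^ 2 - X - 1, by monicity!, by simp [ha']⟩
    have i2 : IsIntegral ℤ t' := ⟨X ^ 3 - X ^ 2 - X - 1, by monicity!, by simp [ht']; ring⟩
    refine IsIntegral.sum _ fun i _ => IsIntegral.sum _ fun j _ => ?_
    exact ((isIntegral_algebraMap (R := ℤ) (x := c i j)).mul ((i1.pow _).mul (i2.pow _)))
  have hℓ : 1 ≤ 6 * ℓ := by
    by_contra hc
    have : ∀ i j, c i j = 0 := by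
      intro i j
      by_contra hcc
      have e1 : (1 : ℝ) ≤ |(c i j : ℝ)| := by exact_mod_cast Int.one_le_abs hcc
      have e2 : |(c i j : ℝ)| ≤ ∑ j, |(c i j : ℝ)| :=
        Finset.single_le_sum (f := fun j => |(c i j : ℝ)|) (fun _ _ => abs_nonneg _) (Finset.mem_univ j)
      have e3 : ∑ j, |(c i j : ℝ)| ≤ ∑ i, ∑ j, |(c i j : ℝ)| :=
        Finset.single_le_sum (f := fun i => ∑ j, |(c i j : ℝ)|) (fun _ _ => by positivity) (Finset.mem_univ i)
      linarith
    apply hx; rw [h2]; simp [this]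
  have hemb : ∀ σ : K →ₐ[ℚ] ℂ, ‖σ x'‖ ≤ 6 * ℓ := by
    intro σ
    have b1 : ‖σ a'‖ ≤ 1.62 := croot_bound2 (by rw [← map_pow, ha']; simp)
    have b2 : ‖σ t'‖ ≤ 1.84 := croot_bound (by rw [← map_pow, ht']; simp)
    calc ‖σ x'‖ = ‖∑ i : Fin 2, ∑ j : Fin 3, (c i j : ℂ) * (σ a' ^ (i : ℕ) * σ t' ^ (j : ℕ))‖ := by
          congr 1; simp [x']
      _ ≤ ∑ i : Fin 2, ∑ j : Fin 3, |(c i j : ℝ)| * 6 := by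
          refine (norm_sum_le _ _).trans (Finset.sum_le_sum fun i _ =>
            (norm_sum_le _ _).trans (Finset.sum_le_sum fun j _ => ?_))
          rw [norm_mul, norm_mul, norm_pow, norm_pow, Complex.norm_intCast]
          gcongr
          calc ‖σ a'‖ ^ (i : ℕ) * ‖σ t'‖ ^ (j : ℕ) ≤ 1.62 ^ (i : ℕ) * 1.84 ^ (j : ℕ) := by gcongr
            _ ≤ 1.62 ^ 1 * 1.84 ^ 2 := by
                gcongr <;> first | (norm_num; done) | omega
            _ ≤ 6 := by norm_num
      _ ≤ 6 * ℓ := by simp only [← Finset.sum_mul]; linarith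
  have hnorm := Algebra.norm_eq_prod_embeddings ℚ ℂ x'
  have hNint : IsIntegral ℤ (Algebra.norm ℚ x') := Algebra.isIntegral_norm ℚ hint
  obtain ⟨N, hN⟩ := IsIntegrallyClosed.isIntegral_iff.1 hNint
  have hN0 : N ≠ 0 := by
    rintro rfl
    rw [map_zero] at hN
    exact hx0 (Algebra.norm_eq_zero_iff.1 hN.symm)
  have hNC : (1 : ℝ) ≤ ‖(algebraMap ℚ ℂ) (Algebra.norm ℚ x')‖ := by
    rw [← hN]
    simp only [eq_intCast, map_intCast, Complex.norm_intCast]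
    exact_mod_cast Int.one_le_abs hN0
  rw [hnorm, norm_prod] at hNC
  let σ₀ : K →ₐ[ℚ] ℂ := ((Algebra.ofId ℝ ℂ).restrictScalars ℚ).comp K.val
  have hσ₀ : ‖σ₀ x'‖ = |x| := by
    have : σ₀ x' = ((x' : ℝ) : ℂ) := rfl
    rw [this, hxx, Complex.norm_real, Real.norm_eq_abs]
  rw [← Finset.mul_prod_erase _ _ (Finset.mem_univ σ₀), hσ₀] at hNC
  refine hNC.trans (mul_le_mul_of_nonneg_left ?_ (abs_nonneg _))
  calc ∏ σ ∈ Finset.univ.erase σ₀, ‖σ x'‖ ≤ ∏ σ ∈ Finset.univ.erase σ₀, (6 * ℓ) :=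
        Finset.prod_le_prod (fun _ _ => norm_nonneg _) fun σ _ => hemb σ
    _ = (6 * ℓ) ^ (Finset.univ.erase σ₀).card := by simp
    _ ≤ (6 * ℓ) ^ 5 := by
        apply pow_le_pow_right₀ hℓ
        rw [Finset.card_erase_of_mem (Finset.mem_univ _), Finset.card_univ, AlgHom.card]
        omega

end FT

namespace FT
open IntermediateField Polynomial

lemma ratroot_int {r : ℚ} (p : ℤ[X]) (hp : p.Monic) (h : aeval r p = 0) : ∃ k : ℤ, (k : ℚ) = r := by
  have : IsIntegral ℤ r := ⟨p, hp, h⟩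
  obtain ⟨k, hk⟩ := IsIntegrallyClosed.isIntegral_iff.1 this
  exact ⟨k, by simpa using hk⟩

lemma irr2 : Irreducible (X ^ 2 - X - 1 : ℚ[X]) := by
  have hd : (X ^ 2 - X - 1 : ℚ[X]).natDegree = 2 := by compute_degree!
  apply Polynomial.irreducible_of_degree_le_three_of_not_isRoot
  · rw [hd]; simp
  · intro r hr
    have hr' : r ^ 2 - r - 1 = 0 := by simpa [IsRoot] using hr
    obtain ⟨k, rfl⟩ := ratroot_int (r := r) (X ^ 2 - X - 1) (by monicity!) (by simpa using hr')
    have : k ^ 2 - k - 1 = 0 := by exact_mod_cast hr'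
    have h1 : k * (k - 1) = 1 := by linarith
    rcases Int.eq_one_or_neg_one_of_mul_eq_one h1 with h | h <;> subst h <;> omega

lemma irr3 : Irreducible (X ^ 3 - X ^ 2 - X - 1 : ℚ[X]) := by
  have hd : (X ^ 3 - X ^ 2 - X - 1 : ℚ[X]).natDegree = 3 := by compute_degree!
  apply Polynomial.irreducible_of_degree_le_three_of_not_isRoot
  · rw [hd]; simp
  · intro r hr
    have hr' : r ^ 3 - r ^ 2 - r - 1 = 0 := by simpa [IsRoot] using hr
    obtain ⟨k, rfl⟩ := ratroot_int (r := r) (X ^ 3 - X ^ 2 - X - 1) (by monicity!) (by simpa using hr')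
    have : k ^ 3 - k ^ 2 - k - 1 = 0 := by exact_mod_cast hr'
    have h1 : k * (k ^ 2 - k - 1) = 1 := by linarith
    rcases Int.eq_one_or_neg_one_of_mul_eq_one h1 with h | h <;> subst h <;> omega

lemma pow_α {α : ℝ} (hα : α ^ 2 = α + 1) (p : ℕ) :
    α ^ (p + 1) = Nat.fib (p + 1) * α + Nat.fib p := by
  induction p with
  | zero => simp
  | succ p ih =>
    rw [pow_succ, ih, Nat.fib_add_two]
    push_cast
    linear_combination (Nat.fib (p + 1) : ℝ) * hα

lemma indep {α t : ℝ} (hα : α ^ 2 = α + 1) (ht : t ^ 3 = t ^ 2 + t + 1) (p q : ℕ)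
    (h : α ^ (p + 1) = t ^ q) : False := by
  obtain ⟨iα, -⟩ := finrank_α hα
  obtain ⟨it, -⟩ := finrank_t ht
  have e2 : Module.finrank ℚ ℚ⟮α⟯ = 2 := by
    have hd : (X ^ 2 - X - 1 : ℚ[X]).natDegree = 2 := by compute_degree!
    rw [IntermediateField.adjoin.finrank iα,
      ← minpoly.eq_of_irreducible_of_monic irr2 (by simp [hα]) (by monicity!), hd]
  have e3 : Module.finrank ℚ ℚ⟮t⟯ = 3 := by
    have hd : (X ^ 3 - X ^ 2 - X - 1 : ℚ[X]).natDegree = 3 := by compute_degree!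
    rw [IntermediateField.adjoin.finrank it,
      ← minpoly.eq_of_irreducible_of_monic irr3 (by simp [ht]; ring) (by monicity!), hd]
  have hf : (Nat.fib (p + 1) : ℝ) ≠ 0 := by
    have := Nat.fib_pos.2 (Nat.succ_pos p)
    positivity
  have hmem : α ∈ ℚ⟮t⟯ := by
    have : α = (t ^ q - (Nat.fib p : ℝ)) / (Nat.fib (p + 1) : ℝ) := by
      rw [← h, pow_α hα]; field_simp; ring
    rw [this]
    exact div_mem (sub_mem (pow_mem (mem_adjoin_simple_self ℚ t) _) (_root_.natCast_mem _ _)) (_root_.natCast_mem _ _)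
  have hle : ℚ⟮α⟯ ≤ ℚ⟮t⟯ := by
    rw [adjoin_simple_le_iff]; exact hmem
  have := IntermediateField.finrank_dvd_of_le_right hle
  rw [e2, e3] at this
  omega

lemma indep2 {α t : ℝ} (hα : α ^ 2 = α + 1) (ht : t ^ 3 = t ^ 2 + t + 1) (h1 : 1 < α) (h2 : 1 < t)
    (a b c d : ℕ) (h : α ^ a * t ^ b = α ^ c * t ^ d) : a = c ∧ b = d := by
  wlog hac : a ≤ c generalizing a b c d
  · have := this c d a b h.symm (by omega)
    omega
  obtain ⟨p, rfl⟩ := Nat.exists_eq_add_of_le hac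
  have ha : 0 < α ^ a := by positivity
  rw [pow_add, mul_assoc] at h
  have h := mul_left_cancel₀ ha.ne' h
  rcases le_or_gt b d with hbd | hbd
  · obtain ⟨q, rfl⟩ := Nat.exists_eq_add_of_le hbd
    have hb : 0 < t ^ b := by positivity
    have h3 : α ^ p * t ^ q = 1 := by
      rw [pow_add] at h
      have : t ^ b * (α ^ p * t ^ q) = t ^ b * 1 := by linarith
      exact mul_left_cancel₀ hb.ne' this
    have g1 : 1 ≤ α ^ p := one_le_pow₀ h1.le
    have g2 : 1 ≤ t ^ q := one_le_pow₀ h2.le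
    have : p = 0 := by
      by_contra hp
      have := one_lt_pow₀ h1 hp
      nlinarith
    have : q = 0 := by
      by_contra hp
      have := one_lt_pow₀ h2 hp
      nlinarith
    omega
  · obtain ⟨q, rfl⟩ := Nat.exists_eq_add_of_lt hbd
    have hb : 0 < t ^ d := by positivity
    have h3 : α ^ p = t ^ (q + 1) := by
      rw [add_assoc, pow_add] at h
      have : t ^ d * α ^ p = t ^ d * t ^ (q + 1) := by linarith
      exact mul_left_cancel₀ hb.ne' this
    rcases p with _ | p
    · have := one_lt_pow₀ h2 (show q + 1 ≠ 0 by omega)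
      simp at h3
      linarith
    · exact (indep hα ht p (q + 1) h3).elim

end FT

namespace FT
open Polynomial

theorem zero_est {ι : Type*} [Fintype ι] (p x θ : ι → ℝ) (T N : ℕ)
    (h : ∀ k < T, ∀ z < N, ∑ l, p l * x l ^ k * θ l ^ z = 0) (hN : Fintype.card ι ≤ N)
    (c : ι → ℕ) (hcT : ∀ l, c l < T) (hc : ∀ l l', θ l = θ l' → c l = c l' → l = l')
    (hx : ∀ l l', θ l = θ l' → x l = x l' → l = l') : ∀ l, p l = 0 := by
  classical
  intro l₀
  set A : Finset ℝ := (Finset.univ.image θ).erase (θ l₀) with hA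
  set B : Finset ι := (Finset.univ.filter fun l => θ l = θ l₀).erase l₀ with hB
  let r : ℝ[X] := ∏ a ∈ A, (X - C a)
  let q : ℝ[X] := ∏ l ∈ B, (X - C (x l))
  have hAc : A.card < N := by
    have h1 : (Finset.univ.image θ).card ≤ Fintype.card ι := Finset.card_image_le
    have h2 : A.card < (Finset.univ.image θ).card := Finset.card_erase_lt_of_mem (by simp)
    omega
  have hBc : B.card < T := by
    have h1 : (Finset.univ.filter fun l => θ l = θ l₀).card ≤ T := by
      rw [← Finset.card_range T]
      apply Finset.card_le_card_of_injOn c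
      · intro l _; simpa using hcT l
      · intro l hl l' hl' hll
        simp only [Finset.coe_filter, Finset.mem_univ, true_and, Set.mem_ofPred_eq] at hl hl'
        exact hc l l' (hl.trans hl'.symm) hll
    have h2 : B.card < (Finset.univ.filter fun l => θ l = θ l₀).card :=
      Finset.card_erase_lt_of_mem (by simp)
    omega
  have hr : r.natDegree < N := by
    have := natDegree_prod_of_monic A (fun a => X - C a) fun a _ => monic_X_sub_C a
    simp only [r, this]; simpa using hAc
  have hq : q.natDegree < T := by
    have := natDegree_prod_of_monic B (fun l => X - C (x l)) fun l _ => monic_X_sub_C (x l)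
    simp only [q, this]; simpa using hBc
  have key : ∑ l, p l * q.eval (x l) * r.eval (θ l) = 0 := by
    have : ∀ l, p l * q.eval (x l) * r.eval (θ l) =
        ∑ k ∈ Finset.range T, ∑ z ∈ Finset.range N,
          q.coeff k * r.coeff z * (p l * x l ^ k * θ l ^ z) := by
      intro l
      rw [eval_eq_sum_range' hq, eval_eq_sum_range' hr, mul_assoc, Finset.sum_mul_sum, Finset.mul_sum]
      refine Finset.sum_congr rfl fun k _ => ?_
      rw [Finset.mul_sum]
      exact Finset.sum_congr rfl fun z _ => by ring
    simp only [this]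
    rw [Finset.sum_comm]
    refine Finset.sum_eq_zero fun k hk => ?_
    rw [Finset.sum_comm]
    refine Finset.sum_eq_zero fun z hz => ?_
    rw [← Finset.mul_sum, h k (by simpa using hk) z (by simpa using hz), mul_zero]
  rw [Finset.sum_eq_single l₀] at key
  · have hq0 : q.eval (x l₀) ≠ 0 := by
      simp only [q, eval_prod, eval_sub, eval_X, eval_C]
      rw [Finset.prod_ne_zero_iff]
      intro l hl h0
      simp only [hB, Finset.mem_erase, Finset.mem_filter, Finset.mem_univ, true_and] at hl
      exact hl.1 (hx l l₀ hl.2 (by linarith))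
    have hr0 : r.eval (θ l₀) ≠ 0 := by
      simp only [r, eval_prod, eval_sub, eval_X, eval_C]
      rw [Finset.prod_ne_zero_iff]
      intro a ha h0
      simp only [hA, Finset.mem_erase] at ha
      exact ha.1 (by linarith)
    simpa [hq0, hr0] using key
  · intro l _ hl
    by_cases hθ : θ l = θ l₀
    · have : q.eval (x l) = 0 := by
        simp only [q, eval_prod, eval_sub, eval_X, eval_C]
        exact Finset.prod_eq_zero (i := l) (by simp [hB, hl, hθ]) (by simp)
      simp [this]
    · have : r.eval (θ l) = 0 := by
        simp only [r, eval_prod, eval_sub, eval_X, eval_C]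
        exact Finset.prod_eq_zero (i := θ l) (by simp [hA, hθ]) (by simp)
      simp [this]
  · simp
end FT

namespace FT

lemma exp_close {w d δ ζ z : ℝ} {W : ℝ} (hw : |w| ≤ W) (hd : |d| ≤ δ) (hz : 0 ≤ z) (hzζ : z ≤ ζ)
    (hδ : δ * ζ ≤ 1) :
    |Real.exp ((w + d) * z) - Real.exp (w * z)| ≤ Real.exp (W * ζ) * (2 * (δ * ζ)) := by
  have hW : 0 ≤ W := (abs_nonneg _).trans hw
  have hδ0 : 0 ≤ δ := (abs_nonneg _).trans hd
  have h1 : Real.exp ((w + d) * z) - Real.exp (w * z) =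
      Real.exp (w * z) * (Real.exp (d * z) - 1) := by
    rw [add_mul, Real.exp_add]; ring
  have h2 : |d * z| ≤ δ * ζ := by
    rw [abs_mul, abs_of_nonneg hz]
    exact mul_le_mul hd hzζ hz hδ0
  rw [h1, abs_mul, abs_of_pos (Real.exp_pos _)]
  have h3 : |Real.exp (d * z) - 1| ≤ 2 * |d * z| := Real.abs_exp_sub_one_le (h2.trans hδ)
  have h4 : w * z ≤ W * ζ := by
    have := le_abs_self w
    nlinarith
  exact mul_le_mul (Real.exp_le_exp.2 h4) (by linarith) (abs_nonneg _) (Real.exp_pos _).le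

theorem extrap {ι : Type*} [Fintype ι] (p x y w d θ : ι → ℝ) (l1 l2 P X W δ : ℝ) (K K' S Z ζ k1 k2 : ℕ)
    (hw : ∀ l, w l = x l * l1 + y l * l2) (hθ : ∀ l, θ l = Real.exp (w l + d l))
    (hp : ∀ l, |p l| ≤ P) (hX : 1 ≤ X) (hx : ∀ l, |x l| ≤ X) (hy : ∀ l, |y l| ≤ X)
    (hW0 : 0 ≤ W) (hW : ∀ l, |w l| ≤ W) (hd : ∀ l, |d l| ≤ δ) (hδ : δ * ζ ≤ 1) (hδ0 : 0 ≤ δ)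
    (hP0 : 0 ≤ P)
    (hφ : ∀ k1 k2, k1 + k2 < K' → ∀ z < Z, ∑ l, p l * x l ^ k1 * y l ^ k2 * θ l ^ z = 0)
    (hk : k1 + k2 + S ≤ K') (hkK : k1 + k2 ≤ K) (hZ : Z ≤ ζ) (hζ : 0 < ζ) :
    |∑ l, p l * x l ^ k1 * y l ^ k2 * θ l ^ ζ| ≤ Fintype.card ι * P * X ^ K *
      ((ζ * W) ^ (S * Z) * Real.exp (W * ζ) / (S * Z).factorial +
        Real.exp (W * ζ) * (2 * (δ * ζ)) * (1 + (2 * ζ) ^ (S * Z) * Real.exp (W / 2))) := by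
  obtain ⟨c, b, hc, hc1, hc2, hb, hnew⟩ := newton Z S ζ hZ
  set E1 := W ^ (S * Z) * Real.exp (W * ζ) / (S * Z).factorial with hE1
  set D := Real.exp (W * ζ) * (2 * (δ * ζ)) with hD
  have hD0 : 0 ≤ D := by positivity
  let g : ι → ℝ := fun l => p l * x l ^ k1 * y l ^ k2
  have hg : ∀ l, |g l| ≤ P * X ^ K := by
    intro l
    simp only [g, abs_mul, abs_pow]
    rw [mul_assoc]
    refine mul_le_mul (hp l) ?_ (by positivity) hP0
    calc |x l| ^ k1 * |y l| ^ k2 ≤ X ^ k1 * X ^ k2 := by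
          gcongr
          · exact hx l
          · exact hy l
      _ = X ^ (k1 + k2) := by rw [pow_add]
      _ ≤ X ^ K := pow_le_pow_right₀ hX hkK
  have hθz : ∀ l (z : ℕ), θ l ^ z = Real.exp ((w l + d l) * z) := by
    intro l z; rw [hθ, ← Real.exp_nat_mul, mul_comm]
  have hclose : ∀ l (z : ℕ), z ≤ ζ → |θ l ^ z - Real.exp (w l * z)| ≤ D := by
    intro l z hz
    rw [hθz]
    exact exp_close (hW l) (hd l) (by positivity) (by exact_mod_cast hz) hδ
  have hsum_bound : ∀ (f : ι → ℝ) (E : ℝ), (∀ l, |f l| ≤ E) →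
      |∑ l, g l * f l| ≤ Fintype.card ι * (P * X ^ K) * E := by
    intro f E hf
    refine (Finset.abs_sum_le_sum_abs _ _).trans ?_
    calc ∑ l, |g l * f l| ≤ ∑ _l : ι, (P * X ^ K) * E := by
          refine Finset.sum_le_sum fun l _ => ?_
          rw [abs_mul]
          exact mul_le_mul (hg l) (hf l) (abs_nonneg _) (by positivity)
      _ = _ := by simp; ring
  -- vanishing of the `w`-moments
  have hvan : ∀ z < Z, ∀ s < S, ∑ l, g l * (w l ^ s * θ l ^ z) = 0 := by
    intro z hz s hs
    have : ∀ l, g l * (w l ^ s * θ l ^ z) = ∑ i ∈ Finset.range (s + 1),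
        (l1 ^ i * l2 ^ (s - i) * (s.choose i)) *
          (p l * x l ^ (k1 + i) * y l ^ (k2 + (s - i)) * θ l ^ z) := by
      intro l
      rw [hw, add_pow, Finset.sum_mul, Finset.mul_sum]
      refine Finset.sum_congr rfl fun i _ => ?_
      simp only [g, mul_pow, pow_add]
      ring
    simp only [this]
    rw [Finset.sum_comm]
    refine Finset.sum_eq_zero fun i hi => ?_
    have : i < s + 1 := by simpa using hi
    rw [← Finset.mul_sum, hφ _ _ (by omega) z hz, mul_zero]
  have hmom : ∀ z < Z, ∀ s < S, |∑ l, g l * (w l ^ s * Real.exp (w l * z))| ≤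
      Fintype.card ι * (P * X ^ K) * (W ^ s * D) := by
    intro z hz s hs
    have e : ∑ l, g l * (w l ^ s * Real.exp (w l * z)) =
        ∑ l, g l * (w l ^ s * (Real.exp (w l * z) - θ l ^ z)) := by
      rw [← sub_zero (∑ l, g l * (w l ^ s * Real.exp (w l * z))), ← hvan z hz s hs,
        ← Finset.sum_sub_distrib]
      exact Finset.sum_congr rfl fun l _ => by ring
    rw [e]
    refine hsum_bound _ _ fun l => ?_
    rw [abs_mul, abs_pow, abs_sub_comm]
    exact mul_le_mul (pow_le_pow_left₀ (abs_nonneg _) (hW l) _) (hclose l z (by omega))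
      (abs_nonneg _) (by positivity)
  set Q : ℝ := Fintype.card ι * (P * X ^ K) with hQ
  have hQ0 : 0 ≤ Q := by positivity
  set ψ := ∑ l, g l * Real.exp (w l * ζ) with hψ
  set R := ∑ z ∈ Finset.range Z, ∑ s ∈ Finset.range S,
      b z s / s.factorial * ∑ l, g l * (w l ^ s * Real.exp (w l * z)) with hR
  have hRb : |R| ≤ Q * D * (2 ^ (S * Z) * Real.exp (W / 2)) := by
    calc |R| ≤ ∑ z ∈ Finset.range Z, ∑ s ∈ Finset.range S,
          (2 ^ s * |b z s|) * (Q * D * Real.exp (W / 2)) := by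
          refine (Finset.abs_sum_le_sum_abs _ _).trans (Finset.sum_le_sum fun z hz =>
            (Finset.abs_sum_le_sum_abs _ _).trans (Finset.sum_le_sum fun s hs => ?_))
          rw [abs_mul, abs_div, Nat.abs_cast]
          have h1 := hmom z (by simpa using hz) s (by simpa using hs)
          have h2 : (W / 2) ^ s / s.factorial ≤ Real.exp (W / 2) :=
            Real.pow_div_factorial_le_exp _ (by positivity) s
          calc |b z s| / s.factorial * |∑ l, g l * (w l ^ s * Real.exp (w l * z))|
              ≤ |b z s| / s.factorial * (Q * (W ^ s * D)) := by gcongr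
            _ = (2 ^ s * |b z s|) * (Q * D * ((W / 2) ^ s / s.factorial)) := by
                rw [div_pow]; field_simp
            _ ≤ _ := by gcongr
      _ = (∑ z ∈ Finset.range Z, ∑ s ∈ Finset.range S, 2 ^ s * |b z s|) *
            (Q * D * Real.exp (W / 2)) := by simp only [Finset.sum_mul]
      _ ≤ 2 ^ (S * Z) * (Q * D * Real.exp (W / 2)) := by gcongr
      _ = _ := by ring
  have hcomb : |c * ψ + R| ≤ Q * E1 := by
    have : c * ψ + R = ∑ l, g l * (c * Real.exp (w l * ζ) + ∑ z ∈ Finset.range Z,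
        ∑ s ∈ Finset.range S, b z s * (w l ^ s * Real.exp (w l * z) / s.factorial)) := by
      simp only [mul_add, Finset.sum_add_distrib]
      congr 1
      · rw [hψ, Finset.mul_sum]
        exact Finset.sum_congr rfl fun l _ => by ring
      · simp only [hR, Finset.mul_sum]
        symm
        rw [Finset.sum_comm]
        refine Finset.sum_congr rfl fun z _ => ?_
        rw [Finset.sum_comm]
        refine Finset.sum_congr rfl fun s _ => Finset.sum_congr rfl fun l _ => by ring
    rw [this]
    refine hsum_bound _ _ fun l => (hnew (w l)).trans ?_
    rw [hE1]
    have := hW l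
    gcongr
  have hcψ : c * |ψ| ≤ Q * (E1 + D * (2 ^ (S * Z) * Real.exp (W / 2))) := by
    have h1 : c * |ψ| = |(c * ψ + R) - R| := by
      rw [add_sub_cancel_right, abs_mul, abs_of_pos hc]
    rw [h1]
    refine (abs_sub _ _).trans ?_
    linarith
  have hψb : |ψ| ≤ ζ ^ (S * Z) * (Q * (E1 + D * (2 ^ (S * Z) * Real.exp (W / 2)))) := by
    calc |ψ| ≤ (c * ζ ^ (S * Z)) * |ψ| := le_mul_of_one_le_left (abs_nonneg _) hc2
      _ = ζ ^ (S * Z) * (c * |ψ|) := by ring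
      _ ≤ _ := by gcongr
  have hdiff : |∑ l, g l * θ l ^ ζ - ψ| ≤ Q * D := by
    rw [hψ, ← Finset.sum_sub_distrib]
    simp only [← mul_sub]
    exact hsum_bound _ _ fun l => hclose l ζ le_rfl
  have hfin : |∑ l, g l * θ l ^ ζ| ≤ Q * D + |ψ| := by
    have := abs_add_le (∑ l, g l * θ l ^ ζ - ψ) ψ
    rw [sub_add_cancel] at this
    linarith
  refine (hfin.trans (add_le_add le_rfl hψb)).trans (le_of_eq ?_)
  rw [hE1, mul_pow, mul_pow]
  ring
end FT

namespace FT

theorem siegel_fam {ι ρ : Type*} [Fintype ι] [Fintype ρ] [Nonempty ρ] {α t : ℝ} (v : ρ → ι → ℝ) (B : ℝ) (hB : 1 ≤ B)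
    (hv : ∀ r l, HasLen α t (v r l) B) (hc : 12 * Fintype.card ρ ≤ Fintype.card ι) :
    ∃ p : ι → ℤ, p ≠ 0 ∧ (∀ l, |(p l : ℝ)| ≤ Fintype.card ι * B) ∧
      ∀ r, ∑ l, (p l : ℝ) * v r l = 0 := by
  classical
  letI := Matrix.seminormedAddCommGroup (m := ρ × Fin 2 × Fin 3) (n := ι) (α := ℤ)
  choose c hc1 hc2 using hv
  let A : Matrix (ρ × Fin 2 × Fin 3) ι ℤ := fun r l => c r.1 l r.2.1 r.2.2
  have hρ : 0 < Fintype.card ρ := Fintype.card_pos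
  have hcard : Fintype.card (ρ × Fin 2 × Fin 3) = 6 * Fintype.card ρ := by
    simp [Fintype.card_prod]; ring
  obtain ⟨p, hp0, hp1, hp2⟩ := Int.Matrix.exists_ne_zero_int_vec_norm_le A (by omega) (by omega)
  have hAn : ‖A‖ ≤ B := by
    rw [Matrix.norm_le_iff (by linarith)]
    rintro ⟨r, i, j⟩ l
    rw [Int.norm_eq_abs]
    have e2 : |(c r l i j : ℝ)| ≤ ∑ j, |(c r l i j : ℝ)| :=
      Finset.single_le_sum (f := fun j => |(c r l i j : ℝ)|) (fun _ _ => abs_nonneg _) (Finset.mem_univ j)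
    have e3 : ∑ j, |(c r l i j : ℝ)| ≤ ∑ i, ∑ j, |(c r l i j : ℝ)| :=
      Finset.single_le_sum (f := fun i => ∑ j, |(c r l i j : ℝ)|) (fun _ _ => by positivity) (Finset.mem_univ i)
    exact (e2.trans e3).trans (hc1 r l)
  have hι : (1 : ℝ) ≤ Fintype.card ι := by exact_mod_cast (by omega : 1 ≤ Fintype.card ι)
  have hp3 : ‖p‖ ≤ Fintype.card ι * B := by
    refine hp2.trans ?_
    set e : ℝ := (Fintype.card (ρ × Fin 2 × Fin 3) : ℝ) / ((Fintype.card ι : ℝ) - Fintype.card (ρ × Fin 2 × Fin 3)) with he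
    have h1 : (0 : ℝ) < (Fintype.card ι : ℝ) - Fintype.card (ρ × Fin 2 × Fin 3) := by
      rw [hcard, sub_pos]; exact_mod_cast (by omega)
    have he1 : e ≤ 1 := by
      rw [he, div_le_one h1, hcard]
      have : (12 * Fintype.card ρ : ℝ) ≤ Fintype.card ι := by exact_mod_cast hc
      push_cast; linarith
    have he0 : 0 ≤ e := by rw [he]; positivity
    calc (Fintype.card ι * max 1 ‖A‖) ^ e ≤ (Fintype.card ι * B) ^ e := by
          gcongr
          exact max_le hB hAn
      _ ≤ (Fintype.card ι * B) ^ (1 : ℝ) :=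
          Real.rpow_le_rpow_of_exponent_le (by nlinarith) he1
      _ = _ := Real.rpow_one _
  refine ⟨p, hp0, fun l => ?_, fun r => ?_⟩
  · have := norm_le_pi_norm p l
    rw [Int.norm_eq_abs] at this
    exact this.trans hp3
  · have h1 : ∀ i j, ∑ l, (p l : ℝ) * (c r l i j : ℝ) = 0 := by
      intro i j
      have := congrFun hp1 (r, i, j)
      simp only [Matrix.mulVec, dotProduct, A, Pi.zero_apply] at this
      have h2 : ∑ l, p l * c r l i j = 0 := by
        rw [← this]; exact Finset.sum_congr rfl fun l _ => mul_comm _ _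
      exact_mod_cast h2
    calc ∑ l, (p l : ℝ) * v r l = ∑ l, ∑ i : Fin 2, ∑ j : Fin 3, (α ^ (i : ℕ) * t ^ (j : ℕ)) * ((p l : ℝ) * (c r l i j : ℝ)) := by
          refine Finset.sum_congr rfl fun l _ => ?_
          rw [hc2 r l, Finset.mul_sum]
          refine Finset.sum_congr rfl fun i _ => ?_
          rw [Finset.mul_sum]
          exact Finset.sum_congr rfl fun j _ => by ring
      _ = 0 := by
          rw [Finset.sum_comm]
          refine Finset.sum_eq_zero fun i _ => ?_
          rw [Finset.sum_comm]
          refine Finset.sum_eq_zero fun j _ => ?_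
          rw [← Finset.mul_sum, h1, mul_zero]

section
variable {α t : ℝ} (hα : α ^ 2 = α + 1) (ht : t ^ 3 = t ^ 2 + t + 1)
include hα ht

lemma HasLen.pow_mul {x y ℓ ℓ' : ℝ} (h : HasLen α t x ℓ) (h' : HasLen α t y ℓ') (k : ℕ) :
    HasLen α t (x ^ k * y) ((18 * ℓ) ^ k * ℓ') := by
  induction k with
  | zero => simpa using h'
  | succ k ih => convert HasLen.mul hα ht h ih using 1 <;> ring

/-- the numerators. -/
lemma num_len {u v H : ℝ} (hu : HasLen α t u H) (hv : HasLen α t v H) {A T L : ℕ}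
    (hH0 : 1 ≤ 18 * H) (hH : 18 * H ≤ 3 ^ A) (hL : A * T ≤ L) {l1 l2 l3 : ℕ} (h1 : l1 ≤ L) (h2 : l2 ≤ L)
    (h3 : l3 ≤ T) (z : ℕ) :
    HasLen α t (α ^ (l1 * z) * t ^ (l2 * z) * (u ^ (l3 * z) * (v ^ ((T - l3) * z) * 1))) (18 ^ (L * z)) := by
  have h := HasLen.monom hα ht (HasLen.pow_mul hα ht hu (HasLen.pow_mul hα ht hv HasLen.one ((T - l3) * z)) (l3 * z)) (l1 * z) (l2 * z)
  refine h.mono ?_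
  have e1 : (18 * H) ^ (l3 * z) * ((18 * H) ^ ((T - l3) * z) * 1) ≤ 3 ^ (L * z) := by
    rw [mul_one, ← pow_add, ← add_mul, Nat.add_sub_cancel' h3]
    calc (18 * H) ^ (T * z) ≤ (3 ^ A) ^ (T * z) := by gcongr
      _ = 3 ^ (A * T * z) := by rw [← pow_mul, mul_assoc]
      _ ≤ 3 ^ (L * z) := pow_le_pow_right₀ (by norm_num) (by gcongr)
  have e2 : (2 : ℝ) ^ (l1 * z) ≤ 2 ^ (L * z) := pow_le_pow_right₀ (by norm_num) (by gcongr)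
  have e3 : (3 : ℝ) ^ (l2 * z) ≤ 3 ^ (L * z) := pow_le_pow_right₀ (by norm_num) (by gcongr)
  calc _ ≤ (2 : ℝ) ^ (L * z) * 3 ^ (L * z) * 3 ^ (L * z) := by gcongr
    _ = 18 ^ (L * z) := by rw [← mul_pow, ← mul_pow]; norm_num
end

end FT

namespace FT

lemma HasLen.abs_le {α t x ℓ : ℝ} (h : HasLen α t x ℓ) (h1 : 1 < α) (h2 : 1 < t)
    (ha : α ≤ 1.62) (ht : t ≤ 1.84) : |x| ≤ 6 * ℓ := by
  obtain ⟨c, e1, e2⟩ := h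
  rw [e2]
  calc _ ≤ ∑ i : Fin 2, ∑ j : Fin 3, |(c i j : ℝ)| * 6 := by
        refine (Finset.abs_sum_le_sum_abs _ _).trans (Finset.sum_le_sum fun i _ =>
          (Finset.abs_sum_le_sum_abs _ _).trans (Finset.sum_le_sum fun j _ => ?_))
        rw [abs_mul]
        gcongr
        rw [abs_of_pos (by positivity)]
        calc α ^ (i : ℕ) * t ^ (j : ℕ) ≤ 1.62 ^ (i : ℕ) * 1.84 ^ (j : ℕ) := by gcongr
          _ ≤ 1.62 ^ 1 * 1.84 ^ 2 := by
              gcongr <;> first | (norm_num; done) | omega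
          _ ≤ 6 := by norm_num
    _ ≤ 6 * ℓ := by simp only [← Finset.sum_mul]; linarith

theorem baker_core {α t : ℝ} (hα : α ^ 2 = α + 1) (ht : t ^ 3 = t ^ 2 + t + 1) (hα1 : 1 < α)
    (ht1 : 1 < t) (hα2 : α ≤ 1.62) (ht2 : t ≤ 1.84) {u v H : ℝ} (hu : HasLen α t u H)
    (hv : HasLen α t v H) (hu0 : 0 < u) (hv0 : 0 < v) (n m L T K S Z0 J A : ℕ) (X δ W : ℝ)
    (hH0 : 1 ≤ 18 * H) (hH : 18 * H ≤ 3 ^ A) (hAT : A * T ≤ L) (hLn : L ≤ n)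
    (hX1 : (L : ℝ) + n * T ≤ X) (hX2 : (L : ℝ) + m * T ≤ X) (hX : 1 ≤ X)
    (hK : 0 < K) (hZ0 : 0 < Z0) (hT : 0 < T)
    (hcard : 12 * (K * (K * Z0)) ≤ L * (L * T)) (hJ : J * S + T ≤ K) (hJ2 : L * (L * T) ≤ 2 ^ J * Z0)
    (hδ0 : 0 ≤ δ)
    (hδ : T * |Real.log (u / v) + n * Real.log α - m * Real.log t| ≤ δ)
    (hW : L * Real.log α + L * Real.log t + T * |Real.log (u / v)| + δ ≤ W)
    (G : ℝ) (hG : G = ((L * (L * T) : ℕ) : ℝ) * (((L * (L * T) : ℕ) : ℝ) * (X ^ K * 18 ^ (L * Z0))) * X ^ K)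
    (hnum : ∀ j < J, ∀ ζ : ℕ, 2 ^ j * Z0 ≤ ζ → ζ < 2 ^ (j + 1) * Z0 → δ * ζ ≤ 1 ∧
      3 ^ (L * ζ) * (6 * (G * 18 ^ (L * ζ))) ^ 5 * (G *
      ((ζ * W) ^ (S * (2 ^ j * Z0)) * Real.exp (W * ζ) / (S * (2 ^ j * Z0)).factorial +
        Real.exp (W * ζ) * (2 * (δ * ζ)) * (1 + (2 * ζ) ^ (S * (2 ^ j * Z0)) * Real.exp (W / 2)))) < 1) :
    False := by
  classical
  let ι := Fin L × Fin L × Fin T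
  set γ := u / v with hγ
  set Λ := Real.log γ + n * Real.log α - m * Real.log t with hΛ
  have hγ0 : 0 < γ := div_pos hu0 hv0
  have hl1 : 0 < Real.log α := Real.log_pos hα1
  have hl2 : 0 < Real.log t := Real.log_pos ht1
  let xz : ι → ℤ := fun l => (l.1 : ℤ) - n * (l.2.2 : ℤ)
  let yz : ι → ℤ := fun l => (l.2.1 : ℤ) + m * (l.2.2 : ℤ)
  let x : ι → ℝ := fun l => (xz l : ℝ)
  let y : ι → ℝ := fun l => (yz l : ℝ)
  let w : ι → ℝ := fun l => x l * Real.log α + y l * Real.log t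
  let d : ι → ℝ := fun l => (l.2.2 : ℕ) * Λ
  let θ : ι → ℝ := fun l => α ^ (l.1 : ℕ) * t ^ (l.2.1 : ℕ) * γ ^ (l.2.2 : ℕ)
  have hcι : Fintype.card ι = L * (L * T) := by simp [ι, Fintype.card_prod]
  have hl1L : ∀ l : ι, ((l.1 : ℕ) : ℝ) ≤ L := fun l => by exact_mod_cast l.1.2.le
  have hl2L : ∀ l : ι, ((l.2.1 : ℕ) : ℝ) ≤ L := fun l => by exact_mod_cast l.2.1.2.le
  have hl3T : ∀ l : ι, ((l.2.2 : ℕ) : ℝ) ≤ T := fun l => by exact_mod_cast l.2.2.2.le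
  have hθlog : ∀ l, w l + d l = (l.1 : ℕ) * Real.log α + (l.2.1 : ℕ) * Real.log t + (l.2.2 : ℕ) * Real.log γ := by
    intro l
    simp only [w, d, x, y, xz, yz, hΛ]
    push_cast
    ring
  have hθ : ∀ l, θ l = Real.exp (w l + d l) := by
    intro l
    rw [hθlog, Real.exp_add, Real.exp_add, Real.exp_nat_mul, Real.exp_nat_mul, Real.exp_nat_mul,
      Real.exp_log (by linarith), Real.exp_log (by linarith), Real.exp_log hγ0]
  have hd : ∀ l, |d l| ≤ δ := by
    intro l
    simp only [d]
    rw [abs_mul, Nat.abs_cast]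
    exact (mul_le_mul_of_nonneg_right (hl3T l) (abs_nonneg _)).trans hδ
  have hw : ∀ l, |w l| ≤ W := by
    intro l
    have h1 : w l = ((l.1 : ℕ) * Real.log α + (l.2.1 : ℕ) * Real.log t + (l.2.2 : ℕ) * Real.log γ) - d l := by
      rw [← hθlog]; ring
    rw [h1]
    refine (abs_sub _ _).trans ((add_le_add ?_ (hd l)).trans hW)
    refine (abs_add_le _ _).trans (add_le_add ((abs_add_le _ _).trans (add_le_add ?_ ?_)) ?_)
    · rw [abs_mul, Nat.abs_cast, abs_of_pos hl1]
      exact mul_le_mul_of_nonneg_right (hl1L l) hl1.le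
    · rw [abs_mul, Nat.abs_cast, abs_of_pos hl2]
      exact mul_le_mul_of_nonneg_right (hl2L l) hl2.le
    · rw [abs_mul, Nat.abs_cast]
      exact mul_le_mul_of_nonneg_right (hl3T l) (abs_nonneg _)
  have hW0 : 0 ≤ W := le_trans (by positivity) hW
  have hx : ∀ l, |x l| ≤ X := by
    intro l
    refine le_trans ?_ hX1
    have := hl1L l
    have h3 : (n : ℝ) * (l.2.2 : ℕ) ≤ n * T := mul_le_mul_of_nonneg_left (hl3T l) (by positivity)
    simp only [x, xz]
    push_cast
    refine (abs_sub _ _).trans ?_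
    rw [abs_mul, Nat.abs_cast, Nat.abs_cast, Nat.abs_cast]
    linarith
  have hy : ∀ l, |y l| ≤ X := by
    intro l
    refine le_trans ?_ hX2
    have := hl2L l
    have h3 : (m : ℝ) * (l.2.2 : ℕ) ≤ m * T := mul_le_mul_of_nonneg_left (hl3T l) (by positivity)
    simp only [y, yz]
    push_cast
    refine (abs_add_le _ _).trans ?_
    rw [abs_mul, Nat.abs_cast, Nat.abs_cast, Nat.abs_cast]
    linarith
  let num : ι → ℕ → ℝ := fun l z => α ^ ((l.1 : ℕ) * z) * t ^ ((l.2.1 : ℕ) * z) *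
    (u ^ ((l.2.2 : ℕ) * z) * (v ^ ((T - (l.2.2 : ℕ)) * z) * 1))
  have hnumlen : ∀ l z, HasLen α t (num l z) (18 ^ (L * z)) := fun l z =>
    num_len hα ht hu hv hH0 hH hAT l.1.2.le l.2.1.2.le l.2.2.2.le z
  have hnumθ : ∀ l z, num l z = v ^ (T * z) * θ l ^ z := by
    intro l z
    simp only [num, θ, hγ]
    have : T * z = (T - (l.2.2 : ℕ)) * z + (l.2.2 : ℕ) * z := by
      rw [← add_mul, Nat.sub_add_cancel l.2.2.2.le]
    rw [this, pow_add, mul_pow, mul_pow, ← pow_mul, ← pow_mul, ← pow_mul, div_pow]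
    field_simp
  -- Siegel
  have : Nonempty (Fin K × Fin K × Fin Z0) := ⟨(⟨0, hK⟩, ⟨0, hK⟩, ⟨0, hZ0⟩)⟩
  set B : ℝ := X ^ K * 18 ^ (L * Z0) with hB
  have hB1 : 1 ≤ B := by
    have h1 : 1 ≤ X ^ K := one_le_pow₀ hX
    have h2 : (1 : ℝ) ≤ 18 ^ (L * Z0) := one_le_pow₀ (by norm_num)
    nlinarith
  have hmon : ∀ l (k1 k2 z : ℕ), k1 + k2 ≤ K → HasLen α t (((xz l ^ k1 * yz l ^ k2 : ℤ) : ℝ) * num l z)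
      (X ^ K * 18 ^ (L * z)) := by
    intro l k1 k2 z hk
    refine ((hnumlen l z).smul _).mono ?_
    gcongr
    push_cast
    rw [abs_mul, abs_pow, abs_pow]
    calc |(xz l : ℝ)| ^ k1 * |(yz l : ℝ)| ^ k2 ≤ X ^ k1 * X ^ k2 := by
          gcongr
          · exact hx l
          · exact hy l
      _ = X ^ (k1 + k2) := by rw [pow_add]
      _ ≤ X ^ K := pow_le_pow_right₀ hX hk
  obtain ⟨p, hp0, hpB, hpv⟩ := siegel_fam (ι := ι) (ρ := Fin K × Fin K × Fin Z0) (α := α) (t := t)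
    (fun r l => if (r.1 : ℕ) + r.2.1 ≤ K then ((xz l ^ (r.1 : ℕ) * yz l ^ (r.2.1 : ℕ) : ℤ) : ℝ) * num l r.2.2 else 0)
    B hB1 (by
      intro r l
      split_ifs with h
      · refine (hmon l _ _ _ h).mono ?_
        rw [hB]
        have : (18 : ℝ) ^ (L * (r.2.2 : ℕ)) ≤ 18 ^ (L * Z0) :=
          pow_le_pow_right₀ (by norm_num) (Nat.mul_le_mul_left _ r.2.2.2.le)
        gcongr
      · exact HasLen.zero.mono (by linarith)) (by
      rw [hcι]; simpa [Fintype.card_prod] using hcard)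
  rw [hcι] at hpB
  set N : ℝ := ((L * (L * T) : ℕ) : ℝ) with hN
  have hGN : G = N * (N * B) * X ^ K := hG
  have hvz : ∀ z : ℕ, 0 < v ^ (T * z) := fun z => by positivity
  have hnumsum : ∀ k1 k2 z : ℕ, ∑ l, (p l : ℝ) * (((xz l ^ k1 * yz l ^ k2 : ℤ) : ℝ) * num l z) =
      v ^ (T * z) * ∑ l, (p l : ℝ) * x l ^ k1 * y l ^ k2 * θ l ^ z := by
    intro k1 k2 z
    rw [Finset.mul_sum]
    refine Finset.sum_congr rfl fun l _ => ?_
    rw [hnumθ]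
    simp only [x, y]
    push_cast
    ring
  have main : ∀ j ≤ J, ∀ k1 k2, k1 + k2 + j * S < K → ∀ z < 2 ^ j * Z0,
      ∑ l, (p l : ℝ) * x l ^ k1 * y l ^ k2 * θ l ^ z = 0 := by
    intro j
    induction j with
    | zero =>
      intro _ k1 k2 hk z hz
      have h1 := hpv (⟨k1, by omega⟩, ⟨k2, by omega⟩, ⟨z, by omega⟩)
      simp only at h1
      simp only [if_pos (show k1 + k2 ≤ K by omega)] at h1
      rw [hnumsum] at h1
      exact (mul_eq_zero.1 h1).resolve_left (hvz z).ne'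
    | succ j ih =>
      intro hjJ k1 k2 hk z hz
      have ih := ih (by omega)
      have hjS : (j + 1) * S = j * S + S := by ring
      rw [hjS] at hk
      rcases lt_or_ge z (2 ^ j * Z0) with hzz | hzz
      · exact ih k1 k2 (by omega) z hzz
      by_contra hne
      obtain ⟨hδζ, hlt⟩ := hnum j (by omega) z hzz hz
      have hz0 : 0 < z := lt_of_lt_of_le (by positivity) hzz
      have hex := extrap (fun l => (p l : ℝ)) x y w d θ (Real.log α) (Real.log t) (N * B) X W δ K
        (K - j * S) S (2 ^ j * Z0) z k1 k2 (fun l => rfl) hθ hpB hX hx hy hW0 hw hd hδζ hδ0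
        (by positivity) (fun a b hab z hz => ih a b (by omega) z hz) (by omega) (by omega) hzz hz0
      rw [hcι, ← hN, ← hGN] at hex
      set φ := ∑ l, (p l : ℝ) * x l ^ k1 * y l ^ k2 * θ l ^ z with hφ
      have hlen : HasLen α t (v ^ (T * z) * φ) (G * 18 ^ (L * z)) := by
        rw [hφ, ← hnumsum]
        refine (HasLen.sum Finset.univ (ℓ := fun _ => (N * B) * (X ^ K * 18 ^ (L * z))) fun l _ =>
          ((hmon l k1 k2 z (by omega)).smul (p l)).mono ?_).mono ?_
        · exact mul_le_mul_of_nonneg_right (hpB l) (by positivity)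
        · rw [Finset.sum_const, Finset.card_univ, hcι, nsmul_eq_mul, ← hN, hGN]
          apply le_of_eq; ring
      have hli := liouville hα ht hlen (mul_ne_zero (hvz z).ne' hne)
      have hvb : |v ^ (T * z)| ≤ 3 ^ (L * z) := by
        rw [abs_pow]
        have h1 := hv.abs_le hα1 ht1 hα2 ht2
        calc |v| ^ (T * z) ≤ (3 ^ A) ^ (T * z) := by
              gcongr
              have := hv.nonneg
              linarith
          _ = 3 ^ (A * T * z) := by rw [← pow_mul, mul_assoc]
          _ ≤ 3 ^ (L * z) := pow_le_pow_right₀ (by norm_num) (by gcongr)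
      rw [abs_mul] at hli
      have hG0 : 0 ≤ G := by rw [hGN]; positivity
      have : (1 : ℝ) < 1 := by
        refine lt_of_le_of_lt (hli.trans ?_) hlt
        rw [mul_right_comm]
        gcongr
      exact lt_irrefl _ this
  have hz := zero_est (fun l => (p l : ℝ)) x θ T (L * (L * T)) (fun k hk z hz => by
    have := main J le_rfl k 0 (by omega) z (by omega)
    simpa using this) hcι.le (fun l => (l.2.2 : ℕ)) (fun l => l.2.2.2) ?_ ?_
  · apply hp0
    funext l
    exact_mod_cast hz l
  · intro l l' h1 h2
    have h3 : α ^ (l.1 : ℕ) * t ^ (l.2.1 : ℕ) = α ^ (l'.1 : ℕ) * t ^ (l'.2.1 : ℕ) := by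
      simp only [θ] at h1
      have h2 : (l.2.2 : ℕ) = (l'.2.2 : ℕ) := h2
      rw [h2] at h1
      exact mul_right_cancel₀ (by positivity) h1
    obtain ⟨e1, e2⟩ := indep2 hα ht hα1 ht1 _ _ _ _ h3
    ext <;> assumption
  · intro l l' h1 h2
    have h3 : xz l = xz l' := Int.cast_injective (α := ℝ) h2
    simp only [xz] at h3
    have a1 := l.1.2
    have a2 := l'.1.2
    have h4 : ((l.1 : ℕ) : ℤ) - (l'.1 : ℕ) = n * (((l.2.2 : ℕ) : ℤ) - (l'.2.2 : ℕ)) := by linarith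
    have h5 : ((l.2.2 : ℕ) : ℤ) = (l'.2.2 : ℕ) := by
      by_contra hne
      have h6 : (1 : ℤ) ≤ |((l.2.2 : ℕ) : ℤ) - (l'.2.2 : ℕ)| := Int.one_le_abs (sub_ne_zero.2 hne)
      have h7 : |((l.1 : ℕ) : ℤ) - (l'.1 : ℕ)| < n := by
        rw [abs_lt]; constructor <;> omega
      rw [h4, abs_mul, Nat.abs_cast] at h7
      nlinarith
    have h8 : (l.2.2 : ℕ) = (l'.2.2 : ℕ) := by exact_mod_cast h5
    have h3 : α ^ (l.1 : ℕ) * t ^ (l.2.1 : ℕ) = α ^ (l'.1 : ℕ) * t ^ (l'.2.1 : ℕ) := by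
      simp only [θ] at h1
      rw [h8] at h1
      exact mul_right_cancel₀ (by positivity) h1
    obtain ⟨e1, e2⟩ := indep2 hα ht hα1 ht1 _ _ _ _ h3
    ext <;> assumption
end FT

namespace FT
open Real

lemma log3_le : Real.log 3 ≤ 1.0987 := by
  have := Real.log_three_lt_d9
  linarith

lemma log18_le : Real.log 18 ≤ 2.891 := by
  have h1 := log3_le
  have h2 := Real.log_two_lt_d9
  have : Real.log 18 = Real.log 2 + 2 * Real.log 3 := by
    rw [show (18 : ℝ) = 2 * 3 ^ 2 by norm_num, Real.log_mul (by norm_num) (by norm_num), Real.log_pow]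
    norm_num
  linarith

lemma pow_le_exp {c k y : ℝ} (hc : 0 < c) (n : ℕ) (hk : Real.log c ≤ k) (hy : n * k ≤ y) :
    c ^ n ≤ Real.exp y := by
  rw [← Real.exp_log hc, ← Real.exp_nat_mul]
  apply Real.exp_le_exp.2
  have : (n : ℝ) * Real.log c ≤ n * k := by gcongr
  linarith

lemma exp13 : Real.exp 3.25 ≤ 64 / 2.4 := by
  have h := Real.exp_one_lt_d9
  have h1 : Real.exp 3.25 ^ 4 = Real.exp 1 ^ 13 := by
    rw [← Real.exp_nat_mul, ← Real.exp_nat_mul]; norm_num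
  have h2 : Real.exp 1 ^ 13 ≤ (64 / 2.4) ^ 4 := by
    calc Real.exp 1 ^ 13 ≤ 2.7182818286 ^ 13 := by gcongr
      _ ≤ _ := by norm_num
  by_contra hc
  push Not at hc
  have : (64 / 2.4 : ℝ) ^ 4 < Real.exp 3.25 ^ 4 := by gcongr
  linarith

lemma E1_le {Y W ζ : ℝ} {M : ℕ} (hM : (M : ℝ) = 64 * Y) (hY : 0 < Y) (hW : 0 ≤ ζ * W)
    (hζ : ζ * W ≤ 2.4 * Y) :
    (ζ * W) ^ M * Real.exp (W * ζ) / M.factorial ≤ Real.exp (-(141.6 * Y)) := by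
  have h1 : (M : ℝ) ^ M / M.factorial ≤ Real.exp M :=
    Real.pow_div_factorial_le_exp _ (by positivity) M
  have h2 : ζ * W ≤ Real.exp (-3.25) * M := by
    have : Real.exp (-3.25) ≥ 2.4 / 64 := by
      rw [Real.exp_neg, ge_iff_le, ← inv_div]
      exact inv_anti₀ (Real.exp_pos _) exp13
    rw [hM]; nlinarith
  calc (ζ * W) ^ M * Real.exp (W * ζ) / M.factorial
      ≤ (Real.exp (-3.25) * M) ^ M * Real.exp (2.4 * Y) / M.factorial := by
        have : W * ζ ≤ 2.4 * Y := by linarith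
        gcongr
    _ = Real.exp (-3.25) ^ M * Real.exp (2.4 * Y) * ((M : ℝ) ^ M / M.factorial) := by
        rw [mul_pow]; ring
    _ ≤ Real.exp (-3.25) ^ M * Real.exp (2.4 * Y) * Real.exp M := by gcongr
    _ = Real.exp (-(141.6 * Y)) := by
        rw [← Real.exp_nat_mul, ← Real.exp_add, ← Real.exp_add, hM]
        congr 1; ring

set_option maxHeartbeats 1000000 in
lemma hnum_aux (L T Z Z0 ζ K M n b : ℕ) (δ W G U : ℝ) (hT : 1 ≤ T) (hTL : 32 * T ≤ L)
    (hZ0 : Z0 = 9 * 2 ^ (2 * b)) (hZ : Z0 ≤ Z) (hζ1 : Z ≤ ζ) (hζ2 : ζ < 2 * Z)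
    (hK : K = 2 ^ (b + 6) * L) (hM : M = 64 * L * Z) (hb : 9 ≤ b)
    (hN : ((L * (L * T) : ℕ) : ℝ) ≤ Real.exp (2 ^ b)) (h4Z : (4 * Z : ℝ) ≤ Real.exp (0.7 * 2 ^ b))
    (hU : 46 * 2 ^ b * (L * Z) ≤ U) (hn : 2 * Real.log n ≤ 2 ^ b) (hn0 : 0 < n)
    (hδ : δ = T * Real.exp (-U)) (hW : W = 1.2 * L)
    (hG : G = ((L * (L * T) : ℕ) : ℝ) * (((L * (L * T) : ℕ) : ℝ) * (((n : ℝ) ^ 2) ^ K * 18 ^ (L * Z0))) * ((n : ℝ) ^ 2) ^ K) :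
    δ * ζ ≤ 1 ∧
      3 ^ (L * ζ) * (6 * (G * 18 ^ (L * ζ))) ^ 5 * (G *
      ((ζ * W) ^ M * Real.exp (W * ζ) / M.factorial +
        Real.exp (W * ζ) * (2 * (δ * ζ)) * (1 + (2 * ζ) ^ M * Real.exp (W / 2)))) < 1 := by
  set Y : ℝ := L * Z with hY
  have hL : (32 : ℝ) ≤ L := by exact_mod_cast (by omega : 32 ≤ L)
  have hTL' : (32 : ℝ) * T ≤ L := by exact_mod_cast hTL
  have hB : (512 : ℝ) ≤ 2 ^ b := by
    calc (512 : ℝ) = 2 ^ 9 := by norm_num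
      _ ≤ 2 ^ b := pow_le_pow_right₀ (by norm_num) hb
  set B : ℝ := 2 ^ b with hBdef
  have hZ0r : (Z0 : ℝ) = 9 * B ^ 2 := by rw [hZ0, hBdef, ← pow_mul]; push_cast; ring
  have hZr : (Z0 : ℝ) ≤ Z := by exact_mod_cast hZ
  have hZB : 9 * B ^ 2 ≤ Z := by linarith
  have hZpos : (0 : ℝ) < Z := by nlinarith
  have hYB : 32 * (9 * B ^ 2) ≤ Y := by
    rw [hY]; exact mul_le_mul hL hZB (by positivity) (by positivity)
  have hYB1 : B * 100000 ≤ Y := by nlinarith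
  have hY0 : 0 < Y := by nlinarith
  have hζr : (ζ : ℝ) ≤ 2 * Z := by exact_mod_cast hζ2.le
  have hζ0 : (0 : ℝ) ≤ ζ := by positivity
  have hLζ : (L : ℝ) * ζ ≤ 2 * Y := by
    rw [hY]; nlinarith
  have hLZ0 : (L : ℝ) * Z0 ≤ Y := by rw [hY]; gcongr
  have hLY : (L : ℝ) ≤ Y := by
    rw [hY]; have : (1 : ℝ) ≤ Z := by nlinarith
    nlinarith
  have b1 : (3 : ℝ) ^ (L * ζ) ≤ Real.exp (2.2 * Y) :=
    pow_le_exp (by norm_num) _ log3_le (by push_cast; linarith)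
  have b2 : (18 : ℝ) ^ (L * ζ) ≤ Real.exp (5.8 * Y) :=
    pow_le_exp (by norm_num) _ log18_le (by push_cast; linarith)
  have b3 : (18 : ℝ) ^ (L * Z0) ≤ Real.exp (2.9 * Y) :=
    pow_le_exp (by norm_num) _ log18_le (by push_cast; linarith)
  have b4 : ((n : ℝ) ^ 2) ^ K ≤ Real.exp (7.12 * Y) := by
    have hn0' : (0 : ℝ) < n := by exact_mod_cast hn0
    refine pow_le_exp (k := B) (by positivity) _ (by rw [Real.log_pow]; push_cast; linarith) ?_
    rw [hK]
    push_cast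
    rw [pow_add, ← hBdef]
    have h9 : 9 * B ^ 2 * L ≤ Z * L := mul_le_mul_of_nonneg_right hZB (by positivity)
    have h10 : B * 2 ^ 6 * L * B = 64 / 9 * (9 * B ^ 2 * L) := by ring
    rw [h10]
    have : (Z : ℝ) * L = Y := by rw [hY]; ring
    linarith
  have b5 : ((L * (L * T) : ℕ) : ℝ) ≤ Real.exp (0.001 * Y) :=
    hN.trans (Real.exp_le_exp.2 (by linarith))
  have hG0 : 0 ≤ G := by rw [hG]; positivity
  have b6 : G ≤ Real.exp (17.15 * Y) := by
    calc G ≤ Real.exp (0.001 * Y) * (Real.exp (0.001 * Y) * (Real.exp (7.12 * Y) * Real.exp (2.9 * Y))) * Real.exp (7.12 * Y) := by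
          rw [hG]; gcongr
      _ = Real.exp (17.142 * Y) := by
          simp only [← Real.exp_add]; congr 1; ring
      _ ≤ _ := Real.exp_le_exp.2 (by linarith)
  have b7 : (6 : ℝ) ≤ Real.exp (0.01 * Y) := by
    have := Real.add_one_le_exp (0.01 * Y)
    linarith
  have b8 : (3 : ℝ) ^ (L * ζ) * (6 * (G * 18 ^ (L * ζ))) ^ 5 * G ≤ Real.exp (134.2 * Y) := by
    calc _ ≤ Real.exp (2.2 * Y) * (Real.exp (0.01 * Y) * (Real.exp (17.15 * Y) * Real.exp (5.8 * Y))) ^ 5 * Real.exp (17.15 * Y) := by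
          gcongr
      _ = Real.exp (134.15 * Y) := by
          simp only [← Real.exp_add]
          rw [← Real.exp_nat_mul]
          simp only [← Real.exp_add]; congr 1; push_cast; ring
      _ ≤ _ := Real.exp_le_exp.2 (by linarith)
  have hMr : (M : ℝ) = 64 * Y := by rw [hM, hY]; push_cast; ring
  have hWζ : ζ * W ≤ 2.4 * Y := by rw [hW]; linarith
  have hW0 : 0 ≤ W := by rw [hW]; positivity
  have e1 := E1_le hMr hY0 (by positivity) hWζ
  have hTζ : 2 * (T * ζ) ≤ Real.exp Y := by
    have h1 : 2 * ((T : ℝ) * ζ) ≤ Y := by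
      rw [hY]
      have : (T : ℝ) * ζ ≤ T * (2 * Z) := by gcongr
      nlinarith
    have := Real.add_one_le_exp Y
    linarith
  have hδζ : 2 * (δ * ζ) ≤ Real.exp (Y - U) := by
    rw [hδ, sub_eq_add_neg, Real.exp_add]
    have := mul_le_mul_of_nonneg_right hTζ (Real.exp_pos (-U)).le
    linarith
  have hBY : 512 * Y ≤ B * Y := by gcongr
  have hU' : 46 * (B * Y) ≤ U := by linarith
  have hδ0 : 0 ≤ δ := by rw [hδ]; positivity
  have hδζ0 : 0 ≤ δ * ζ := by positivity
  refine ⟨?_, ?_⟩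
  · have h1 : Real.exp (Y - U) ≤ 1 := Real.exp_le_one_iff.2 (by linarith)
    linarith
  have e2 : Real.exp (W * ζ) * (2 * (δ * ζ)) * (1 + (2 * ζ) ^ M * Real.exp (W / 2)) ≤
      Real.exp (-(141.6 * Y)) := by
    have q1 : (2 * ζ : ℝ) ^ M ≤ Real.exp (44.8 * (B * Y)) := by
      calc (2 * ζ : ℝ) ^ M ≤ (Real.exp (0.7 * B)) ^ M := by
            gcongr; linarith
        _ = Real.exp (44.8 * (B * Y)) := by
            rw [← Real.exp_nat_mul, hMr]; congr 1; ring
    have q2 : 1 + (2 * ζ : ℝ) ^ M * Real.exp (W / 2) ≤ Real.exp (44.8 * (B * Y) + 2 * Y) := by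
      have h1 : (2 * ζ : ℝ) ^ M * Real.exp (W / 2) ≤ Real.exp (44.8 * (B * Y) + 0.6 * Y) := by
        rw [Real.exp_add]
        have : W / 2 ≤ 0.6 * Y := by rw [hW]; linarith
        gcongr
      have h2 : (1 : ℝ) ≤ Real.exp (44.8 * (B * Y) + 0.6 * Y) := Real.one_le_exp (by positivity)
      have h3 : (2 : ℝ) ≤ Real.exp (1.4 * Y) := by
        have := Real.add_one_le_exp (1.4 * Y)
        linarith
      calc _ ≤ 2 * Real.exp (44.8 * (B * Y) + 0.6 * Y) := by linarith
        _ ≤ Real.exp (1.4 * Y) * Real.exp (44.8 * (B * Y) + 0.6 * Y) := by gcongr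
        _ = _ := by rw [← Real.exp_add]; congr 1; ring
    calc _ ≤ Real.exp (2.4 * Y) * Real.exp (Y - U) * Real.exp (44.8 * (B * Y) + 2 * Y) := by
          have : W * ζ ≤ 2.4 * Y := by linarith
          gcongr
      _ = Real.exp (5.4 * Y + 44.8 * (B * Y) - U) := by
          simp only [← Real.exp_add]; congr 1; ring
      _ ≤ _ := Real.exp_le_exp.2 (by linarith)
  have hnonneg : 0 ≤ (3 : ℝ) ^ (L * ζ) * (6 * (G * 18 ^ (L * ζ))) ^ 5 * G := by positivity
  calc _ = (3 : ℝ) ^ (L * ζ) * (6 * (G * 18 ^ (L * ζ))) ^ 5 * G * ((ζ * W) ^ M * Real.exp (W * ζ) / M.factorial +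
        Real.exp (W * ζ) * (2 * (δ * ζ)) * (1 + (2 * ζ) ^ M * Real.exp (W / 2))) := by ring
    _ ≤ Real.exp (134.2 * Y) * (Real.exp (-(141.6 * Y)) + Real.exp (-(141.6 * Y))) := by
        gcongr
    _ = 2 * Real.exp (-(7.4 * Y)) := by
        rw [← two_mul, mul_left_comm, ← Real.exp_add]; congr 2; ring
    _ < 1 := by
        have h1 : Real.exp (-(7.4 * Y)) ≤ Real.exp (-1) := Real.exp_le_exp.2 (by linarith)
        have h2 : Real.exp (-1) < 0.3678794412 := Real.exp_neg_one_lt_d9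
        linarith
end FT

namespace FT
open Real

lemma logα_le {α : ℝ} (h0 : 1 < α) (h : α ≤ 1.62) : Real.log α ≤ 0.4853 := by
  have h2 := Real.log_two_lt_d9
  have h1 : Real.log (α ^ 10) ≤ Real.log (2 ^ 7) := by
    apply Real.log_le_log (by positivity)
    calc α ^ 10 ≤ 1.62 ^ 10 := by gcongr
      _ ≤ _ := by norm_num
  rw [Real.log_pow, Real.log_pow] at h1
  push_cast at h1
  linarith

lemma logt_le {t : ℝ} (h0 : 1 < t) (h : t ≤ 1.84) : Real.log t ≤ 0.6162 := by
  have h2 := Real.log_two_lt_d9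
  have h1 : Real.log (t ^ 9) ≤ Real.log (2 ^ 8) := by
    apply Real.log_le_log (by positivity)
    calc t ^ 9 ≤ 1.84 ^ 9 := by gcongr
      _ ≤ _ := by norm_num
  rw [Real.log_pow, Real.log_pow] at h1
  push_cast at h1
  linarith

lemma two_pow_le_exp (k : ℕ) {y : ℝ} (h : 0.6931471808 * k ≤ y) : (2 : ℝ) ^ k ≤ Real.exp y := by
  refine pow_le_exp (k := 0.6931471808) (by norm_num) _ Real.log_two_lt_d9.le (by linarith)

theorem baker {α t : ℝ} (hα : α ^ 2 = α + 1) (ht : t ^ 3 = t ^ 2 + t + 1) (hα1 : 1 < α)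
    (ht1 : 1 < t) (hα2 : α ≤ 1.62) (ht2 : t ≤ 1.84) {u v H : ℝ} (hu : HasLen α t u H)
    (hv : HasLen α t v H) (hu0 : 0 < u) (hv0 : 0 < v) (a b n m : ℕ) (ha : 5 ≤ a) (hb : 9 ≤ b)
    (hab : 2 * a + 60 + 12 * b ≤ 2 ^ b) (hn : 2 * Real.log n ≤ 2 ^ b) (hmn : m ≤ n)
    (hLn : 2 ^ (a + 19 + 4 * b) ≤ n) (hH0 : 1 ≤ 18 * H) (hH : 18 * H ≤ 3 ^ (2 ^ a))
    (hγ : |Real.log (u / v)| ≤ 2) :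
    Real.exp (-2 ^ (81 + 3 * a + 17 * b)) ≤ |Real.log (u / v) + n * Real.log α - m * Real.log t| := by
  by_contra hcon
  push Not at hcon
  obtain ⟨T, hT⟩ : ∃ T : ℕ, T = 2 ^ (19 + 4 * b) := ⟨_, rfl⟩
  obtain ⟨L, hL⟩ : ∃ L : ℕ, L = 2 ^ (a + 19 + 4 * b) := ⟨_, rfl⟩
  obtain ⟨U, hU⟩ : ∃ U : ℝ, U = 2 ^ (81 + 3 * a + 17 * b) := ⟨_, rfl⟩
  rw [← hU] at hcon
  have hLT : L = 2 ^ a * T := by rw [hL, hT, ← pow_add]; congr 1; ring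
  have hT1 : 1 ≤ T := by rw [hT]; exact Nat.one_le_two_pow
  have h32 : 32 ≤ 2 ^ a := by
    calc 32 = 2 ^ 5 := by norm_num
      _ ≤ 2 ^ a := Nat.pow_le_pow_right (by norm_num) ha
  have hTL : 32 * T ≤ L := by rw [hLT]; gcongr
  have hLn' : L ≤ n := by rw [hL]; exact hLn
  have hLr : (32 : ℝ) * T ≤ L := by exact_mod_cast hTL
  have hLnr : (L : ℝ) ≤ n := by exact_mod_cast hLn'
  have hT1r : (1 : ℝ) ≤ T := by exact_mod_cast hT1
  have hn1 : (1 : ℝ) ≤ n := by linarith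
  have hmr : (m : ℝ) ≤ n := by exact_mod_cast hmn
  have hX1 : (L : ℝ) + n * T ≤ (n : ℝ) ^ 2 := by nlinarith
  have hX2 : (L : ℝ) + m * T ≤ (n : ℝ) ^ 2 := by nlinarith
  have hL0 : (0 : ℝ) ≤ L := by positivity
  have hU0 : 0 ≤ U := by rw [hU]; positivity
  have hN : L * (L * T) = 2 ^ (2 * a + 57 + 12 * b) := by
    rw [hL, hT, ← pow_add, ← pow_add]; congr 1; ring
  have habr : (2 * a + 60 + 12 * b : ℝ) ≤ 2 ^ b := by exact_mod_cast hab
  refine baker_core hα ht hα1 ht1 hα2 ht2 hu hv hu0 hv0 n m L T (2 ^ (b + 6) * L) (64 * L)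
    (9 * 2 ^ (2 * b)) (2 * a + 54 + 10 * b) (2 ^ a) ((n : ℝ) ^ 2) (T * Real.exp (-U)) (1.2 * L)
    hH0 hH hLT.ge hLn' hX1 hX2 (one_le_pow₀ hn1) (Nat.mul_pos (by positivity) (by omega)) (by positivity) hT1 ?_ ?_ ?_
    (by positivity) ?_ ?_ _ rfl ?_
  · calc 12 * (2 ^ (b + 6) * L * (2 ^ (b + 6) * L * (9 * 2 ^ (2 * b))))
        = (L * L) * (108 * 2 ^ (12 + 4 * b)) := by ring
      _ ≤ (L * L) * (2 ^ 7 * 2 ^ (12 + 4 * b)) := by gcongr; norm_num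
      _ = L * (L * T) := by rw [hT]; ring
  · have : 64 * T ≤ 64 * L := by omega
    calc (2 * a + 54 + 10 * b) * (64 * L) + T ≤ (2 * a + 54 + 10 * b) * (64 * L) + 64 * L := by omega
      _ = (2 * a + 54 + 10 * b + 1) * (64 * L) := by ring
      _ ≤ 2 ^ b * (64 * L) := by gcongr; omega
      _ = _ := by ring
  · rw [hN]
    calc 2 ^ (2 * a + 57 + 12 * b) = 2 ^ (2 * a + 54 + 10 * b) * (8 * 2 ^ (2 * b)) := by ring
      _ ≤ _ := by gcongr; norm_num
  · gcongr
  · have e1 := logα_le hα1 hα2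
    have e2 := logt_le ht1 ht2
    have e3 : Real.exp (-U) ≤ 1 := Real.exp_le_one_iff.2 (by linarith)
    have f1 : L * Real.log α ≤ L * 0.4853 := by gcongr
    have f2 : L * Real.log t ≤ L * 0.6162 := by gcongr
    have f3 : T * |Real.log (u / v)| ≤ T * 2 := by gcongr
    have f4 : T * Real.exp (-U) ≤ T * 1 := by gcongr
    linarith
  · intro j hj ζ hζ1 hζ2
    set Z := 2 ^ j * (9 * 2 ^ (2 * b)) with hZ
    have hZr : (Z : ℝ) = 9 * 2 ^ (j + 2 * b) := by rw [hZ]; push_cast; ring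
    have hZle : (Z : ℝ) ≤ 9 * 2 ^ (2 * a + 53 + 12 * b) := by
      rw [hZr]
      have : (2 : ℝ) ^ (j + 2 * b) ≤ 2 ^ (2 * a + 53 + 12 * b) :=
        pow_le_pow_right₀ (by norm_num) (by omega)
      linarith
    have hZζ : ζ < 2 * Z := by
      rw [hZ]; calc ζ < _ := hζ2
        _ = _ := by ring
    refine hnum_aux L T Z (9 * 2 ^ (2 * b)) ζ _ _ n b _ _ _ U hT1 hTL rfl
      ?_ hζ1 hZζ rfl rfl hb ?_ ?_ ?_ hn (by omega) rfl rfl rfl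
    · rw [hZ]; exact Nat.le_mul_of_pos_left _ (by positivity)
    · rw [hN]; push_cast
      refine two_pow_le_exp _ ?_
      push_cast
      linarith [show (0 : ℝ) ≤ a by positivity, show (0 : ℝ) ≤ b by positivity]
    · calc (4 * Z : ℝ) ≤ 4 * (9 * 2 ^ (2 * a + 53 + 12 * b)) := by gcongr
        _ ≤ 2 ^ 6 * 2 ^ (2 * a + 53 + 12 * b) := by
            have : (0 : ℝ) ≤ 2 ^ (2 * a + 53 + 12 * b) := by positivity
            linarith
        _ = 2 ^ (2 * a + 59 + 12 * b) := by ring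
        _ ≤ _ := by
            refine two_pow_le_exp _ ?_
            push_cast
            linarith [show (0 : ℝ) ≤ a by positivity, show (0 : ℝ) ≤ b by positivity]
    · calc (46 * 2 ^ b * (L * Z) : ℝ) ≤ 46 * 2 ^ b * (L * (9 * 2 ^ (2 * a + 53 + 12 * b))) := by gcongr
        _ = 414 * 2 ^ (72 + 3 * a + 17 * b) := by rw [hL]; push_cast; ring
        _ ≤ 2 ^ 9 * 2 ^ (72 + 3 * a + 17 * b) := by gcongr; norm_num
        _ = U := by rw [hU]; ring
end FT

namespace FT
open Real

/-- numeric data about the two bases -/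
structure Ctx (α t : ℝ) : Prop where
  hα : α ^ 2 = α + 1
  ht : t ^ 3 = t ^ 2 + t + 1
  α1 : 1.618 ≤ α
  α2 : α ≤ 1.6181
  t1 : 1.839 ≤ t
  t2 : t ≤ 1.8394

/-- the constant `log γ₁` -/
noncomputable def mu (α t : ℝ) : ℝ := Real.log ((3 * t ^ 2 - 2 * t - 1) / ((2 * α - 1) * t))

lemma Ctx.l1 {α t : ℝ} (h : Ctx α t) : 0.479 ≤ Real.log α := by
  have h2 := Real.log_two_gt_d9
  have h0 := h.α1
  have h1 : Real.log (2 ^ 9) ≤ Real.log (α ^ 13) := by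
    apply Real.log_le_log (by positivity)
    calc (2 : ℝ) ^ 9 ≤ 1.618 ^ 13 := by norm_num
      _ ≤ _ := by gcongr
  rw [Real.log_pow, Real.log_pow] at h1
  push_cast at h1
  linarith

lemma Ctx.l2 {α t : ℝ} (h : Ctx α t) : 0.6 ≤ Real.log t := by
  have h2 := Real.log_two_gt_d9
  have h0 := h.t1
  have h1 : Real.log (2 ^ 7) ≤ Real.log (t ^ 8) := by
    apply Real.log_le_log (by positivity)
    calc (2 : ℝ) ^ 7 ≤ 1.839 ^ 8 := by norm_num
      _ ≤ _ := by gcongr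
  rw [Real.log_pow, Real.log_pow] at h1
  push_cast at h1
  linarith

lemma Ctx.c_pow {α t : ℝ} (h : Ctx α t) (a : ℕ) : HasLen α t ((α - 1) ^ a) (3 ^ a) := by
  induction a with
  | zero => simpa using HasLen.one
  | succ k ih =>
    rw [pow_succ']
    refine (HasLen.mulαinv h.hα ih).mono ?_
    rw [pow_succ]
    have : (0 : ℝ) ≤ 3 ^ k := by positivity
    linarith

lemma Ctx.s_pow {α t : ℝ} (h : Ctx α t) (a : ℕ) : HasLen α t ((t ^ 2 - t - 1) ^ a) (3 ^ a) := by
  induction a with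
  | zero => simpa using HasLen.one
  | succ k ih =>
    rw [pow_succ' (t ^ 2 - t - 1), pow_succ' (3 : ℝ)]
    exact (HasLen.multinv h.ht ih)

lemma abs_log_le_two {x : ℝ} (h1 : 0.3 ≤ x) (h2 : x ≤ 4) : |Real.log x| ≤ 2 := by
  have h4 : Real.log 4 = 2 * Real.log 2 := by
    rw [show (4 : ℝ) = 2 ^ 2 by norm_num, Real.log_pow]; norm_num
  have hl := Real.log_two_lt_d9
  rw [abs_le]
  constructor
  · have : Real.log (1 / 4) ≤ Real.log x := Real.log_le_log (by norm_num) (by linarith)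
    rw [Real.log_div (by norm_num) (by norm_num), Real.log_one] at this
    linarith
  · have : Real.log x ≤ Real.log 4 := Real.log_le_log (by linarith) h2
    linarith

lemma Ctx.fpos {α t : ℝ} (h : Ctx α t) :
    5.46 ≤ 3 * t ^ 2 - 2 * t - 1 ∧ 3 * t ^ 2 - 2 * t - 1 ≤ 5.48 ∧ 4.11 ≤ (2 * α - 1) * t ∧
      (2 * α - 1) * t ≤ 4.12 := by
  obtain ⟨hα, ht, a1, a2, t1, t2⟩ := h
  refine ⟨by nlinarith, by nlinarith, by nlinarith, by nlinarith⟩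

lemma baker_ft {α t : ℝ} (h : Ctx α t) {x y : ℝ} (k a b n m : ℕ) (hk : k + 7 ≤ 2 ^ a)
    (hx : HasLen α t x (3 ^ k)) (hy : HasLen α t y (3 ^ k)) (hx0 : 0 ≤ x) (hx1 : x ≤ 0.62)
    (hy0 : 0 ≤ y) (hy1 : y ≤ 0.55) (ha : 5 ≤ a) (hb : 9 ≤ b)
    (hab : 2 * a + 60 + 12 * b ≤ 2 ^ b) (hn : 2 * Real.log n ≤ 2 ^ b) (hmn : m ≤ n)
    (hLn : 2 ^ (a + 19 + 4 * b) ≤ n) :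
    Real.exp (-2 ^ (81 + 3 * a + 17 * b)) ≤
      |n * Real.log α - m * Real.log t + mu α t + Real.log (1 - x) - Real.log (1 - y)| := by
  obtain ⟨f1, f2, f3, f4⟩ := h.fpos
  have a1 := h.α1
  have a2 := h.α2
  have t1 := h.t1
  have t2 := h.t2
  set f := 3 * t ^ 2 - 2 * t - 1 with hf
  set d := (2 * α - 1) * t with hd
  set u := (1 - x) * f with hu
  set v := (1 - y) * d with hv
  have e : Real.log (u / v) = mu α t + Real.log (1 - x) - Real.log (1 - y) := by
    have : u / v = f / d * ((1 - x) / (1 - y)) := by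
      rw [hu, hv]
      have : d ≠ 0 := by linarith
      have : 1 - y ≠ 0 := by linarith
      field_simp
    rw [this, Real.log_mul (div_pos (by linarith) (by linarith)).ne'
      (div_pos (by linarith) (by linarith)).ne', Real.log_div (x := 1 - x) (by linarith) (by linarith), mu]
    ring
  have h3 : (1 : ℝ) ≤ 3 ^ k := one_le_pow₀ (by norm_num)
  have hux : HasLen α t u (68 * 3 ^ k) := by
    have h1 := HasLen.sub (HasLen.one (α := α) (t := t)) hx
    have h2 := HasLen.mult h.ht h1
    have h3 := HasLen.mult h.ht h2
    have h4 := ((h3.smul 3).sub (h2.smul 2)).sub h1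
    have : u = ((3 : ℤ) : ℝ) * (t * (t * (1 - x))) - ((2 : ℤ) : ℝ) * (t * (1 - x)) - (1 - x) := by
      rw [hu, hf]; push_cast; ring
    rw [this]
    refine h4.mono ?_
    norm_num
    linarith
  have hvy : HasLen α t v (68 * 3 ^ k) := by
    have h1 := HasLen.sub (HasLen.one (α := α) (t := t)) hy
    have h2 := HasLen.mult h.ht h1
    have h3 := HasLen.mulα h.hα h2
    have h4 := ((h3.smul 2).sub h2)
    have : v = ((2 : ℤ) : ℝ) * (α * (t * (1 - y))) - (t * (1 - y)) := by
      rw [hv, hd]; push_cast; ring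
    rw [this]
    refine h4.mono ?_
    norm_num
    linarith
  have hu0 : 2 ≤ u ∧ u ≤ 5.48 := by rw [hu]; constructor <;> nlinarith
  have hv0 : 1.84 ≤ v ∧ v ≤ 4.12 := by rw [hv]; constructor <;> nlinarith
  have := baker h.hα h.ht (by linarith) (by linarith) (by linarith) (by linarith) hux hvy
    (by linarith) (by linarith) a b n m ha hb hab hn hmn hLn (by linarith) ?_ ?_
  · rw [e] at this
    convert this using 2
    ring
  · calc 18 * (68 * 3 ^ k) ≤ 3 ^ 7 * (3 : ℝ) ^ k := by
          have : (0 : ℝ) ≤ 3 ^ k := by positivity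
          linarith
      _ = (3 : ℝ) ^ (k + 7) := by rw [pow_add]; ring
      _ ≤ _ := pow_le_pow_right₀ (by norm_num) hk
  · apply abs_log_le_two
    · rw [le_div_iff₀ (by linarith)]; linarith
    · rw [div_le_iff₀ (by linarith)]; linarith
end FT

namespace FT
open Real

structure Sol (α t : ℝ) (n m a b : ℕ) : Prop where
  a1 : 1 ≤ a
  b1 : 1 ≤ b
  an : a ≤ n
  bm : b ≤ m
  mn : m ≤ n
  ml : m * Real.log t ≤ n * Real.log α + 2
  main : |n * Real.log α - m * Real.log t + mu α t + Real.log (1 - (α - 1) ^ a) -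
    Real.log (1 - (t ^ 2 - t - 1) ^ b)| ≤ 12 * Real.exp (-(n * Real.log α))

lemma Ctx.c_eq {α t : ℝ} (h : Ctx α t) (a : ℕ) : (α - 1) ^ a = Real.exp (-(a * Real.log α)) := by
  have h0 := h.α1
  have e : (α - 1) * α = 1 := by linarith [h.hα, sq α]
  have : α - 1 = Real.exp (-Real.log α) := by
    rw [Real.exp_neg, Real.exp_log (by linarith)]
    exact eq_inv_of_mul_eq_one_left e
  rw [this, ← Real.exp_nat_mul]; congr 1; ring

lemma Ctx.s_eq {α t : ℝ} (h : Ctx α t) (b : ℕ) :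
    (t ^ 2 - t - 1) ^ b = Real.exp (-(b * Real.log t)) := by
  have h0 := h.t1
  have e : (t ^ 2 - t - 1) * t = 1 := by linarith [h.ht]
  have : t ^ 2 - t - 1 = Real.exp (-Real.log t) := by
    rw [Real.exp_neg, Real.exp_log (by linarith)]
    exact eq_inv_of_mul_eq_one_left e
  rw [this, ← Real.exp_nat_mul]; congr 1; ring

lemma neg_log_le {x : ℝ} (h0 : 0 ≤ x) (h1 : x ≤ 0.62) :
    0 ≤ -Real.log (1 - x) ∧ -Real.log (1 - x) ≤ 2.7 * x := by
  have hp : 0 < 1 - x := by linarith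
  constructor
  · have := Real.log_nonpos hp.le (by linarith); linarith
  · have := Real.one_sub_inv_le_log_of_pos hp
    have h2 : (1 - x)⁻¹ ≤ 1 + 2.7 * x := by
      rw [inv_le_iff_one_le_mul₀ hp]
      nlinarith
    linarith

lemma Ctx.cb {α t : ℝ} (h : Ctx α t) {a : ℕ} (ha : 1 ≤ a) :
    0 < (α - 1) ^ a ∧ (α - 1) ^ a ≤ 0.62 := by
  have h1 := h.α1
  have h2 := h.α2
  have hp : 0 < α - 1 := by linarith
  refine ⟨by positivity, ?_⟩
  have : (α - 1) ^ a ≤ (α - 1) ^ 1 := pow_le_pow_of_le_one hp.le (by linarith) ha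
  linarith [pow_one (α - 1)]

lemma Ctx.s1 {α t : ℝ} (h : Ctx α t) : 0.5 ≤ t ^ 2 - t - 1 ∧ t ^ 2 - t - 1 ≤ 0.55 := by
  have h1 := h.t1
  have h2 := h.t2
  constructor <;> nlinarith

lemma Ctx.sb {α t : ℝ} (h : Ctx α t) {b : ℕ} (hb : 1 ≤ b) :
    0 < (t ^ 2 - t - 1) ^ b ∧ (t ^ 2 - t - 1) ^ b ≤ 0.55 := by
  obtain ⟨h1, h2⟩ := h.s1
  have hp : 0 < t ^ 2 - t - 1 := by linarith
  refine ⟨by positivity, ?_⟩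
  have : (t ^ 2 - t - 1) ^ b ≤ (t ^ 2 - t - 1) ^ 1 := pow_le_pow_of_le_one hp.le (by linarith) hb
  linarith [pow_one (t ^ 2 - t - 1)]

lemma le_of_exp_le {U R : ℝ} (h : Real.exp (-U) ≤ 100 * Real.exp (-R)) : R ≤ U + 5 := by
  have h5 : (100 : ℝ) ≤ Real.exp 5 := by
    have h1 := Real.exp_one_gt_d9
    have : Real.exp 5 = Real.exp 1 ^ 5 := by rw [← Real.exp_nat_mul]; norm_num
    rw [this]
    calc (100 : ℝ) ≤ 2.7 ^ 5 := by norm_num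
      _ ≤ _ := by gcongr; linarith
  have : Real.exp (-U) ≤ Real.exp (5 - R) := by
    rw [sub_eq_add_neg, Real.exp_add]
    have := Real.exp_pos (-R)
    nlinarith
  have := Real.exp_le_exp.1 this
  linarith

lemma exp2 : Real.exp 2 ≤ 7.4 := by
  have h1 := Real.exp_one_lt_d9
  have : Real.exp 2 = Real.exp 1 ^ 2 := by rw [← Real.exp_nat_mul]; norm_num
  rw [this]
  calc Real.exp 1 ^ 2 ≤ 2.7182818286 ^ 2 := by gcongr
    _ ≤ _ := by norm_num

section
variable {α t : ℝ} {n m a b : ℕ} (h : Ctx α t) (S : Sol α t n m a b)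
include h S

lemma Sol.en : Real.exp (-(n * Real.log α)) ≤ Real.exp (-(a * Real.log α)) := by
  have h1 := h.l1
  have : (a : ℝ) ≤ n := by exact_mod_cast S.an
  apply Real.exp_le_exp.2
  nlinarith

lemma Sol.em : Real.exp (-(n * Real.log α)) ≤ 7.4 * Real.exp (-(b * Real.log t)) := by
  have h1 := h.l2
  have h2 : (b : ℝ) ≤ m := by exact_mod_cast S.bm
  have h3 : (b : ℝ) * Real.log t ≤ m * Real.log t := by gcongr
  have := S.ml
  calc Real.exp (-(n * Real.log α)) ≤ Real.exp (2 + -(b * Real.log t)) := by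
        apply Real.exp_le_exp.2; linarith
    _ = Real.exp 2 * Real.exp (-(b * Real.log t)) := Real.exp_add _ _
    _ ≤ _ := by gcongr; exact exp2

lemma Sol.st3 {U : ℝ} (hU : Real.exp (-U) ≤ |n * Real.log α - m * Real.log t + mu α t +
    Real.log (1 - (α - 1) ^ a) - Real.log (1 - (t ^ 2 - t - 1) ^ b)|) : n * Real.log α ≤ U + 5 := by
  apply le_of_exp_le
  have := S.main
  have := Real.exp_pos (-(n * Real.log α))
  linarith

lemma Sol.st2a {U : ℝ} (hU : Real.exp (-U) ≤ |n * Real.log α - m * Real.log t + mu α t +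
    Real.log (1 - (α - 1) ^ a)|) : b * Real.log t ≤ U + 5 := by
  apply le_of_exp_le
  have h1 := S.main
  have h2 := S.em h
  obtain ⟨h3, h4⟩ := h.sb S.b1
  obtain ⟨h5, h6⟩ := neg_log_le h3.le (by linarith)
  rw [h.s_eq] at h6 h5 h1
  refine hU.trans ?_
  rw [abs_le] at h1 ⊢
  constructor <;> linarith

lemma Sol.st2b {U : ℝ} (hU : Real.exp (-U) ≤ |n * Real.log α - m * Real.log t + mu α t -
    Real.log (1 - (t ^ 2 - t - 1) ^ b)|) : a * Real.log α ≤ U + 5 := by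
  apply le_of_exp_le
  have h1 := S.main
  have h2 := S.en h
  obtain ⟨h3, h4⟩ := h.cb S.a1
  obtain ⟨h5, h6⟩ := neg_log_le h3.le (by linarith)
  rw [h.c_eq] at h6 h5 h1
  have := Real.exp_pos (-(a * Real.log α))
  refine hU.trans ?_
  rw [abs_le] at h1 ⊢
  constructor <;> linarith

lemma Sol.st1 {U : ℝ} (hU : Real.exp (-U) ≤ |n * Real.log α - m * Real.log t + mu α t|) :
    a * Real.log α ≤ U + 5 ∨ b * Real.log t ≤ U + 5 := by
  by_contra! hc
  have h1 := S.main
  have h2 := S.en h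
  obtain ⟨h3, h4⟩ := h.sb S.b1
  obtain ⟨h5, h6⟩ := neg_log_le h3.le (by linarith)
  obtain ⟨h3', h4'⟩ := h.cb S.a1
  obtain ⟨h5', h6'⟩ := neg_log_le h3'.le (by linarith)
  rw [h.s_eq] at h6 h5 h1
  rw [h.c_eq] at h6' h5' h1
  have e1 : Real.exp (-(a * Real.log α)) ≤ Real.exp (-min (a * Real.log α) (b * Real.log t)) :=
    Real.exp_le_exp.2 (by linarith [min_le_left (a * Real.log α) (b * Real.log t)])
  have e2 : Real.exp (-(b * Real.log t)) ≤ Real.exp (-min (a * Real.log α) (b * Real.log t)) :=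
    Real.exp_le_exp.2 (by linarith [min_le_right (a * Real.log α) (b * Real.log t)])
  have : min (a * Real.log α) (b * Real.log t) ≤ U + 5 := by
    apply le_of_exp_le
    refine hU.trans ?_
    rw [abs_le] at h1 ⊢
    constructor <;> linarith [Real.exp_pos (-(a * Real.log α)), Real.exp_pos (-(b * Real.log t))]
  exact absurd this (not_le.2 (lt_min hc.1 hc.2))
end

lemma nat_of_log {x : ℕ} {l : ℝ} (k : ℕ) (hk : 10 ≤ k) (hl : 0.479 ≤ l)
    (h : x * l ≤ 2 ^ k + 5) : x + 7 ≤ 2 ^ (k + 2) := by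
  have h1 : (1000 : ℝ) ≤ 2 ^ k := by
    calc (1000 : ℝ) ≤ 2 ^ 10 := by norm_num
      _ ≤ _ := pow_le_pow_right₀ (by norm_num) hk
  have h2 : (x : ℝ) * 0.479 ≤ x * l := by gcongr
  have : (x : ℝ) + 7 ≤ 2 ^ (k + 2) := by rw [pow_add]; norm_num; linarith
  exact_mod_cast this

section
variable {α t : ℝ} {n m a b : ℕ} (h : Ctx α t) (S : Sol α t n m a b)
include h S

lemma Sol.both (k B : ℕ) (hk : 5 ≤ k) (hB : 9 ≤ B) (ha : a + 7 ≤ 2 ^ k) (hb : b + 7 ≤ 2 ^ k)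
    (hkB : 2 * k + 60 + 12 * B ≤ 2 ^ B) (hn : 2 * Real.log n ≤ 2 ^ B) :
    n ≤ 2 ^ (83 + 3 * k + 17 * B) := by
  by_cases hLn : 2 ^ (k + 19 + 4 * B) ≤ n
  · obtain ⟨h3, h4⟩ := h.sb S.b1
    obtain ⟨h3', h4'⟩ := h.cb S.a1
    have h5 : (3 : ℝ) ^ a ≤ 3 ^ max a b := pow_le_pow_right₀ (by norm_num) (le_max_left _ _)
    have h6 : (3 : ℝ) ^ b ≤ 3 ^ max a b := pow_le_pow_right₀ (by norm_num) (le_max_right _ _)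
    have := baker_ft h (max a b) k B n m (by omega) ((h.c_pow a).mono h5) ((h.s_pow b).mono h6)
      h3'.le h4' h3.le h4 hk hB hkB hn S.mn hLn
    have := nat_of_log (81 + 3 * k + 17 * B) (by omega) h.l1 (S.st3 h this)
    have e : 83 + 3 * k + 17 * B = 81 + 3 * k + 17 * B + 2 := by ring
    rw [e]; omega
  · have : 2 ^ (k + 19 + 4 * B) ≤ 2 ^ (83 + 3 * k + 17 * B) :=
      Nat.pow_le_pow_right (by norm_num) (by omega)
    omega

lemma Sol.one (k B : ℕ) (hk : 5 ≤ k) (hB : 9 ≤ B) (hab : a + 7 ≤ 2 ^ k ∨ b + 7 ≤ 2 ^ k)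
    (hkB : 2 * (83 + 3 * k + 17 * B) + 60 + 12 * B ≤ 2 ^ B) (hn : 2 * Real.log n ≤ 2 ^ B) :
    n ≤ 2 ^ (332 + 9 * k + 68 * B) := by
  by_cases hLn : 2 ^ (k + 19 + 4 * B) ≤ n
  · have h2 : a + 7 ≤ 2 ^ (83 + 3 * k + 17 * B) ∧ b + 7 ≤ 2 ^ (83 + 3 * k + 17 * B) := by
      have hle : 2 ^ k ≤ 2 ^ (83 + 3 * k + 17 * B) := Nat.pow_le_pow_right (by norm_num) (by omega)
      have e : 83 + 3 * k + 17 * B = 81 + 3 * k + 17 * B + 2 := by ring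
      rcases hab with ha | hb
      · refine ⟨ha.trans hle, ?_⟩
        obtain ⟨h3', h4'⟩ := h.cb S.a1
        have := baker_ft h a k B n m ha (h.c_pow a) (HasLen.zero.mono (by positivity))
          h3'.le h4' le_rfl (by norm_num) hk hB (by omega) hn S.mn hLn
        simp only [sub_zero, Real.log_one] at this
        rw [e]
        exact nat_of_log (81 + 3 * k + 17 * B) (by omega) (by linarith [h.l2]) (S.st2a h this)
      · refine ⟨?_, hb.trans hle⟩
        obtain ⟨h3', h4'⟩ := h.sb S.b1
        have := baker_ft h b k B n m hb (HasLen.zero.mono (by positivity)) (h.s_pow b)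
          le_rfl (by norm_num) h3'.le h4' hk hB (by omega) hn S.mn hLn
        simp only [sub_zero, Real.log_one, add_zero] at this
        rw [e]
        exact nat_of_log (81 + 3 * k + 17 * B) (by omega) h.l1 (S.st2b h this)
    have := S.both h (83 + 3 * k + 17 * B) B (by omega) hB h2.1 h2.2 hkB hn
    refine this.trans (Nat.pow_le_pow_right (by norm_num) (by omega))
  · have : 2 ^ (k + 19 + 4 * B) ≤ 2 ^ (332 + 9 * k + 68 * B) :=
      Nat.pow_le_pow_right (by norm_num) (by omega)
    omega

lemma Sol.none (B : ℕ) (hB : 9 ≤ B)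
    (hkB : 814 + 148 * B ≤ 2 ^ B) (hn : 2 * Real.log n ≤ 2 ^ B) :
    n ≤ 2 ^ (1214 + 221 * B) := by
  by_cases hLn : 2 ^ (5 + 19 + 4 * B) ≤ n
  · have hz : HasLen α t 0 (3 ^ 0) := HasLen.zero.mono (by positivity)
    have := baker_ft h 0 5 B n m (by norm_num) hz hz le_rfl (by norm_num) le_rfl (by norm_num)
      le_rfl hB (by omega) hn S.mn hLn
    simp only [sub_zero, Real.log_one, add_zero] at this
    have e : 98 + 17 * B = 81 + 3 * 5 + 17 * B + 2 := by ring
    have h2 : a + 7 ≤ 2 ^ (98 + 17 * B) ∨ b + 7 ≤ 2 ^ (98 + 17 * B) := by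
      rw [e]
      rcases S.st1 h this with h1 | h1
      · left; exact nat_of_log _ (by omega) h.l1 h1
      · right; exact nat_of_log _ (by omega) (by linarith [h.l2]) h1
    have := S.one h (98 + 17 * B) B (by omega) hB h2 (by omega) hn
    refine this.trans (Nat.pow_le_pow_right (by norm_num) (by omega))
  · have : 2 ^ (5 + 19 + 4 * B) ≤ 2 ^ (1214 + 221 * B) :=
      Nat.pow_le_pow_right (by norm_num) (by omega)
    omega
end

lemma log_of_pow {n k : ℕ} (hn : 0 < n) (h : n ≤ 2 ^ k) : 2 * Real.log n ≤ 1.3863 * k := by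
  have h1 : Real.log n ≤ Real.log (2 ^ k) :=
    Real.log_le_log (by exact_mod_cast hn) (by exact_mod_cast h)
  rw [Real.log_pow] at h1
  have h2 := Real.log_two_lt_d9
  have : (k : ℝ) * Real.log 2 ≤ k * 0.69315 := by gcongr; linarith
  linarith

lemma Sol.r0 {α t : ℝ} {n m a b : ℕ} (h : Ctx α t) (S : Sol α t n m a b) : n ≤ 2 ^ (1214 + 221 * 13) := by
  have hn0 : 0 < n := lt_of_lt_of_le S.a1 S.an
  have key : ∀ j : ℕ, 2 * Real.log n ≤ 2 ^ (13 + j) → 2 * Real.log n ≤ 2 ^ 13 := by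
    intro j
    induction j with
    | zero => exact id
    | succ j ih =>
      intro hj
      apply ih
      have hp : 614 * j + 12600 ≤ 2 ^ (14 + j) := by
        clear ih hj
        induction j with
        | zero => norm_num
        | succ j ih => rw [show 14 + (j + 1) = 14 + j + 1 by ring, pow_succ]; omega
      have h1 := S.none h (13 + (j + 1)) (by omega) ?_ hj
      · have h2 := log_of_pow hn0 h1
        refine h2.trans ?_
        have h3 : ((614 * j + 12600 : ℕ) : ℝ) ≤ ((2 ^ (14 + j) : ℕ) : ℝ) := Nat.cast_le.2 hp
        push_cast at h3
        have h4 : (2 : ℝ) ^ (14 + j) = 2 * 2 ^ (13 + j) := by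
          rw [show 14 + j = 13 + j + 1 by ring, pow_succ]; ring
        push_cast
        have : (0 : ℝ) ≤ j := Nat.cast_nonneg j
        linarith
      · rw [show 13 + (j + 1) = 14 + j by ring]; omega
  obtain ⟨j, hj⟩ := pow_unbounded_of_one_lt (2 * Real.log n) (by norm_num : (1 : ℝ) < 2)
  have := key j (hj.le.trans (pow_le_pow_right₀ (by norm_num) (by omega)))
  exact S.none h 13 (by norm_num) (by norm_num) this
end FT

namespace FT
open Real

lemma t_bounds {t : ℝ} (h : t ^ 3 - t ^ 2 - t - 1 = 0) : 1.839 ≤ t ∧ t ≤ 1.8394 := by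
  have e : (t - 1) ^ 2 * (t + 1) = 2 := by linear_combination h
  have h1 : 5 / 3 ≤ t := by
    by_contra hc
    push Not at hc
    have : 32 / 27 - (t - 1) ^ 2 * (t + 1) = (t + 1 / 3) ^ 2 * (5 / 3 - t) := by ring
    have : 0 ≤ (t + 1 / 3) ^ 2 * (5 / 3 - t) := mul_nonneg (sq_nonneg _) (by linarith)
    linarith
  constructor
  · by_contra hc
    push Not at hc
    have : (t - 1) ^ 2 * (t + 1) ≤ (1.839 - 1) ^ 2 * (1.839 + 1) := by gcongr; linarith
    norm_num at this
    linarith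
  · by_contra hc
    push Not at hc
    have : (1.8394 - 1) ^ 2 * (1.8394 + 1) ≤ (t - 1) ^ 2 * (t + 1) := by gcongr
    norm_num at this
    linarith

lemma ctx_mk {α t : ℝ} (hα : α = (1 + Real.sqrt 5) / 2) (ht : t ^ 3 - t ^ 2 - t - 1 = 0) :
    Ctx α t := by
  obtain ⟨h1, h2⟩ := t_bounds ht
  have hs := Real.sq_sqrt (show (0 : ℝ) ≤ 5 by norm_num)
  have hs0 := Real.sqrt_nonneg 5
  refine ⟨?_, by linarith, ?_, ?_, h1, h2⟩
  · rw [hα]; linear_combination hs / 4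
  · rw [hα]; have : 2.236 ≤ Real.sqrt 5 := Real.le_sqrt_of_sq_le (by norm_num)
    linarith
  · rw [hα]; have : Real.sqrt 5 ≤ 2.2362 := Real.sqrt_le_iff.2 (by norm_num)
    linarith

lemma fib_approx {α : ℝ} (hα : α = (1 + Real.sqrt 5) / 2) (k : ℕ) :
    |(Nat.fib k : ℝ) - α ^ k / (2 * α - 1)| ≤ 0.45 := by
  have hs0 := Real.sqrt_nonneg 5
  have h5 : 2.236 ≤ Real.sqrt 5 := Real.le_sqrt_of_sq_le (by norm_num)
  have h6 : Real.sqrt 5 ≤ 2.2362 := Real.sqrt_le_iff.2 (by norm_num)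
  have e : 2 * α - 1 = Real.sqrt 5 := by rw [hα]; ring
  have hb := Real.coe_fib_eq k
  have : (Nat.fib k : ℝ) - α ^ k / Real.sqrt 5 = - (Real.goldenConj ^ k / Real.sqrt 5) := by
    rw [hb, hα, Real.goldenRatio]; ring
  rw [e, this, abs_neg, abs_div, abs_of_nonneg hs0, abs_pow]
  have h1 : |Real.goldenConj| ≤ 1 := by
    rw [Real.goldenConj, abs_le]; constructor <;> linarith
  have h2 : |Real.goldenConj| ^ k ≤ 1 := pow_le_one₀ (abs_nonneg _) h1
  rw [div_le_iff₀ (by linarith)]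
  linarith

lemma trib_approx {α t : ℝ} (h : Ctx α t) (k : ℕ) :
    |(trib k : ℝ) - t / (3 * t ^ 2 - 2 * t - 1) * t ^ k| ≤ 0.54 := by
  have ht := h.ht
  have t1 := h.t1
  have t2 := h.t2
  set f := 3 * t ^ 2 - 2 * t - 1 with hf
  have f1 : 5.4677 ≤ f := by rw [hf]; nlinarith
  have f2 : f ≤ 5.4714 := by rw [hf]; nlinarith
  set C := t / f with hC
  have hCf : C * f = t := by rw [hC]; field_simp
  have c1 : 0.336 ≤ C := by rw [hC, le_div_iff₀ (by linarith)]; linarith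
  have c2 : C ≤ 0.3365 := by rw [hC, div_le_iff₀ (by linarith)]; linarith
  set s := t ^ 2 - t - 1 with hs
  have s1 : 0.5429 ≤ s := by rw [hs]; nlinarith
  have s2 : s ≤ 0.544 := by rw [hs]; nlinarith
  have hst : s * t = 1 := by rw [hs]; linarith
  let e : ℕ → ℝ := fun k => (trib k : ℝ) - C * t ^ k
  have hr : ∀ k, (trib (k + 2) : ℝ) + (t - 1) * trib (k + 1) + s * trib k = t ^ (k + 1) := by
    intro k
    induction k with
    | zero => simp [trib]
    | succ k ih =>
      have : trib (k + 1 + 2) = trib (k + 2) + trib (k + 1) + trib k := by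
        rw [show k + 1 + 2 = k + 3 by ring, trib]
      rw [this, pow_succ, ← ih]
      push_cast
      rw [show k + 1 + 1 = k + 2 by ring]
      rw [hs]
      linear_combination (-(trib k : ℝ)) * ht
  have he : ∀ k, e (k + 2) = -(t - 1) * e (k + 1) - s * e k := by
    intro k
    have h1 := hr k
    simp only [e]
    have h2 : C * t ^ k * (t ^ 2 + (t - 1) * t + s) = t ^ (k + 1) := by
      rw [show t ^ 2 + (t - 1) * t + s = f by rw [hs, hf]; ring, mul_right_comm, hCf]; ring
    rw [pow_succ, pow_succ] at *
    linear_combination h1 - h2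
  have hE : ∀ k, e (k + 1) ^ 2 + (t - 1) * e (k + 1) * e k + s * e k ^ 2 ≤ 0.1016 := by
    intro k
    induction k with
    | zero =>
      simp only [e, trib]
      norm_num
      have g1 : 0.617 ≤ C * t := by nlinarith
      have g2 : C * t ≤ 0.6196 := by nlinarith
      have g3 : (1 - C * t) ^ 2 ≤ 0.383 ^ 2 := by gcongr <;> linarith
      have g4 : 0.839 * 0.3804 * 0.336 ≤ (t - 1) * (1 - C * t) * C := by gcongr <;> linarith
      have g5 : s * C ^ 2 ≤ 0.544 * 0.3365 ^ 2 := by gcongr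
      linarith
    | succ k ih =>
      have : e (k + 1 + 1) ^ 2 + (t - 1) * e (k + 1 + 1) * e (k + 1) + s * e (k + 1) ^ 2 =
          s * (e (k + 1) ^ 2 + (t - 1) * e (k + 1) * e k + s * e k ^ 2) := by
        rw [show k + 1 + 1 = k + 2 by ring, he]; ring
      rw [this]
      nlinarith
  have h3 := hE k
  have h4 : (s - (t - 1) ^ 2 / 4) * e k ^ 2 ≤ 0.1016 := by
    have : 0 ≤ (e (k + 1) + (t - 1) / 2 * e k) ^ 2 := sq_nonneg _
    linarith
  have h5 : 0.366 ≤ s - (t - 1) ^ 2 / 4 := by nlinarith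
  have h6 : e k ^ 2 ≤ 0.54 ^ 2 := by nlinarith [sq_nonneg (e k)]
  exact abs_le_of_sq_le_sq h6 (by norm_num)

lemma log_sub_le {x y : ℝ} (hx : 0 < x) (hy : 0 < y) : Real.log x - Real.log y ≤ (x - y) / y := by
  rw [← Real.log_div hx.ne' hy.ne']
  have := Real.log_le_sub_one_of_pos (div_pos hx hy)
  rw [sub_div, div_self hy.ne']; exact this

set_option maxHeartbeats 1000000 in
lemma sol_mk {α t : ℝ} (hα : α = (1 + Real.sqrt 5) / 2) (ht : t ^ 3 - t ^ 2 - t - 1 = 0)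
    {n m n₁ m₁ : ℕ} (hn : n₁ < n) (hm : m₁ < m) (hn20 : 20 ≤ n)
    (h : (Nat.fib n : ℤ) - Nat.fib n₁ = trib m - trib m₁) : Sol α t n m (n - n₁) (m - m₁) := by
  have hc := ctx_mk hα ht
  have a1 := hc.α1
  have a2 := hc.α2
  have t1 := hc.t1
  have t2 := hc.t2
  obtain ⟨f1, f2, f3, f4⟩ := hc.fpos
  have hcb := hc.cb (a := n - n₁) (by omega)
  have hsb := hc.sb (b := m - m₁) (by omega)
  obtain ⟨s1, s2⟩ := hc.s1
  have hca : α ^ n * (α - 1) ^ (n - n₁) = α ^ n₁ := by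
    have e : α * (α - 1) = 1 := by linarith [hc.hα, sq α]
    obtain ⟨d, rfl⟩ := Nat.exists_eq_add_of_le hn.le
    rw [Nat.add_sub_cancel_left, pow_add, mul_assoc, ← mul_pow, e, one_pow, mul_one]
  have hsa : t ^ m * (t ^ 2 - t - 1) ^ (m - m₁) = t ^ m₁ := by
    have e : t * (t ^ 2 - t - 1) = 1 := by linarith [hc.ht]
    obtain ⟨d, rfl⟩ := Nat.exists_eq_add_of_le hm.le
    rw [Nat.add_sub_cancel_left, pow_add, mul_assoc, ← mul_pow, e, one_pow, mul_one]
  set c := (α - 1) ^ (n - n₁) with hcdef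
  set s := (t ^ 2 - t - 1) ^ (m - m₁) with hsdef
  set f := 3 * t ^ 2 - 2 * t - 1 with hf
  have hr : (Nat.fib n : ℝ) - Nat.fib n₁ = trib m - trib m₁ := by exact_mod_cast h
  have b1 := abs_le.1 (fib_approx hα n)
  have b2 := abs_le.1 (fib_approx hα n₁)
  have b3 := abs_le.1 (trib_approx hc m)
  have b4 := abs_le.1 (trib_approx hc m₁)
  rw [← hf] at b3 b4
  rw [← hca] at b2
  rw [← hsa] at b4
  set x := α ^ n / (2 * α - 1) * (1 - c) with hx
  set y := t / f * t ^ m * (1 - s) with hy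
  have ex : x = α ^ n / (2 * α - 1) - α ^ n * c / (2 * α - 1) := by rw [hx]; ring
  have ey : y = t / f * t ^ m - t / f * (t ^ m * s) := by rw [hy]; ring
  have hxy : |x - y| ≤ 2 := by rw [abs_le, ex, ey]; constructor <;> linarith
  have hA : (15000 : ℝ) ≤ α ^ n := by
    calc (15000 : ℝ) ≤ 1.618 ^ 20 := by norm_num
      _ ≤ α ^ 20 := by gcongr
      _ ≤ α ^ n := pow_le_pow_right₀ (by linarith) hn20
  have hc1 : c ≤ 0.6181 := by
    have : c ≤ (α - 1) ^ 1 := pow_le_pow_of_le_one (by linarith) (by linarith) (by omega)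
    linarith [pow_one (α - 1)]
  have hxl : 0.1707 * α ^ n ≤ x := by
    have : 0.447 * α ^ n ≤ α ^ n / (2 * α - 1) := by
      rw [le_div_iff₀ (by linarith)]; nlinarith
    have := mul_le_mul this (show (0.3819 : ℝ) ≤ 1 - c by linarith) (by norm_num) (by linarith)
    rw [hx]; linarith
  have hxy' := abs_le.1 hxy
  have hyl : 0.1705 * α ^ n ≤ y := by linarith
  have hx0 : 0 < x := by linarith
  have hy0 : 0 < y := by linarith
  have hb : ∀ z : ℝ, 0.1705 * α ^ n ≤ z → 2 / z ≤ 12 * Real.exp (-(n * Real.log α)) := by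
    intro z hz
    rw [Real.exp_neg, Real.exp_nat_mul, Real.exp_log (by linarith), div_le_iff₀ (by linarith)]
    have : 12 * (α ^ n)⁻¹ * z ≥ 12 * (α ^ n)⁻¹ * (0.1705 * α ^ n) := by gcongr
    have e : 12 * (α ^ n)⁻¹ * (0.1705 * α ^ n) = 2.046 := by
      have : α ^ n ≠ 0 := by linarith
      field_simp; norm_num
    linarith
  have hΛ : |Real.log x - Real.log y| ≤ 12 * Real.exp (-(n * Real.log α)) := by
    rw [abs_le]
    have k1 := log_sub_le hx0 hy0
    have k2 := log_sub_le hy0 hx0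
    have k3 : (x - y) / y ≤ 2 / y := by gcongr; linarith
    have k4 : (y - x) / x ≤ 2 / x := by gcongr; linarith
    have := hb x (by linarith)
    have := hb y hyl
    constructor <;> linarith
  have hlx : Real.log x = n * Real.log α - Real.log (2 * α - 1) + Real.log (1 - c) := by
    rw [hx, Real.log_mul (div_pos (by linarith) (by linarith)).ne' (by linarith),
      Real.log_div (by linarith) (by linarith), Real.log_pow]
  have htm : 0 < t ^ m := by positivity
  have hly : Real.log y = Real.log t - Real.log f + m * Real.log t + Real.log (1 - s) := by
    rw [hy, Real.log_mul (mul_pos (div_pos (by linarith) (by linarith)) htm).ne' (by linarith),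
      Real.log_mul (div_pos (by linarith) (by linarith)).ne' htm.ne',
      Real.log_div (by linarith) (by linarith), Real.log_pow]
  have hmu : mu α t = Real.log f - (Real.log (2 * α - 1) + Real.log t) := by
    rw [mu, Real.log_div (by linarith) (by linarith), Real.log_mul (by linarith) (by linarith)]
  have hmain : |n * Real.log α - m * Real.log t + mu α t + Real.log (1 - c) -
    Real.log (1 - s)| ≤ 12 * Real.exp (-(n * Real.log α)) := by
    convert hΛ using 2
    rw [hlx, hly, hmu]; ring
  have hexp : 12 * Real.exp (-(n * Real.log α)) ≤ 0.001 := by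
    rw [Real.exp_neg, Real.exp_nat_mul, Real.exp_log (by linarith)]
    have : (α ^ n)⁻¹ ≤ (15000 : ℝ)⁻¹ := inv_anti₀ (by norm_num) hA
    norm_num at this ⊢
    linarith
  have hml : m * Real.log t ≤ n * Real.log α + 2 := by
    have k1 : mu α t ≤ 0.34 := by
      have : f / ((2 * α - 1) * t) ≤ 1.334 := by rw [div_le_iff₀ (by linarith)]; linarith
      have h2 := Real.log_le_sub_one_of_pos (show 0 < f / ((2 * α - 1) * t) from div_pos (by linarith) (by linarith))
      rw [mu]; linarith
    have k2 := (neg_log_le hcb.1.le (by linarith)).1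
    have k3 := (neg_log_le hsb.1.le (by linarith)).2
    have := (abs_le.1 hmain).1
    linarith
  refine ⟨by omega, by omega, by omega, by omega, ?_, hml, hmain⟩
  by_contra hmn
  have h1 := hc.l2
  have h2 := logα_le (by linarith) (show α ≤ 1.62 by linarith)
  have h3 : (n : ℝ) + 1 ≤ m := by exact_mod_cast (by omega : n + 1 ≤ m)
  have h4 : (20 : ℝ) ≤ n := by exact_mod_cast hn20
  have h5 : (m : ℝ) * 0.6 ≤ m * Real.log t := by gcongr
  have h6 : (n : ℝ) * Real.log α ≤ n * 0.4853 := by gcongr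
  linarith
end FT

namespace FT

/-- forces the evaluation of `v` -/
noncomputable def frc {β : Type} (v : ℕ) (k : ℕ → β) : β :=
  Nat.rec (motive := fun _ => β) (k 0) (fun x _ => k (Nat.succ x)) v

lemma frc_eq {β : Type} (v : ℕ) (k : ℕ → β) : frc v k = k v := by cases v <;> rfl

/-- fixed point product -/
noncomputable def pw (P x y : ℕ) : ℕ := Nat.shiftRight (Nat.mul x y) P

/-- fixed point evaluation of the logarithmic series -/
noncomputable def lgl (P Y fuel : ℕ) : ℕ → ℕ → ℕ → ℕ :=
  Nat.rec (motive := fun _ => ℕ → ℕ → ℕ → ℕ) (fun _ _ acc => acc)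
    (fun _ ih Yk k acc => Nat.rec (motive := fun _ => ℕ) acc
      (fun y _ => frc (Nat.succ y) fun Yk => frc (Nat.succ k) fun k' =>
        frc (Nat.add acc (Nat.div Yk k)) fun acc' => ih (pw P Yk Y) k' acc') Yk) fuel

noncomputable def lg (P Y : ℕ) : ℕ := frc Y fun Y => lgl P Y 16000 Y 1 0

/-- fixed point powers -/
noncomputable def pwn (P Y : ℕ) : ℕ → ℕ
  | 0 => Y
  | i + 1 => pw P (pwn P Y i) Y

noncomputable def tst (q L η N : ℕ) : Bool := Nat.ble (Nat.mul 2 η) (Nat.mod (Nat.add (Nat.mul q N) η) L)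

noncomputable def allp (P Y : ℕ) (φ : ℕ → Bool) (fuel : ℕ) : ℕ → Bool :=
  Nat.rec (motive := fun _ => ℕ → Bool) (fun _ => true)
    (fun _ ih Ya => frc Ya fun Ya => frc (lg P Ya) fun S =>
      Bool.rec (motive := fun _ => Bool) false (ih (pw P Ya Y)) (φ S)) fuel

noncomputable def mkl (P Y : ℕ) (ψ : ℕ → ℕ) (cont : List ℕ → Bool) (fuel : ℕ) : ℕ → List ℕ → Bool :=
  Nat.rec (motive := fun _ => ℕ → List ℕ → Bool) (fun _ acc => cont acc)
    (fun _ ih Ya acc => frc Ya fun Ya => frc (ψ (lg P Ya)) fun y =>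
      ih (pw P Ya Y) (y :: acc)) fuel

noncomputable def alll (x L η2 : ℕ) (l : List ℕ) : Bool :=
  List.rec (motive := fun _ => Bool) true (fun y _ ih =>
    Bool.rec (motive := fun _ => Bool) false ih (Nat.ble η2 (Nat.mod (Nat.add x y) L))) l

end FT

namespace FT

lemma frc_eq' : @frc = fun _ v k => k v := by
  funext β v k
  exact frc_eq v k

lemma pw_b (P x y : ℕ) : ((pw P x y : ℕ) : ℝ) * 2 ^ P ≤ x * y ∧ (x * y : ℝ) ≤ (pw P x y + 1) * 2 ^ P := by
  have h : pw P x y = x * y / 2 ^ P := Nat.shiftRight_eq_div_pow _ _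
  rw [h]
  have h2 : 0 < 2 ^ P := by positivity
  constructor
  · exact_mod_cast Nat.div_mul_le_self (x * y) (2 ^ P)
  · have := (Nat.lt_div_mul_add (a := x * y) h2).le
    have h3 : x * y ≤ (x * y / 2 ^ P + 1) * 2 ^ P := by linarith
    exact_mod_cast h3

lemma pow_step {P Y Yk : ℕ} {z y E D : ℝ} (hz0 : 0 ≤ z) (hz : z ≤ 2 / 3) (hy0 : 0 ≤ y) (hy : y ≤ 2 / 3)
    (hY : (Y : ℝ) ≤ y * 2 ^ P) (hY2 : y * 2 ^ P ≤ Y + D) (hk : (Yk : ℝ) ≤ z * 2 ^ P)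
    (hk2 : z * 2 ^ P ≤ Yk + E) (hE : 2 * D + 3 ≤ E) :
    ((pw P Yk Y : ℕ) : ℝ) ≤ z * y * 2 ^ P ∧ z * y * 2 ^ P ≤ (pw P Yk Y : ℕ) + E := by
  obtain ⟨h1, h2⟩ := pw_b P Yk Y
  set w : ℝ := 2 ^ P with hw
  have hwp : 0 < w := by positivity
  have hY0 : (0 : ℝ) ≤ Y := Nat.cast_nonneg _
  have hk0 : (0 : ℝ) ≤ Yk := Nat.cast_nonneg _
  have hD : 0 ≤ D := by linarith
  have hE0 : 0 ≤ E := by linarith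
  constructor
  · refine le_of_mul_le_mul_right (h1.trans ?_) hwp
    calc (Yk : ℝ) * Y ≤ (z * w) * (y * w) := mul_le_mul hk hY hY0 (by positivity)
      _ = _ := by ring
  · refine le_of_mul_le_mul_right ?_ hwp
    have e1 : z * y * w * w ≤ Yk * Y + E * (y * w) + (z * w) * D := by
      have : (z * w) * (y * w) - Yk * Y = (z * w - Yk) * (y * w) + Yk * (y * w - Y) := by ring
      have a1 : (z * w - Yk) * (y * w) ≤ E * (y * w) :=
        mul_le_mul_of_nonneg_right (by linarith) (by positivity)
      have a2 : Yk * (y * w - Y) ≤ (z * w) * D :=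
        mul_le_mul hk (by linarith) (by linarith) (by positivity)
      have : z * y * w * w = (z * w) * (y * w) := by ring
      linarith
    have a3 : E * (y * w) ≤ E * (2 / 3 * w) := by gcongr
    have a4 : (z * w) * D ≤ (2 / 3 * w) * D := by gcongr
    have a5 : w * (2 * D + 3) ≤ w * E := by gcongr
    nlinarith

lemma tail_b {y : ℝ} (hy0 : 0 ≤ y) (hy : y ≤ 2 / 3) (i : ℕ) :
    |-Real.log (1 - y) - ∑ j ∈ Finset.range i, y ^ (j + 1) / (j + 1)| ≤ 3 * y ^ (i + 1) := by
  have h := Real.abs_log_sub_add_sum_range_le (x := y) (by rw [abs_of_nonneg hy0]; linarith) i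
  rw [abs_of_nonneg hy0] at h
  have e : -Real.log (1 - y) - ∑ j ∈ Finset.range i, y ^ (j + 1) / (j + 1)
    = -(∑ j ∈ Finset.range i, y ^ (j + 1) / (j + 1) + Real.log (1 - y)) := by ring
  rw [e, abs_neg]
  refine h.trans ?_
  rw [div_le_iff₀ (by linarith)]
  have : 0 ≤ y ^ (i + 1) := by positivity
  nlinarith

lemma lgl_spec {P Y : ℕ} {y E D : ℝ} (hy0 : 0 ≤ y) (hy : y ≤ 2 / 3)
    (hY : (Y : ℝ) ≤ y * 2 ^ P) (hY2 : y * 2 ^ P ≤ Y + D) (hD : 0 ≤ D) (hE : 2 * D + 3 ≤ E) :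
    ∀ (f i Yk acc : ℕ), (Yk : ℝ) ≤ y ^ (i + 1) * 2 ^ P → y ^ (i + 1) * 2 ^ P ≤ Yk + E →
    |(lgl P Y f Yk (i + 1) acc : ℝ) - acc -
      2 ^ P * (-Real.log (1 - y) - ∑ j ∈ Finset.range i, y ^ (j + 1) / (j + 1))|
      ≤ f * (E + 1) + 3 * E + 3 * (y ^ (i + 1 + f) * 2 ^ P) := by
  intro f
  have hw : (0 : ℝ) < 2 ^ P := by positivity
  have hE0 : 0 ≤ E := by linarith
  induction f with
  | zero =>
    intro i Yk acc h1 h2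
    have e : lgl P Y 0 Yk (i + 1) acc = acc := rfl
    rw [e, sub_self, zero_sub, abs_neg, abs_mul, abs_of_pos hw]
    have := mul_le_mul_of_nonneg_left (tail_b hy0 hy i) hw.le
    simp only [Nat.cast_zero, add_zero]
    nlinarith
  | succ f ih =>
    intro i Yk acc h1 h2
    have hp : 0 ≤ y ^ (i + 1 + (f + 1)) * 2 ^ P := by positivity
    have hf0 : (0 : ℝ) ≤ f := Nat.cast_nonneg _
    cases Yk with
    | zero =>
      have e : lgl P Y (f + 1) 0 (i + 1) acc = acc := rfl
      rw [e, sub_self, zero_sub, abs_neg, abs_mul, abs_of_pos hw]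
      have := mul_le_mul_of_nonneg_left (tail_b hy0 hy i) hw.le
      simp only [Nat.cast_zero, zero_add] at h2
      push_cast
      nlinarith
    | succ x =>
      have e : lgl P Y (f + 1) (x + 1) (i + 1) acc
          = lgl P Y f (pw P (x + 1) Y) (i + 1 + 1) (acc + (x + 1) / (i + 1)) := by
        unfold lgl; rw [frc_eq']; rfl
      rw [e]
      have hz : y ^ (i + 1) ≤ 2 / 3 := by
        calc y ^ (i + 1) ≤ y ^ 1 := pow_le_pow_of_le_one hy0 (by linarith) (by omega)
          _ ≤ _ := by simpa using hy
      obtain ⟨p1, p2⟩ := pow_step (pow_nonneg hy0 (i + 1)) hz hy0 hy hY hY2 h1 h2 hE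
      rw [← pow_succ] at p1 p2
      have := ih (i + 1) (pw P (x + 1) Y) (acc + (x + 1) / (i + 1)) p1 p2
      rw [Finset.sum_range_succ] at this
      rw [show i + 1 + (f + 1) = i + 1 + 1 + f by ring]
      have hi : (0 : ℝ) < i + 1 := by positivity
      set q : ℕ := (x + 1) / (i + 1) with hq
      have q1 : (q : ℝ) * (i + 1) ≤ (x + 1 : ℕ) := by exact_mod_cast Nat.div_mul_le_self (x + 1) (i + 1)
      have q2 : ((x + 1 : ℕ) : ℝ) ≤ (q + 1) * (i + 1) := by
        have := (Nat.lt_div_mul_add (a := x + 1) (Nat.succ_pos i)).le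
        have h3 : x + 1 ≤ ((x + 1) / (i + 1) + 1) * (i + 1) := by
          rw [Nat.succ_eq_add_one] at this; linarith
        exact_mod_cast h3
      set v := y ^ (i + 1) with hv
      have d : |(q : ℝ) - 2 ^ P * (v / (i + 1))| ≤ E + 1 := by
        have e1 : (2 : ℝ) ^ P * (v / (i + 1)) = v * 2 ^ P / (i + 1) := by ring
        rw [e1, abs_le]
        have b1 : (q : ℝ) ≤ v * 2 ^ P / (i + 1) := by rw [le_div_iff₀ hi]; linarith
        have b2 : v * 2 ^ P / (i + 1) ≤ q + 1 + E := by
          rw [div_le_iff₀ hi]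
          have : 0 ≤ E * i := by positivity
          nlinarith
        constructor <;> linarith
      have t := abs_add_le ((lgl P Y f (pw P (x + 1) Y) (i + 1 + 1) (acc + q) : ℝ) - ((acc + q : ℕ) : ℝ) -
        2 ^ P * (-Real.log (1 - y) - (∑ j ∈ Finset.range i, y ^ (j + 1) / (j + 1) + v / (i + 1))))
        (q - 2 ^ P * (v / (i + 1)))
      rw [show ∀ A B C S L : ℝ, ((A - ((acc + q : ℕ) : ℝ) - B * (L - (S + v / (i + 1)))) + (q - B * (v / (i + 1))))
        = A - acc - B * (L - S) by intros; push_cast; ring] at t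
      refine t.trans ?_
      push_cast at this ⊢
      linarith
      exact 0

lemma lg_spec {P Y : ℕ} {y : ℝ} (hP : P ≤ 9000) (hy0 : 0 ≤ y) (hy : y ≤ 2 / 3)
    (hY : (Y : ℝ) ≤ y * 2 ^ P) (hY2 : y * 2 ^ P ≤ Y + 10) :
    |(lg P Y : ℝ) - 2 ^ P * (-Real.log (1 - y))| ≤ 2 ^ 19 := by
  have h := lgl_spec (E := 23) hy0 hy hY hY2 (by norm_num) (by norm_num) 16000 0 Y 0 (by simpa using hY)
    (by simp only [zero_add, pow_one]; linarith)
  have e : lg P Y = lgl P Y 16000 Y 1 0 := frc_eq _ _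
  rw [e]
  simp only [Finset.range_zero, Finset.sum_empty, sub_zero, Nat.cast_zero] at h
  refine h.trans ?_
  have : y ^ (0 + 1 + 16000) * 2 ^ P ≤ 1 := by
    calc y ^ (0 + 1 + 16000) * 2 ^ P ≤ (2 / 3 : ℝ) ^ 16000 * 2 ^ 9000 := by
          gcongr ?_ * ?_
          · calc y ^ (0 + 1 + 16000) ≤ y ^ 16000 := pow_le_pow_of_le_one hy0 (by linarith) (by norm_num)
              _ ≤ _ := by gcongr
          · exact pow_le_pow_right₀ (by norm_num) hP
      _ = ((2 / 3 : ℝ) ^ 16 * 2 ^ 9) ^ 1000 := by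
          rw [mul_pow, ← pow_mul, ← pow_mul]
      _ ≤ 1 := pow_le_one₀ (by positivity) (by norm_num)
  have h16 : ((16000 : ℕ) : ℝ) = 16000 := by norm_num
  rw [h16]
  linarith

lemma pwn_spec {P Y : ℕ} {y : ℝ} (hy0 : 0 ≤ y) (hy : y ≤ 2 / 3)
    (hY : (Y : ℝ) ≤ y * 2 ^ P) (hY2 : y * 2 ^ P ≤ Y + 2) (i : ℕ) :
    (pwn P Y i : ℝ) ≤ y ^ (i + 1) * 2 ^ P ∧ y ^ (i + 1) * 2 ^ P ≤ pwn P Y i + 7 := by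
  induction i with
  | zero => simp only [pwn, zero_add, pow_one]; exact ⟨hY, by linarith⟩
  | succ i ih =>
    have hz : y ^ (i + 1) ≤ 2 / 3 := by
      calc y ^ (i + 1) ≤ y ^ 1 := pow_le_pow_of_le_one hy0 (by linarith) (by omega)
        _ ≤ _ := by simpa using hy
    have := pow_step (pow_nonneg hy0 (i + 1)) hz hy0 hy hY hY2 ih.1 ih.2 (by norm_num)
    rw [pow_succ]
    exact this

lemma lgp {P Y : ℕ} {y : ℝ} (hP : P ≤ 9000) (hy0 : 0 ≤ y) (hy : y ≤ 2 / 3)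
    (hY : (Y : ℝ) ≤ y * 2 ^ P) (hY2 : y * 2 ^ P ≤ Y + 2) (i : ℕ) :
    |(lg P (pwn P Y i) : ℝ) - 2 ^ P * (-Real.log (1 - y ^ (i + 1)))| ≤ 2 ^ 19 := by
  obtain ⟨h1, h2⟩ := pwn_spec hy0 hy hY hY2 i
  refine lg_spec hP (by positivity) ?_ h1 (by linarith)
  calc y ^ (i + 1) ≤ y ^ 1 := pow_le_pow_of_le_one hy0 (by linarith) (by omega)
    _ ≤ _ := by simpa using hy

lemma allp_spec {P Y : ℕ} {φ : ℕ → Bool} {f : ℕ} : ∀ {i : ℕ}, allp P Y φ f (pwn P Y i) = true →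
    ∀ j < f, φ (lg P (pwn P Y (i + j))) = true := by
  induction f with
  | zero => intro i _ j hj; omega
  | succ f ih =>
    intro i h j hj
    have e : allp P Y φ (f + 1) (pwn P Y i) = Bool.rec (motive := fun _ => Bool) false
        (allp P Y φ f (pw P (pwn P Y i) Y)) (φ (lg P (pwn P Y i))) := by
      unfold allp; rw [frc_eq']
    rw [e] at h
    cases hφ : φ (lg P (pwn P Y i)) with
    | false => rw [hφ] at h; cases h
    | true =>
      rw [hφ] at h
      cases j with
      | zero => exact hφ
      | succ j =>
        have := ih (i := i + 1) h j (by omega)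
        rwa [show i + 1 + j = i + (j + 1) by ring] at this

lemma mkl_spec {P Y : ℕ} {ψ : ℕ → ℕ} {cont : List ℕ → Bool} {f : ℕ} : ∀ {i : ℕ} {acc : List ℕ},
    mkl P Y ψ cont f (pwn P Y i) acc = true →
    ∃ l, cont l = true ∧ (∀ x ∈ acc, x ∈ l) ∧ ∀ j < f, ψ (lg P (pwn P Y (i + j))) ∈ l := by
  induction f with
  | zero => intro i acc h; exact ⟨acc, h, fun _ h => h, fun j hj => by omega⟩
  | succ f ih =>
    intro i acc h
    have e : mkl P Y ψ cont (f + 1) (pwn P Y i) acc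
        = mkl P Y ψ cont f (pwn P Y (i + 1)) (ψ (lg P (pwn P Y i)) :: acc) := by
      unfold mkl; rw [frc_eq']; rfl
    rw [e] at h
    obtain ⟨l, h1, h2, h3⟩ := ih h
    refine ⟨l, h1, fun x hx => h2 x (List.mem_cons_of_mem _ hx), fun j hj => ?_⟩
    cases j with
    | zero => exact h2 _ List.mem_cons_self
    | succ j =>
      have := h3 j (by omega)
      rwa [show i + 1 + j = i + (j + 1) by ring] at this

lemma alll_spec {x L η2 : ℕ} {l : List ℕ} (h : alll x L η2 l = true) : ∀ y ∈ l, η2 ≤ (x + y) % L := by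
  induction l with
  | nil => intro y hy; cases hy
  | cons z l ih =>
    have e : alll x L η2 (z :: l) = Bool.rec (motive := fun _ => Bool) false (alll x L η2 l)
      (Nat.ble η2 (Nat.mod (Nat.add x z) L)) := rfl
    rw [e] at h
    cases hb : Nat.ble η2 (Nat.mod (Nat.add x z) L) with
    | false => rw [hb] at h; cases h
    | true =>
      rw [hb] at h
      intro y hy
      rcases List.mem_cons.1 hy with rfl | hy
      · exact Nat.le_of_ble_eq_true hb
      · exact ih h y hy

end FT

namespace FT
open Real

variable {α t : ℝ}

lemma Ctx.cc (h : Ctx α t) : (α - 1) ^ 2 + (α - 1) = 1 := by nlinarith [h.hα]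
lemma Ctx.ss (h : Ctx α t) : (t ^ 2 - t - 1) * t = 1 := by nlinarith [h.ht]
lemma Ctx.ss3 (h : Ctx α t) : (t ^ 2 - t - 1) ^ 3 + (t ^ 2 - t - 1) ^ 2 + (t ^ 2 - t - 1) = 1 := by
  have h1 := h.ss
  have h2 := h.ht
  have t0 : t ≠ 0 := by have := h.t1; positivity
  set s := t ^ 2 - t - 1 with hs
  have : (s ^ 3 + s ^ 2 + s) * t ^ 3 = 1 * t ^ 3 := by
    have e2 : s ^ 2 * t ^ 2 = 1 := by rw [← mul_pow, h1, one_pow]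
    have e3 : s ^ 3 * t ^ 3 = 1 := by rw [← mul_pow, h1, one_pow]
    calc (s ^ 3 + s ^ 2 + s) * t ^ 3 = s ^ 3 * t ^ 3 + s ^ 2 * t ^ 2 * t + s * t * t ^ 2 := by ring
      _ = 1 * t ^ 3 := by rw [e3, e2, h1]; linarith
  exact mul_right_cancel₀ (pow_ne_zero 3 t0) this

lemma Ctx.id1 (h : Ctx α t) : log α = -log (1 - (α - 1) ^ 2) := by
  have h1 := h.hα
  have a1 := h.α1
  have e : 1 - (α - 1) ^ 2 = α⁻¹ := by
    field_simp; nlinarith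
  rw [e, log_inv, neg_neg]

lemma Ctx.sr (h : Ctx α t) : 0.54 ≤ t ^ 2 - t - 1 ∧ t ^ 2 - t - 1 ≤ 0.55 := by
  have := h.t1
  have := h.t2
  constructor <;> nlinarith

lemma Ctx.id2 (h : Ctx α t) : 2 * log t = 2 * -log (1 - (t ^ 2 - t - 1)) - -log (1 - (t ^ 2 - t - 1) ^ 2) := by
  have h1 := h.ss
  obtain ⟨h3, h4⟩ := h.sr
  have t1 := h.t1
  set s := t ^ 2 - t - 1 with hs
  have e : (1 - s) * (1 - s) * t ^ 2 = 1 - s ^ 2 := by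
    have : (1 - s) * t ^ 2 = 1 + s := by
      have : s * t ^ 2 = t := by rw [pow_two, ← mul_assoc, h1, one_mul]
      linarith
    rw [mul_assoc, this]; ring
  have p1 : 1 - s ≠ 0 := by linarith
  have p2 : t ≠ 0 := by linarith
  rw [← e, log_mul (mul_ne_zero p1 p1) (pow_ne_zero 2 p2), log_mul p1 p1, log_pow]
  push_cast; ring

lemma Ctx.id3 (h : Ctx α t) : mu α t = 3 * log t + -log (1 - (2 * (t ^ 2 - t - 1) - 1) / (3 * (t ^ 2 - t - 1) + (t ^ 2 - t - 1) ^ 2))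
    - -log (1 - (t ^ 2 - t - 1)) + -log (1 - (α - 1) ^ 4) - 2 * log α := by
  have h1 := h.ss
  have h3 := h.ss3
  have h2 := h.ht
  have t1 := h.t1
  have a1 := h.α1
  have ha := h.hα
  unfold mu
  obtain ⟨s1, s2⟩ := h.sr
  have hs : t ^ 2 - t - 1 = 1 / t := by rw [eq_div_iff (by linarith)]; exact h1
  rw [hs] at h3 ⊢
  have t0 : 0 < t := by linarith
  have e1 : 1 - (2 * (1 / t) - 1) / (3 * (1 / t) + (1 / t) ^ 2) = t ^ 3 / (3 * t + 1) := by
    field_simp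
    nlinarith
  have e2 : 1 - 1 / t = (t - 1) / t := by field_simp
  have e3 : 1 - (α - 1) ^ 4 = (2 * α - 1) / α ^ 2 := by
    rw [eq_div_iff (by positivity)]
    have : (α - 1) * α = 1 := by linarith
    have e4 : (α - 1) ^ 4 * α ^ 2 = (α - 1) ^ 2 := by
      calc (α - 1) ^ 4 * α ^ 2 = (α - 1) ^ 2 * ((α - 1) * α) ^ 2 := by ring
        _ = _ := by rw [this]; ring
    nlinarith
  have e4 : (3 * t ^ 2 - 2 * t - 1) / ((2 * α - 1) * t) = ((3 * t + 1) * (t - 1)) / ((2 * α - 1) * t) := by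
    congr 1; ring
  have n1 : (3 * t + 1) ≠ 0 := by positivity
  have n2 : (t - 1) ≠ 0 := by linarith
  have n3 : 2 * α - 1 ≠ 0 := by linarith
  have n4 : α ^ 2 ≠ 0 := by positivity
  rw [e1, e2, e3, e4, log_div (mul_ne_zero n1 n2) (mul_ne_zero n3 t0.ne'), log_mul n1 n2, log_mul n3 t0.ne',
    log_div (pow_ne_zero 3 t0.ne') n1, log_div n2 t0.ne', log_div n3 n4, log_pow, log_pow]
  push_cast; ring

structure Apx (α t : ℝ) (P C S L M : ℕ) : Prop where
  hP : P ≤ 9000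
  C1 : (C : ℝ) ≤ (α - 1) * 2 ^ P
  C2 : (α - 1) * 2 ^ P ≤ C + 2
  S1 : (S : ℝ) ≤ (t ^ 2 - t - 1) * 2 ^ P
  S2 : (t ^ 2 - t - 1) * 2 ^ P ≤ S + 2
  hL : |(L : ℝ) - 2 ^ P * log t| ≤ 2 ^ 24
  hM : |(M : ℝ) - 2 ^ P * mu α t| ≤ 2 ^ 24

lemma c_bd {c W x : ℝ} (hc0 : 0 < c) (hc : c ^ 2 + c = 1) (hW : 0 < W) (hx : 0 ≤ x) (h1 : x * x + x * W ≤ W * W)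
    (h2 : W * W ≤ (x + 1) * (x + 1) + (x + 1) * W) : x ≤ c * W ∧ c * W ≤ x + 1 := by
  have e : (c * W) * (c * W) + (c * W) * W = W * W := by
    calc _ = (c ^ 2 + c) * (W * W) := by ring
      _ = _ := by rw [hc, one_mul]
  have : 0 < c * W := by positivity
  constructor <;> by_contra! hh <;> nlinarith

lemma s_bd {c W x : ℝ} (hc0 : 0 < c) (hc : c ^ 3 + c ^ 2 + c = 1) (hW : 0 < W) (hx : 0 ≤ x)
    (h1 : x * x * x + x * x * W + x * W * W ≤ W * W * W)
    (h2 : W * W * W ≤ (x + 1) * (x + 1) * (x + 1) + (x + 1) * (x + 1) * W + (x + 1) * W * W) :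
    x ≤ c * W ∧ c * W ≤ x + 1 := by
  have mono : ∀ u v : ℝ, 0 ≤ u → u < v → u * u * u + u * u * W + u * W * W < v * v * v + v * v * W + v * W * W := by
    intro u v hu huv
    have a1 : u * u ≤ v * v := by nlinarith
    have a2 : u * u * u ≤ v * v * v := by
      have : 0 ≤ v := by linarith
      gcongr
    have a3 : u * u * W ≤ v * v * W := by gcongr
    have a4 : u * W * W < v * W * W := by gcongr
    linarith
  have e : (c * W) * (c * W) * (c * W) + (c * W) * (c * W) * W + (c * W) * W * W = W * W * W := by
    calc _ = (c ^ 3 + c ^ 2 + c) * (W * W * W) := by ring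
      _ = _ := by rw [hc, one_mul]
  have : 0 < c * W := by positivity
  constructor <;> by_contra! hh
  · have := mono _ _ this.le hh; linarith
  · have := mono _ _ (by linarith) hh; linarith

lemma y_bd {s W x y : ℝ} (hs0 : 0 < s) (hW : 0 < W) (hx : 0 < x) (hy : 0 ≤ y) (x1 : x ≤ s * W) (x2 : s * W ≤ x + 1)
    (h1 : y * (3 * (x + 1) * W + (x + 1) * (x + 1)) + W * W * W ≤ 2 * x * W * W)
    (h2 : 2 * (x + 1) * W * W ≤ (y + 10) * (3 * x * W + x * x) + W * W * W) :
    y ≤ (2 * s - 1) / (3 * s + s ^ 2) * W ∧ (2 * s - 1) / (3 * s + s ^ 2) * W ≤ y + 10 := by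
  have e : (2 * s - 1) / (3 * s + s ^ 2) * W = (2 * (s * W) - W) * W * W / (3 * (s * W) * W + (s * W) * (s * W)) := by
    have : 3 * s + s ^ 2 ≠ 0 := by positivity
    rw [div_mul_eq_mul_div, div_eq_div_iff this (by positivity)]
    ring
  rw [e]
  set v := s * W
  have v0 : 0 < v := by positivity
  constructor
  · rw [le_div_iff₀ (by positivity)]
    have : y * (3 * v * W + v * v) ≤ y * (3 * (x + 1) * W + (x + 1) * (x + 1)) := by gcongr
    have : 2 * x * W * W ≤ 2 * v * W * W := by gcongr
    linarith
  · rw [div_le_iff₀ (by positivity)]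
    have : (y + 10) * (3 * x * W + x * x) ≤ (y + 10) * (3 * v * W + v * v) := by gcongr
    have : 2 * v * W * W ≤ 2 * (x + 1) * W * W := by gcongr
    linarith

lemma apx0 (h : Ctx α t) {P C S L1 L2 M G2 Y : ℕ} (hP : P ≤ 9000)
    (c1 : C * C + C * 2 ^ P ≤ 2 ^ P * 2 ^ P) (c2 : 2 ^ P * 2 ^ P ≤ (C + 1) * (C + 1) + (C + 1) * 2 ^ P)
    (s1 : S * S * S + S * S * 2 ^ P + S * 2 ^ P * 2 ^ P ≤ 2 ^ P * 2 ^ P * 2 ^ P)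
    (s2 : 2 ^ P * 2 ^ P * 2 ^ P ≤ (S + 1) * (S + 1) * (S + 1) + (S + 1) * (S + 1) * 2 ^ P + (S + 1) * 2 ^ P * 2 ^ P)
    (s3 : 0 < S)
    (y1 : Y * (3 * (S + 1) * 2 ^ P + (S + 1) * (S + 1)) + 2 ^ P * 2 ^ P * 2 ^ P ≤ 2 * S * 2 ^ P * 2 ^ P)
    (y2 : 2 * (S + 1) * 2 ^ P * 2 ^ P ≤ (Y + 10) * (3 * S * 2 ^ P + S * S) + 2 ^ P * 2 ^ P * 2 ^ P)
    (hL1 : lg P (pwn P C 1) = L1) (hG2 : lg P (pwn P S 1) = G2)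
    (l2a : 2 * lg P (pwn P S 0) ≤ 2 * L2 + G2 + 1) (l2b : 2 * L2 + G2 ≤ 2 * lg P (pwn P S 0) + 1)
    (hM : M + lg P (pwn P S 0) + 2 * L1 = 3 * L2 + lg P Y + lg P (pwn P C 3)) :
    Apx α t P C S L2 M ∧ |(L1 : ℝ) - 2 ^ P * log α| ≤ 2 ^ 19 := by
  have a1 := h.α1
  have a2 := h.α2
  obtain ⟨sr1, sr2⟩ := h.sr
  have hW : (0 : ℝ) < 2 ^ P := by positivity
  obtain ⟨C1, C2⟩ := c_bd (c := α - 1) (W := 2 ^ P) (x := C) (by linarith) h.cc hW (Nat.cast_nonneg _)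
    (by exact_mod_cast c1) (by exact_mod_cast c2)
  obtain ⟨S1, S2⟩ := s_bd (c := t ^ 2 - t - 1) (W := 2 ^ P) (x := S) (by linarith) h.ss3 hW (Nat.cast_nonneg _)
    (by exact_mod_cast s1) (by exact_mod_cast s2)
  obtain ⟨Y1, Y2⟩ := y_bd (s := t ^ 2 - t - 1) (W := 2 ^ P) (x := S) (y := Y) (by linarith) hW (by exact_mod_cast s3)
    (Nat.cast_nonneg _) S1 S2 (by exact_mod_cast y1) (by exact_mod_cast y2)
  have C2' : (α - 1) * 2 ^ P ≤ C + 2 := by linarith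
  have S2' : (t ^ 2 - t - 1) * 2 ^ P ≤ S + 2 := by linarith
  have f2 := lgp hP (by linarith) (by linarith) C1 C2' 1
  have f4 := lgp hP (by linarith) (by linarith) C1 C2' 3
  have g1 := lgp hP (by linarith) (by linarith) S1 S2' 0
  have g2 := lgp hP (by linarith) (by linarith) S1 S2' 1
  have yh := lg_spec hP (y := (2 * (t ^ 2 - t - 1) - 1) / (3 * (t ^ 2 - t - 1) + (t ^ 2 - t - 1) ^ 2))
    (div_nonneg (by linarith) (by nlinarith)) (by rw [div_le_iff₀ (by nlinarith)]; nlinarith) Y1 Y2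
  rw [hL1, show (1 + 1) = 2 from rfl, ← h.id1] at f2
  rw [hG2] at g2
  rw [zero_add, pow_one] at g1
  have i2 := h.id2
  have i3 := h.id3
  norm_num only at f4 g2
  generalize log (1 - (α - 1) ^ 4) = F at *
  generalize log (1 - (t ^ 2 - t - 1)) = G at *
  generalize log (1 - (t ^ 2 - t - 1) ^ 2) = G' at *
  generalize log (1 - (2 * (t ^ 2 - t - 1) - 1) / (3 * (t ^ 2 - t - 1) + (t ^ 2 - t - 1) ^ 2)) = H at *
  generalize lg P (pwn P S 0) = u1 at *
  generalize lg P (pwn P C 3) = u2 at *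
  generalize lg P Y = u3 at *
  have l2a' : 2 * (u1 : ℝ) ≤ 2 * L2 + G2 + 1 := by exact_mod_cast l2a
  have l2b' : 2 * (L2 : ℝ) + G2 ≤ 2 * u1 + 1 := by exact_mod_cast l2b
  have hM' : (M : ℝ) + u1 + 2 * L1 = 3 * L2 + u3 + u2 := by exact_mod_cast hM
  have i2' : 2 ^ P * log t = 2 ^ P * -G - 2 ^ P * -G' / 2 := by linear_combination (2 ^ P / 2) * i2
  have i3' : 2 ^ P * mu α t = 3 * (2 ^ P * log t) + 2 ^ P * -H - 2 ^ P * -G + 2 ^ P * -F - 2 * (2 ^ P * log α) := by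
    rw [i3]; ring
  refine ⟨⟨hP, C1, C2', S1, S2', ?_, ?_⟩, f2⟩
  · rw [abs_le] at *
    constructor <;> linarith
  · rw [abs_le] at *
    constructor <;> linarith

lemma sh_b (x k : ℕ) : ((Nat.shiftRight x k : ℕ) : ℝ) * 2 ^ k ≤ x ∧ (x : ℝ) ≤ (Nat.shiftRight x k + 1) * 2 ^ k := by
  have := pw_b k x 1
  have e : pw k x 1 = Nat.shiftRight x k := by unfold pw; rw [Nat.mul_eq, mul_one]
  rw [e] at this
  simpa using this

lemma Apx.shift {P k C S L M : ℕ} (H : Apx α t (P + k) C S L M) (hk : 1 ≤ k) :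
    Apx α t P (Nat.shiftRight C k) (Nat.shiftRight S k) (Nat.shiftRight L k) (Nat.shiftRight M k) := by
  obtain ⟨hP, C1, C2, S1, S2, hL, hM⟩ := H
  have hw : (2 : ℝ) ≤ 2 ^ k := by
    calc (2 : ℝ) = 2 ^ 1 := by norm_num
      _ ≤ _ := pow_le_pow_right₀ (by norm_num) hk
  have key : ∀ x : ℕ, ∀ r : ℝ, (x : ℝ) ≤ r * 2 ^ (P + k) → r * 2 ^ (P + k) ≤ x + 2 →
      ((Nat.shiftRight x k : ℕ) : ℝ) ≤ r * 2 ^ P ∧ r * 2 ^ P ≤ (Nat.shiftRight x k : ℕ) + 2 := by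
    intro x r h1 h2
    obtain ⟨b1, b2⟩ := sh_b x k
    have w0 : (0 : ℝ) < 2 ^ k := by linarith
    rw [pow_add, ← mul_assoc] at h1 h2
    constructor
    · exact le_of_mul_le_mul_right (b1.trans h1) w0
    · refine le_of_mul_le_mul_right (h2.trans ?_) w0
      linarith
  have key2 : ∀ x : ℕ, ∀ r : ℝ, |(x : ℝ) - 2 ^ (P + k) * r| ≤ 2 ^ 24 →
      |((Nat.shiftRight x k : ℕ) : ℝ) - 2 ^ P * r| ≤ 2 ^ 24 := by
    intro x r h1
    obtain ⟨b1, b2⟩ := sh_b x k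
    have w0 : (0 : ℝ) < 2 ^ k := by linarith
    rw [pow_add] at h1
    rw [abs_le] at *
    constructor
    · refine le_of_mul_le_mul_right ?_ w0
      linarith
    · refine le_of_mul_le_mul_right ?_ w0
      linarith
  obtain ⟨k1, k2⟩ := key C _ C1 C2
  obtain ⟨k3, k4⟩ := key S _ S1 S2
  exact ⟨by omega, k1, k2, k3, k4, key2 L _ hL, key2 M _ hM⟩
end FT

namespace FT
open Real

variable {α t : ℝ}

def Good (q L η N : ℕ) : Prop := 2 * η ≤ (q * N + η) % L

lemma Good.z {q L η N : ℕ} (h : Good q L η N) (hL : 0 < L) (hη : 0 < η) :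
    η ≤ (q * N) % L ∧ (q * N) % L + η ≤ L := by
  unfold Good at h
  have hz := Nat.mod_lt (q * N) hL
  rw [← Nat.mod_add_mod] at h
  generalize (q * N) % L = z at *
  rcases lt_or_ge (z + η) L with h1 | h1
  · rw [Nat.mod_eq_of_lt h1] at h; omega
  · exfalso
    have h3 := Nat.mod_lt (z + η) hL
    rw [Nat.mod_eq_sub_mod h1] at h
    have := Nat.mod_le (z + η - L) L
    omega

lemma bd {l1 l2 ν e : ℝ} {q p N L η P w n m : ℕ} (hl2 : 0 < l2) (hL0 : 0 < L) (he : 0 ≤ e)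
    (hN : |(N : ℝ) - 2 ^ P * (ν + 2 * l2)| ≤ e) (hL : |(L : ℝ) - 2 ^ P * l2| ≤ e) (hNL : (N : ℝ) ≤ 8 * L)
    (hq : 1 ≤ q) (hη : 0 < η) (hg : Good q L η N) (hqe : 20 * q * e ≤ η)
    (hκ : n * |q * l1 - p * l2| * 2 ^ (P + 2) ≤ η) (hw : (2 : ℝ) ^ (P + 2) * q ≤ η * 2 ^ w) :
    exp (-(0.6932 * w)) ≤ |n * l1 - m * l2 + ν| := by
  obtain ⟨z1, z2⟩ := hg.z hL0 hη
  have hdm := Nat.div_add_mod (q * N) L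
  set z := (q * N) % L with hz
  set k := (q * N) / L with hk
  have z1' : (η : ℝ) ≤ z := by exact_mod_cast z1
  have z2' : (z : ℝ) + η ≤ L := by exact_mod_cast z2
  have dm : (L : ℝ) * k + z = q * N := by exact_mod_cast hdm
  have hL0' : (0 : ℝ) < L := by exact_mod_cast hL0
  have hq' : (1 : ℝ) ≤ q := by exact_mod_cast hq
  have hz0 : (0 : ℝ) ≤ z := Nat.cast_nonneg _
  have hk8 : (k : ℝ) ≤ 8 * q := by
    have : (L : ℝ) * k ≤ L * (8 * q) := by nlinarith
    exact le_of_mul_le_mul_left this hL0'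
  have hW : (0 : ℝ) < 2 ^ P := by positivity
  set Λ := n * l1 - m * l2 + ν with hΛ
  set κ := q * l1 - p * l2 with hκd
  obtain ⟨K, hK⟩ : ∃ K : ℤ, (K : ℝ) = n * p - q * (m + 2) + k := ⟨n * p - q * (m + 2) + k, by push_cast; ring⟩
  set d1 := (N : ℝ) - 2 ^ P * (ν + 2 * l2) with hd1
  set d2 := (L : ℝ) - 2 ^ P * l2 with hd2
  have main : 2 ^ P * q * Λ = 2 ^ P * (n * κ) + (K * (2 ^ P * l2) + z) + (k * d2 - q * d1) := by
    rw [hK, hΛ, hκd, hd1, hd2]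
    linear_combination -dm
  have err : |k * d2 - q * d1| ≤ 9 * q * e := by
    have := abs_sub (k * d2) (q * d1)
    rw [abs_mul, abs_mul, abs_of_nonneg (by positivity : (0 : ℝ) ≤ k), abs_of_nonneg (by positivity : (0 : ℝ) ≤ q)] at this
    have a1 : (k : ℝ) * |d2| ≤ 8 * q * e := by gcongr
    have a2 : (q : ℝ) * |d1| ≤ q * e := by gcongr
    linarith
  have kap : |2 ^ P * (n * κ)| ≤ η / 4 := by
    rw [abs_mul, abs_mul, abs_of_pos hW, abs_of_nonneg (by positivity : (0 : ℝ) ≤ n)]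
    rw [pow_add] at hκ
    linarith
  have hqe1 : e ≤ q * e := by nlinarith
  have low : η / 4 ≤ |2 ^ P * q * Λ| := by
    rw [main]
    rw [abs_le] at err kap hL
    rw [le_abs]
    have hl : 0 < 2 ^ P * l2 := by positivity
    rcases le_or_gt 0 K with h0 | h0
    · left
      have : 0 ≤ (K : ℝ) := by exact_mod_cast h0
      have : 0 ≤ K * (2 ^ P * l2) := by positivity
      linarith
    · right
      have : (K : ℝ) ≤ -1 := by exact_mod_cast (show K ≤ -1 by omega)
      have : K * (2 ^ P * l2) ≤ -1 * (2 ^ P * l2) := by gcongr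
      linarith
  rw [abs_mul, abs_of_pos (by positivity)] at low
  have e1 : exp (-(0.6932 * w)) ≤ 1 / 2 ^ w := by
    rw [exp_neg, one_div]
    refine inv_anti₀ (by positivity) ?_
    have h2 : (2 : ℝ) ^ w = exp (w * log 2) := by
      rw [exp_nat_mul, exp_log (by norm_num)]
    rw [h2]
    have := log_two_lt_d9
    apply exp_le_exp.2
    have : (w : ℝ) * log 2 ≤ w * 0.6932 := by gcongr; linarith
    linarith
  refine e1.trans ?_
  rw [div_le_iff₀ (by positivity)]
  have hη' : (0 : ℝ) < η := by exact_mod_cast hη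
  have : (η : ℝ) * 1 ≤ η * (|Λ| * 2 ^ w) := by
    calc (η : ℝ) * 1 ≤ 2 ^ (P + 2) * q * |Λ| := by rw [pow_add]; linarith
      _ ≤ η * 2 ^ w * |Λ| := by gcongr
      _ = _ := by ring
  exact le_of_mul_le_mul_left this hη'

lemma good_bd (h : Ctx α t) {P C S L M q p η w n m X Y : ℕ} {x y : ℝ} (H : Apx α t P C S L M) (hML : M ≤ L)
    (hP : 30 ≤ P) (hX : |(X : ℝ) - 2 ^ P * x| ≤ 2 ^ 25 + 2 ^ 19) (hY : |(Y : ℝ) - 2 ^ P * y| ≤ 2 ^ 25 + 2 ^ 19)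
    (hx : x ≤ 0.98) (hy : y ≤ 1.5) (hq : 1 ≤ q) (hη : 0 < η) (hg : Good q L η (M + 2 * L - X + Y))
    (hqe : 20 * q * 2 ^ 27 ≤ η) (hκ : n * |q * log α - p * log t| * 2 ^ (P + 2) ≤ η)
    (hw : 2 ^ (P + 2) * q ≤ η * 2 ^ w) :
    exp (-(0.6932 * w)) ≤ |n * log α - m * log t + (mu α t - x + y)| := by
  obtain ⟨-, -, -, -, -, hL, hM⟩ := H
  have l2 := h.l2
  have hW : (2 : ℝ) ^ 30 ≤ 2 ^ P := pow_le_pow_right₀ (by norm_num) hP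
  norm_num at hW
  have hML' : (M : ℝ) ≤ L := by exact_mod_cast hML
  have hM0 : (0 : ℝ) ≤ M := Nat.cast_nonneg _
  have b1 : (2 : ℝ) ^ P * 0.6 ≤ 2 ^ P * log t := by gcongr
  have b2 : (2 : ℝ) ^ P * x ≤ 2 ^ P * 0.98 := by gcongr
  have b3 : (2 : ℝ) ^ P * y ≤ 2 ^ P * 1.5 := by gcongr
  rw [abs_le] at hL hM hX hY
  have hXN : (X : ℝ) ≤ M + 2 * L := by linarith
  have hXN' : X ≤ M + 2 * L := by exact_mod_cast hXN
  have cN : ((M + 2 * L - X + Y : ℕ) : ℝ) = M + 2 * L - X + Y := by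
    push_cast [Nat.cast_sub hXN']; ring
  have hL0 : (0 : ℝ) < L := by linarith
  refine bd (e := 2 ^ 27) (p := p) (by linarith) (by exact_mod_cast hL0) (by norm_num) ?_ ?_ ?_ hq hη hg
    (by exact_mod_cast hqe) hκ (by exact_mod_cast hw)
  · rw [cN, abs_le]; constructor <;> linarith
  · rw [abs_le]; constructor <;> linarith
  · rw [cN]
    have : (0 : ℝ) ≤ X := Nat.cast_nonneg _
    linarith

lemma kap_bd {P L1 L2 q p r : ℕ} (h1 : |(L1 : ℝ) - 2 ^ P * log α| ≤ 2 ^ 19)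
    (h2 : |(L2 : ℝ) - 2 ^ P * log t| ≤ 2 ^ 24)
    (k1 : q * L1 + (q + p) * 2 ^ 24 ≤ p * L2 + 2 ^ (P - r)) (k2 : p * L2 + (q + p) * 2 ^ 24 ≤ q * L1 + 2 ^ (P - r))
    (hr : r ≤ P) : |q * log α - p * log t| * 2 ^ r ≤ 1 := by
  have hW : (0 : ℝ) < 2 ^ (P - r) := by positivity
  refine le_of_mul_le_mul_right ?_ hW
  have e : (2 : ℝ) ^ P = 2 ^ r * 2 ^ (P - r) := by rw [← pow_add]; congr 1; omega
  have k1' : (q * L1 + (q + p) * 2 ^ 24 : ℝ) ≤ p * L2 + 2 ^ (P - r) := by exact_mod_cast k1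
  have k2' : (p * L2 + (q + p) * 2 ^ 24 : ℝ) ≤ q * L1 + 2 ^ (P - r) := by exact_mod_cast k2
  rw [mul_assoc, ← e, one_mul, ← abs_of_pos (by positivity : (0 : ℝ) < 2 ^ P), ← abs_mul]
  rw [abs_le] at h1 h2
  have q0 : (0 : ℝ) ≤ q := Nat.cast_nonneg _
  have p0 : (0 : ℝ) ≤ p := Nat.cast_nonneg _
  have a1 := mul_le_mul_of_nonneg_left h1.1 q0
  have a2 := mul_le_mul_of_nonneg_left h1.2 q0
  have a3 := mul_le_mul_of_nonneg_left h2.1 p0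
  have a4 := mul_le_mul_of_nonneg_left h2.2 p0
  rw [abs_le]
  constructor <;> nlinarith

lemma kap_use {κ : ℝ} {n B r P j η : ℕ} (h : |κ| * 2 ^ r ≤ 1) (hn : n ≤ 2 ^ B) (hj : B + P + 2 ≤ r + j)
    (hη : 2 ^ j ≤ η) : n * |κ| * 2 ^ (P + 2) ≤ η := by
  have hn' : (n : ℝ) ≤ 2 ^ B := by exact_mod_cast hn
  have hη' : (2 : ℝ) ^ j ≤ η := by exact_mod_cast hη
  have : (0 : ℝ) ≤ |κ| := abs_nonneg _
  calc n * |κ| * 2 ^ (P + 2) ≤ 2 ^ B * |κ| * 2 ^ (P + 2) := by gcongr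
    _ = |κ| * 2 ^ (B + P + 2) := by rw [add_assoc B, pow_add 2 B]; ring
    _ ≤ |κ| * 2 ^ (r + j) := by gcongr; norm_num
    _ = (|κ| * 2 ^ r) * 2 ^ j := by rw [pow_add]; ring
    _ ≤ 1 * 2 ^ j := by gcongr
    _ ≤ η := by linarith

lemma Ctx.fa (h : Ctx α t) {a : ℕ} (ha : 1 ≤ a) : -log (1 - (α - 1) ^ a) ≤ 0.98 := by
  have a1 := h.α1
  have a2 := h.α2
  have c1 : (α - 1) ^ a ≤ α - 1 := by
    calc (α - 1) ^ a ≤ (α - 1) ^ 1 := pow_le_pow_of_le_one (by linarith) (by linarith) ha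
      _ = _ := pow_one _
  have e : α⁻¹ ^ 2 ≤ 1 - (α - 1) ^ a := by
    have : α⁻¹ = α - 1 := by
      refine inv_eq_of_mul_eq_one_right ?_; nlinarith [h.hα]
    rw [this]; nlinarith [h.cc]
  have := log_le_log (by positivity) e
  rw [log_pow, log_inv] at this
  have := logα_le (α := α) (by linarith) (by linarith)
  push_cast at *
  linarith

lemma Ctx.Gb (h : Ctx α t) {b : ℕ} (hb : 1 ≤ b) : -log (1 - (t ^ 2 - t - 1) ^ b) ≤ 1.5 := by
  have := h.sb hb
  have := (neg_log_le this.1.le (by linarith)).2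
  linarith

end FT

namespace FT
open Real

variable {α t : ℝ}

lemma allp_spec0 {P Y f : ℕ} {φ : ℕ → Bool} (h : allp P Y φ f Y = true) :
    ∀ j < f, φ (lg P (pwn P Y j)) = true := by
  intro j hj
  have := allp_spec (i := 0) h j hj
  rwa [zero_add] at this

lemma mkl_spec0 {P Y f : ℕ} {ψ : ℕ → ℕ} {cont : List ℕ → Bool} {acc : List ℕ}
    (h : mkl P Y ψ cont f Y acc = true) :
    ∃ l, cont l = true ∧ (∀ x ∈ acc, x ∈ l) ∧ ∀ j < f, ψ (lg P (pwn P Y j)) ∈ l := by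
  obtain ⟨l, h1, h2, h3⟩ := mkl_spec (i := 0) h
  refine ⟨l, h1, h2, fun j hj => ?_⟩
  have := h3 j hj
  rwa [zero_add] at this

noncomputable def chkA (P q η C L M f : ℕ) : Bool :=
  frc C fun Y => frc L fun L => frc M fun M => frc η fun η => frc (Nat.add M (Nat.mul 2 L)) fun N =>
    allp P Y (fun S => tst q L η (Nat.sub N S)) f Y

noncomputable def chkB (P q η C L M f : ℕ) : Bool :=
  frc C fun Y => frc L fun L => frc M fun M => frc η fun η => frc (Nat.add M (Nat.mul 2 L)) fun N =>
    allp P Y (fun S => tst q L η (Nat.add N S)) f Y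

noncomputable def chkC (P q η C D L M f g : ℕ) : Bool :=
  frc C fun Y => frc D fun Ys => frc L fun L => frc M fun M =>
  frc η fun η => frc (Nat.mul 2 η) fun η2 => frc (Nat.add M (Nat.mul 2 L)) fun N =>
    mkl P Ys (fun S => Nat.mod (Nat.mul q S) L) (fun l =>
      Bool.rec (motive := fun _ => Bool) false
        (allp P Y (fun S => frc (Nat.add (Nat.mul q (Nat.sub N S)) η) fun x => alll x L η2 l) f Y)
        (frc (Nat.add (Nat.mul q N) η) fun x => alll x L η2 l)) g Ys [0]

lemma chkA_spec {P q η C L M f : ℕ} (h : chkA P q η C L M f = true) {j : ℕ} (hj : j < f) :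
    Good q L η (M + 2 * L - lg P (pwn P C j) + 0) := by
  unfold chkA at h
  simp only [frc_eq] at h
  exact Nat.le_of_ble_eq_true (allp_spec0 h j hj)

lemma chkB_spec {P q η C L M f : ℕ} (h : chkB P q η C L M f = true) {j : ℕ} (hj : j < f) :
    Good q L η (M + 2 * L - 0 + lg P (pwn P C j)) := by
  unfold chkB at h
  simp only [frc_eq] at h
  exact Nat.le_of_ble_eq_true (allp_spec0 h j hj)

lemma chkC_spec {P q η C D L M f g : ℕ} (h : chkC P q η C D L M f g = true) {X Y : ℕ}
    (hX : X = 0 ∨ ∃ j < f, X = lg P (pwn P C j)) (hY : Y = 0 ∨ ∃ j < g, Y = lg P (pwn P D j)) :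
    Good q L η (M + 2 * L - X + Y) := by
  unfold chkC at h
  simp only [frc_eq] at h
  obtain ⟨l, h1, h2, h3⟩ := mkl_spec0 h
  have hYl : (q * Y) % L ∈ l := by
    rcases hY with rfl | ⟨j, hj, rfl⟩
    · rw [mul_zero, Nat.zero_mod]; exact h2 0 (by simp)
    · exact h3 j hj
  have key : alll (q * (M + 2 * L - X) + η) L (2 * η) l = true := by
    cases hb : alll (Nat.add (Nat.mul q (Nat.add M (Nat.mul 2 L))) η) L (Nat.mul 2 η) l with
    | false => rw [hb] at h1; cases h1
    | true =>
      rcases hX with rfl | ⟨j, hj, rfl⟩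
      · exact hb
      · rw [hb] at h1; exact allp_spec0 h1 j hj
  have := alll_spec key _ hYl
  unfold Good
  rw [Nat.add_mod_mod] at this
  rwa [show q * (M + 2 * L - X + Y) + η = q * (M + 2 * L - X) + η + q * Y by ring]

def c0 : ℕ := 2293909521578953054790146321508971531352255980241031514243138722443911442094442213318484543965114868368089888576583573138111469403624000613478255644512807935249604828164461759253858372507489865867637633014286624656404361144533789050085366813956731273033327954556139752206275456712809743113211990322246231368218277200373377027356415988377005372845558797473783789793278424590906411725654074807930926623260042250292329308305214564593690115045108288181521065782539382810156095296264172192130014488976768431519019083359529084770986887592139946198831349512758540327545323154261689522321738327533917071794504069289488825381113228768510874036624005022781315551938506005083701135860628773088709099935057700740135650261870622143860503496006118025679701439367844842151720079000559389919502304145441068016054577318641117567227257720603306170939867082696803536118130005538321444948933460960141864403674594530117748587410284575371153013291573360987153757248727601095760085944089341262264164625680685410533312483023713735193346180484319930899142694540581508564425463205192875175577604260511379017474336648996537587285911699105663856557745561653041939262638734915782409926008612037588181088532091342301153680700179045409813864872828117513574241069110091711064972304273671079440987154480448132554934565177124939242089490516951129513739804540037084569397237901950727274322307843297681176254593747606267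32479228310513789846484532804649766897450174718571433529057826224220902815060238206301154153377746601941775001784110691647122473563240558834231810507234391595856516216660777700584670525978786211881848150372260745633253891013552204143041788048297506716780711030298318552998702491848659448860954598961183173308951579667504049174498315886184172928714871465030854885143334704918246523268650769647386421942523321253854510429743767372531412725997356073247237363084746049547947562330958524912454448148758651702426890082430006522276036201151420406935426392397260601504609091939279209041691251931353774394828742855097180197754794147163905558485290935198150525146600607352942469110962112396335882894801178808690316164100800347406614332689494715064182586353923903171512007230231723558385716897514276870691482739976997710770889998203455923602347167775430606984493459011237012283299498015750615149767794488649255199261784285403967342109115699060094633990262789706900557074880633041654182126492934179192287401437942745886970025066505667201874130365775334969685398454059139275949227778204468637584203887992691170021330363126063322348097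
def s0 : ℕ := 2017968955906272420003927899203898294562543948532242297434598870210887552879057061138416129461973039898397438915218223826965655392201829637956827658441951733380249082335201189101571240724869271866584439172283712208995436672120985696979674482780828358650331065797266048056636045144731594298811001489829357186743070990595750503014250758547315837506435247364770831657768238863768590134759634901162340993959706701718992006923544546298275762530258706130560521349127589007435421467015066471092631892801055614821482166208407652820011221918722765600529712343023424646767997196800621090347049206012019090447736569240984920093287421681913774077328956828095538939026676380818777203248299899047152255284587099976722778485629028327129481929983165965472292004257093335219948036845734368568594633159044794891147772167021771988029795155529418356567051776572342505210367722441819367803326654620990935537768751290559059504094294098149435538307738243761345808552855090526222395937607887871545672283971148487981261594637786515168851488626922433798032296632728154598049389126805775467203067285137783078222594639431660572374444202895871222005498976549543364438580403517758666779236861108668942432629801831192714341303510522065214894891499428418844909407739035048581078144407095015061525755912187970959638282609805595244421040495792365787037549876789947232859981556198068135149549593320924308920798537494018257143115290232056322597612952079909113278226165914954846400139241838272012512901979834311208682147130272473927109866501382605201428577973244163706622367196877716522868897575094659743998540673602997146407802108528838520445680320344573989649380440481582500784833845852406966857008340791316681065779952537827831101957783977978278429746695243306563571468516131552819743275546886400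44223072452247787867249918423058067018708278616734614046232351785147243470283734244340304771143054476049573811861142269285066004364192482516595238949441548218165723412084548381212039593136588930183172365163900372450069254914272560752451873420908969795224050537365260135379214168647411330734224960364418848658576935286997098528935046042701733903816099317203238444893784081727474093256949810335770859986547844815218677770541288538241216098908503223445076367810863430276162126221171151413287943214318415537304561021568460385210783705910400607301876053998555032623588491233644010825171762644433452632510937030009436836630869504464351495715439894567570068716151971986181124646993050537586856899133440813543037687709163276554833671141178400614142086
def q1 : ℕ := 8724358950532906423139858423991261703720535742374579570357647800665165456804295773258001111107877311553224577530833169424862237909600175112231978712673974308804815143891550371026683132330103129256056628524897132934116432998283452785217699070074261274647196118552037161562431128189452697863648645625063193005329895196265977932816130565113512148918228984492632291400985551189277267338619016117052069604396479296250408662526152890840968817140743290318597878734744122058699103424521495299610116330008098195066119604868461753506359115700033660162619431594990965583738382330388004346226969020723900684996525248365723089750878127214544442039248253804944958500541451437320856055259849565424041262676600464653749362088451636857805467596311112526211173558460403997687147585046934610033513873327928865084424205266592016394837667186647383194211554217340220674557383302130404563713013967830426856419037865139411931281376327887826648770816330287549961482626662498396472300283224512590537979028554519918685405484262962608815121401007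6119442434071035591231774186910589379420813421135195072062820475679741953394280190473249667483809012895044790253324078641629983627614585631977493673454810033071462341073498757435947890536577712937253791110923383794
def p1 : ℕ := 68894276358988661065281784860097871853617871187479721169238531382838376764197442044950989912491474231155010113474028463118319646902000347203858850668908306240259966207017116019262929497878288742991546311503311954455654970200168806608614300064757215193360617216664043510502918160639995149776621912527990345356171874267625661494420274019662211705798877435848480080199740332688566007193196524707485642529926220920234646724542339765401757627334291521136211212679855197527724707067012743700237626745879495223006580486033666093920177887214688372696122207986598247782199516448630411150363534365487209226435971405209014487742127019777893819847060825722894054183731763044120660432714724146772689107383276879328258823136953553758631732867576165626017475980346987251964780196946214230952218944976112571349229039574697337109700581930262713800207455168896546953032937875071122322318350343299759087227780707211890173698754484027421464560606219778658492066947419922237019895625338110546410278733721296578307376506275389091645340919627091083051122188040297994095071130616025513592346349564529385700375684040657905839530617308290377007648198352465862583895823670843363903095801997603725248919986241364100266874474044737523349893487905543261590655459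
def q2 : ℕ := 108183047450215571295168010645171680320429739698119823111486252210697077557190989984008026527293379445288379691067223907747637010616029518251940462320414062787512346804056477020902630034076482607832849856207057900833349072402699727552606262899283753313723755929286798604374821402433439420117911814307106851464052951886920391359682145461451311833662287205334131409379789473558255436302616486332033174622758410
def p2 : ℕ := 85429689569770336873128874557803230648245540349434284592886574162725397854017749954695647713399799455455080960436780293789047696387585240210719544280038636103238276621353344952550055698527568357238480179387989716994156707221716833723805191360885810194474767309982841593340441391383553730712822063923986287795498132004661983650143628544686166935042130001124970356457458683131526426479017645801334895726371851
def q3 : ℕ := 18411401442673784327747392208801226356216296126636752759780424761585228717007577075543853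
def p3 : ℕ := 14539064547205163066389608524538539006688394606480874119171467782372788810875760994892224
def zL1 : ℕ := 1786077153512857841248249653518317916281122259259959926917771019551076544797179167423064875516755866132631718924911276197231696749374278321700476910107333734714342405113185682051194298272180869805104136991528168132140862409060790197238315920992932936435169223929907582080015796768280076367524460018949819220081529360119380740016151442644069387604744352845043608187407495380691959078073732741458104099007463356084928677212670567168464999093296853814550185270585835959054587590435077977159262721765399834149196911047409709953274281029535836121937439447251942245111923884585054933982513306301154633415162717747352233453097261536824200919680964371879088522548480084991374240084127602251250608690752032622332074362142322471098219986223521311488504991487801723607251445121525445218632064182781368313755525543376220145749401606472177125509174944284235556494631125985967174678092473607700650340759377690599812734111818092350103565881796789958826206804339031890271553405890389989865747515730723936005373891286584541726565809434605034084993973259041079136948370286947178358315305118887166865574345550891864251290098065588651789576200153639102047922015268431421370563434740880048640209343184440809837567218528273968175180493785481044112946650846973697106826836909038829772187970805625200723659963037214901868369145305201400546191832516819709857517886190161487813604813904098200896270742335839321948980598010278817147235394718803697402275244944829158763243234503000668473812150645387737459217480724960809862157970830493640256715899204631479028916366568370164109819564665090004483195368751049030036894608161584063483464144007327734611949091257648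75121518599238914479275043508415193215905146788839818006053679509718415615743393169764571992893186053191025700028251877731639480133486020279931848393808346852559924326799985498870994167110865574861408204403746019639755646536861701055026995427331410305913383696023126758450037647020169401067551713930010740447739839211527857492884738988894955312260549151438707862799457451201014477112246352935232433273720795481977197576080384965560054616859259008849743292147305897702532894415727942850479536342313428494471241364069256173161813214665096927813057330461812764381511220479646875555494309553984974265359899329800902508174834465621259876973731689669605673374316489991115757441767648453070970298168443079399035127068263066942550996634175119153420966075274311543083318819870368960492237217196997166821873549330551773449314462657951320851263211524597253032256849842425640824738047
def zL2 : ℕ := 2261781242812807153486646686218289860002141355365387969257605287721554209349823855106922348851726521757162896512940079858563855463875621023825188598125296184334265669773817011441775221149956890960137549669723949966646688783768034091717871814644149564426280342456741518977653320409035213516285578812054386434437905210081945463989061688379957023273762785298338929836910170099291695139852927499798429546528120999009341296838337302897596055567040766839833448431844185898217633797281684423571176341554840123479387656548157994064643842691188619060833689851123795600705561250279938574709503389404628442074252648780551277400336194737976176696396707044440750451419453945056559712437074479806351665527395910539879993543644056291015403232213045178439644021629937937419682448512971539073890030838054047869850552162881860014044902706980773542381839014117962947509629537987070936313817689329897642033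41231328315455009726458999734287068714589078652370276857447263226113984639894293430736982923458840899993599849079967026192123054569690522408758233947669262691891266605013798514060869790047577674538713523766702154525804543042793254056028847022477928411447405630427022594093616347398612452067290677098955722194602730914513150205081003436383937085248850256606597396959217786745281891713323933047059459512192259949364233558393186570728395296975336640743163539796606714255026515355830485871972908956976434126108729718933870870564334407260960294451474675472480742762145630906142941808218180610751669309643564523994764703546689005697196819549063255126793233669208486138881699224451036774663651840881113519882748628804319184559035946753260612457642730003958525766541345036168259703180898316983113390324693300252979754837977837363860628654660740614354555387825199589196045912917094859927442631174065121776150850521674593146985126222816888636039027755304264852795198179288354870598269618520213356545527344310654412088808335805963006648774197508850329228975062591198964458320115755092578820211121647764059517355589285326835772853609845143163047602183935978647231353827270362658097763624112269073861969516338415563426809143969170991315543430994192232398855262094416913494723007752090973999660093525081777673947661998983565929260682557907209526380028668112451210146822416483926922914454434862889655406229748370490646314057048574692666046848614135250545880967210302387245261688988876271163673057885737999799860369027661111803247928057174165928385037762969957344666341351996491545290316492708814308318446214869882243850131340810702943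
def zM : ℕ := 1058727535299481569908005717190069022225115366792077215492140700728424386795417937014348408526600886222031871478293635306066987525247966785023901422563393161408095070505033237215238236397100454257523963888961941868150689033040400833896907111642637942109953647484353299580809517313255627963600176265253282879705595530687168413560534900025246138090806659208494205956040630581227209281124687796088895262472911251965493047238345861044414614155464595609014436903716254941260387898199913142505293479067301825846272625002603989025743644784436088478074822935554422822182730156365271211281054095982309525199886603977209414452959440458068194109319053257140545605082885616290642211093406996001518486994011426033977071317221385254861826438401438607274160957798810843101320703210296949052547093878875195442428656273192417909369037998625288302444894447746193622095695227095081170785839564135639196871803737521703646723872590899331435610659714126300830018216146820234200570854680567838397427553820049165883456211319843963344646410502632650142619256922627145891495376409553999179907688531614389800311351501958748408129434675986330602603277151078616353236793168731090545829621333508184403299656794994607827415364159807202044695512769406629322404273001001080270769724793759510480188386994109082980571883789896654917888006497382153608891504431409149813017756985669176482146811867460441081315030667645024332711533333702349168788578723540032995009931260228507016554533682953686155663947925522214892553680018532536647870717498634444808606316068735914511771364149365406433126271545949793700370005926298844477589425147915312139828443168165505309251153388668855991955795457851623557903799358916548047061213024623495790508784635065024553020247622023415849538420179404410912553681536508494737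83350242957582492146935883535829822830358726406049444816857121531453804399961683800395955347194520836143679309635439327158577254327467474346394588081461545548731733254516293660762181575575726547062796927897109998361825042248693370565023349436101758047864558459897142427043261200886115134881036316396597488537603819229434533170829696021138313142079688190381642299296776445454776397090673961591112667512795389995475387932152763115637124196014829578155593497043394959206327774309334568298229279305194010635202118550089985761919091168524286404167517123407995248770981913357032620441180669795130554166331431806037416614905221276211948488828664479390527484845339880890045438622337375475390603548115240626848190707991820971411748914221253948571830
noncomputable def zY : ℕ :=
  Nat.sub (Nat.div (Nat.mul (Nat.sub (Nat.mul 2 s0) (Nat.pow 2 8320)) (Nat.pow 2 16640))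
    (Nat.mul s0 (Nat.add (Nat.mul 3 (Nat.pow 2 8320)) s0))) 4

noncomputable def chkM : Bool :=
  frc (lg 8320 (pwn 8320 s0 0)) fun G1 => frc (lg 8320 (pwn 8320 s0 1)) fun G2 =>
    Bool.and (Nat.ble (2 * G1) (2 * zL2 + G2 + 1)) (Bool.and (Nat.ble (2 * zL2 + G2) (2 * G1 + 1))
      (Nat.beq (zM + G1 + 2 * zL1) (3 * zL2 + lg 8320 zY + lg 8320 (pwn 8320 c0 3))))

set_option maxRecDepth 100000
set_option exponentiation.threshold 20000
theorem kc1 : c0 * c0 + c0 * 2 ^ 8320 ≤ 2 ^ 8320 * 2 ^ 8320 := by decide +kernel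
theorem kc2 : 2 ^ 8320 * 2 ^ 8320 ≤ (c0 + 1) * (c0 + 1) + (c0 + 1) * 2 ^ 8320 := by decide +kernel
theorem ks1 : s0 * s0 * s0 + s0 * s0 * 2 ^ 8320 + s0 * 2 ^ 8320 * 2 ^ 8320 ≤ 2 ^ 8320 * 2 ^ 8320 * 2 ^ 8320 := by
  decide +kernel
theorem ks2 : 2 ^ 8320 * 2 ^ 8320 * 2 ^ 8320 ≤ (s0 + 1) * (s0 + 1) * (s0 + 1) + (s0 + 1) * (s0 + 1) * 2 ^ 8320
    + (s0 + 1) * 2 ^ 8320 * 2 ^ 8320 := by decide +kernel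
theorem ks3 : 0 < s0 := by decide +kernel
theorem ky1 : zY * (3 * (s0 + 1) * 2 ^ 8320 + (s0 + 1) * (s0 + 1)) + 2 ^ 8320 * 2 ^ 8320 * 2 ^ 8320
    ≤ 2 * s0 * 2 ^ 8320 * 2 ^ 8320 := by decide +kernel
theorem ky2 : 2 * (s0 + 1) * 2 ^ 8320 * 2 ^ 8320
    ≤ (zY + 10) * (3 * s0 * 2 ^ 8320 + s0 * s0) + 2 ^ 8320 * 2 ^ 8320 * 2 ^ 8320 := by decide +kernel
theorem kL1 : lg 8320 (pwn 8320 c0 1) = zL1 := by decide +kernel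
theorem kM : chkM = true := by decide +kernel

theorem kq1a : q1 * zL1 + (q1 + p1) * 2 ^ 24 ≤ p1 * zL2 + 2 ^ (8320 - 4099) := by decide +kernel
theorem kq1b : p1 * zL2 + (q1 + p1) * 2 ^ 24 ≤ q1 * zL1 + 2 ^ (8320 - 4099) := by decide +kernel
theorem kq2a : q2 * zL1 + (q2 + p2) * 2 ^ 24 ≤ p2 * zL2 + 2 ^ (8320 - 1358) := by decide +kernel
theorem kq2b : p2 * zL2 + (q2 + p2) * 2 ^ 24 ≤ q2 * zL1 + 2 ^ (8320 - 1358) := by decide +kernel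
theorem kq3a : q3 * zL1 + (q3 + p3) * 2 ^ 24 ≤ p3 * zL2 + 2 ^ (8320 - 297) := by decide +kernel
theorem kq3b : p3 * zL2 + (q3 + p3) * 2 ^ 24 ≤ q3 * zL1 + 2 ^ (8320 - 297) := by decide +kernel

theorem kML : zM ≤ zL2 := by decide +kernel
theorem kML2 : Nat.shiftRight zM 6920 ≤ Nat.shiftRight zL2 6920 := by decide +kernel
theorem kML3 : Nat.shiftRight zM 7970 ≤ Nat.shiftRight zL2 7970 := by decide +kernel
theorem kp1 : 1 ≤ q1 ∧ 20 * q1 * 2 ^ 27 ≤ 2 ^ 8318 ∧ 2 ^ (8320 + 2) * q1 ≤ 2 ^ 8318 * 2 ^ 4097 ∧ 0 < 2 ^ 8318 := by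
  decide +kernel
theorem kp2 : 1 ≤ q2 ∧ 20 * q2 * 2 ^ 27 ≤ 2 ^ 1385 ∧ 2 ^ (1400 + 2) * q2 ≤ 2 ^ 1385 * 2 ^ 1370 ∧ 0 < 2 ^ 1385 := by
  decide +kernel
theorem kp3 : 1 ≤ q3 ∧ 20 * q3 * 2 ^ 27 ≤ 2 ^ 329 ∧ 2 ^ (350 + 2) * q3 ≤ 2 ^ 329 * 2 ^ 317 ∧ 0 < 2 ^ 329 := by
  decide +kernel
theorem kg1 : 2 * 2 ^ 8318 ≤ (q1 * (zM + 2 * zL2 - 0 + 0) + 2 ^ 8318) % zL2 := by decide +kernel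
theorem kg2 : 2 * 2 ^ 1385 ≤ (q2 * (Nat.shiftRight zM 6920 + 2 * Nat.shiftRight zL2 6920 - 0 + 0) + 2 ^ 1385)
    % Nat.shiftRight zL2 6920 := by decide +kernel
theorem kA : chkA 1400 q2 (2 ^ 1385) (Nat.shiftRight c0 6920) (Nat.shiftRight zL2 6920) (Nat.shiftRight zM 6920) 2000
    = true := by decide +kernel
theorem kB : chkB 1400 q2 (2 ^ 1385) (Nat.shiftRight s0 6920) (Nat.shiftRight zL2 6920) (Nat.shiftRight zM 6920) 1600
    = true := by decide +kernel
theorem kC : chkC 350 q3 (2 ^ 329) (Nat.shiftRight c0 7970) (Nat.shiftRight s0 7970) (Nat.shiftRight zL2 7970)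
    (Nat.shiftRight zM 7970) 470 372 = true := by decide +kernel

lemma apxA (h : Ctx α t) : Apx α t 8320 c0 s0 zL2 zM ∧ |(zL1 : ℝ) - 2 ^ 8320 * log α| ≤ 2 ^ 19 := by
  have hm := kM
  unfold chkM at hm
  simp only [frc_eq, Bool.and_eq_true, Nat.ble_eq, Nat.beq_eq] at hm
  exact apx0 h (by decide) kc1 kc2 ks1 ks2 ks3 ky1 ky2 kL1 rfl hm.1 hm.2.1 hm.2.2

end FT

namespace FT
open Real

variable {α t : ℝ} {n m a b : ℕ}

set_option exponentiation.threshold 20000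

lemma zero_apx (P : ℕ) : |((0 : ℕ) : ℝ) - 2 ^ P * 0| ≤ 2 ^ 25 + 2 ^ 19 := by
  rw [Nat.cast_zero, mul_zero, sub_self, abs_zero]; positivity

lemma le_of_log {x : ℕ} {l U : ℝ} (k : ℕ) (c : ℝ) (hc : 0 < c) (hl : c ≤ l) (h : x * l ≤ U) (hk : U ≤ c * k) : x ≤ k := by
  have : (x : ℝ) * c ≤ x * l := by gcongr
  have : c * x ≤ c * k := by linarith
  exact_mod_cast le_of_mul_le_mul_left this hc

lemma Sol.r1 (h : Ctx α t) (S : Sol α t n m a b) : n ≤ 2 ^ 1333 := by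
  obtain ⟨A, A1⟩ := apxA h
  have hκ := kap_bd A1 A.hL kq1a kq1b (by norm_num)
  have hn0 : 0 < n := lt_of_lt_of_le S.a1 S.an
  have r0 := S.r0 h
  have g := good_bd h (m := m) A kML (by norm_num) (zero_apx _) (zero_apx _) (by norm_num) (by norm_num) kp1.1 kp1.2.2.2
    kg1 kp1.2.1 (kap_use hκ r0 (by norm_num) le_rfl) kp1.2.2.1
  rw [sub_zero, add_zero] at g
  have hab := S.st1 h g
  rw [show ((4097 : ℕ) : ℝ) = 4097 by norm_num] at hab
  have hlog := log_of_pow hn0 r0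
  rw [show ((1214 + 221 * 13 : ℕ) : ℝ) = 4087 by norm_num] at hlog
  have := S.one h 13 13 (by norm_num) (by norm_num) ?_ (by norm_num) (by norm_num; linarith)
  · exact this
  · rcases hab with h1 | h1
    · left
      have := le_of_log 6000 0.479 (by norm_num) h.l1 h1 (by norm_num)
      norm_num; omega
    · right
      have := le_of_log 6000 0.6 (by norm_num) h.l2 h1 (by norm_num)
      norm_num; omega

lemma apxS (h : Ctx α t) {P k : ℕ} (hk : 1 ≤ k) (e : P + k = 8320) :
    Apx α t P (Nat.shiftRight c0 k) (Nat.shiftRight s0 k) (Nat.shiftRight zL2 k) (Nat.shiftRight zM k) := by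
  have := (apxA h).1
  rw [← e] at this
  exact this.shift hk

lemma Apx.Xa {P C S L M : ℕ} (h : Ctx α t) (H : Apx α t P C S L M) (ha : 1 ≤ a) :
    |((lg P (pwn P C (a - 1)) : ℕ) : ℝ) - 2 ^ P * -log (1 - (α - 1) ^ a)| ≤ 2 ^ 19 := by
  have a1 := h.α1
  have a2 := h.α2
  have := lgp H.hP (by linarith) (by linarith) H.C1 H.C2 (a - 1)
  rwa [show a - 1 + 1 = a by omega] at this

lemma Apx.Yb {P C S L M : ℕ} (h : Ctx α t) (H : Apx α t P C S L M) (hb : 1 ≤ b) :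
    |((lg P (pwn P S (b - 1)) : ℕ) : ℝ) - 2 ^ P * -log (1 - (t ^ 2 - t - 1) ^ b)| ≤ 2 ^ 19 := by
  obtain ⟨s1, s2⟩ := h.sr
  have := lgp H.hP (by linarith) (by linarith) H.S1 H.S2 (b - 1)
  rwa [show b - 1 + 1 = b by omega] at this

lemma Sol.r2 (h : Ctx α t) (S : Sol α t n m a b) : n ≤ 2 ^ 269 := by
  obtain ⟨A0, A1⟩ := apxA h
  have hκ := kap_bd A1 A0.hL kq2a kq2b (by norm_num)
  have hn0 : 0 < n := lt_of_lt_of_le S.a1 S.an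
  have r1 := S.r1 h
  have A := apxS h (P := 1400) (k := 6920) (by norm_num) (by norm_num)
  have g := good_bd h (m := m) A kML2 (by norm_num) (zero_apx _) (zero_apx _) (by norm_num) (by norm_num) kp2.1 kp2.2.2.2
    kg2 kp2.2.1 (kap_use hκ r1 (by norm_num) le_rfl) kp2.2.2.1
  rw [sub_zero, add_zero] at g
  have e1370 : ((1370 : ℕ) : ℝ) = 1370 := by norm_num
  rw [e1370] at g
  have la : ∀ {a : ℕ}, a * log α ≤ 0.6932 * 1370 + 5 → a ≤ 2000 := fun h1 =>
    le_of_log 2000 0.479 (by norm_num) h.l1 h1 (by norm_num)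
  have lb : ∀ {b : ℕ}, b * log t ≤ 0.6932 * 1370 + 5 → b ≤ 1600 := fun h1 =>
    le_of_log 1600 0.6 (by norm_num) h.l2 h1 (by norm_num)
  have big : (2 : ℝ) ^ 19 ≤ 2 ^ 25 + 2 ^ 19 := by norm_num
  have hab : a ≤ 2000 ∧ b ≤ 1600 := by
    rcases S.st1 h g with h1 | h1
    · have ha := la h1
      refine ⟨ha, ?_⟩
      have ha1 := S.a1
      have g := good_bd h (m := m) A kML2 (by norm_num) ((A.Xa h ha1).trans big) (zero_apx _)
        (h.fa ha1) (by norm_num) kp2.1 kp2.2.2.2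
        (chkA_spec kA (j := a - 1) (by omega)) kp2.2.1 (kap_use hκ r1 (by norm_num) le_rfl) kp2.2.2.1
      rw [add_zero, sub_neg_eq_add, ← add_assoc, e1370] at g
      exact lb (S.st2a h g)
    · have hb := lb h1
      refine ⟨?_, hb⟩
      have hb1 := S.b1
      have g := good_bd h (m := m) A kML2 (by norm_num) (zero_apx _) ((A.Yb h hb1).trans big)
        (by norm_num) (h.Gb hb1) kp2.1 kp2.2.2.2
        (chkB_spec kB (j := b - 1) (by omega)) kp2.2.1 (kap_use hκ r1 (by norm_num) le_rfl) kp2.2.2.1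
      rw [sub_zero, ← sub_eq_add_neg, ← add_sub_assoc, e1370] at g
      exact la (S.st2b h g)
  have hlog := log_of_pow hn0 r1
  have r := S.both h 11 11 (by norm_num) (by norm_num) (by norm_num; omega) (by norm_num; omega) (by norm_num)
    (by norm_num at hlog ⊢; linarith)
  have hlog := log_of_pow hn0 r
  exact S.both h 11 9 (by norm_num) (by norm_num) (by norm_num; omega) (by norm_num; omega) (by norm_num)
    (by norm_num at hlog ⊢; linarith)

lemma Sol.r3 (h : Ctx α t) (S : Sol α t n m a b) : n ≤ 470 := by
  obtain ⟨A0, A1⟩ := apxA h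
  have hκ := kap_bd A1 A0.hL kq3a kq3b (by norm_num)
  have r2 := S.r2 h
  have A := apxS h (P := 350) (k := 7970) (by norm_num) (by norm_num)
  have ha1 := S.a1
  have hb1 := S.b1
  have α1 := h.α1
  have α2 := h.α2
  have big : (2 : ℝ) ^ 19 ≤ 2 ^ 25 + 2 ^ 19 := by norm_num
  obtain ⟨X, hX, hXe⟩ : ∃ X, (X = 0 ∨ ∃ j < 470, X = lg 350 (pwn 350 (Nat.shiftRight c0 7970) j)) ∧
      |(X : ℝ) - 2 ^ 350 * -log (1 - (α - 1) ^ a)| ≤ 2 ^ 25 + 2 ^ 19 := by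
    rcases le_or_gt a 470 with h1 | h1
    · exact ⟨_, Or.inr ⟨a - 1, by omega, rfl⟩, (A.Xa h ha1).trans big⟩
    · refine ⟨0, Or.inl rfl, ?_⟩
      have c1 : (α - 1) ^ a ≤ 0.6181 ^ 471 := by
        calc (α - 1) ^ a ≤ (α - 1) ^ 471 := pow_le_pow_of_le_one (by linarith) (by linarith) h1
          _ ≤ 0.6181 ^ 471 := by gcongr <;> linarith
      have c2 := h.cb ha1
      have c3 := neg_log_le c2.1.le c2.2
      rw [Nat.cast_zero, zero_sub, abs_neg, abs_of_nonneg (mul_nonneg (by positivity) c3.1)]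
      calc 2 ^ 350 * -log (1 - (α - 1) ^ a) ≤ 2 ^ 350 * (2.7 * 0.6181 ^ 471) := by
            gcongr; linarith
        _ ≤ _ := by norm_num
  obtain ⟨Y, hY, hYe⟩ : ∃ Y, (Y = 0 ∨ ∃ j < 372, Y = lg 350 (pwn 350 (Nat.shiftRight s0 7970) j)) ∧
      |(Y : ℝ) - 2 ^ 350 * -log (1 - (t ^ 2 - t - 1) ^ b)| ≤ 2 ^ 25 + 2 ^ 19 := by
    rcases le_or_gt b 372 with h1 | h1
    · exact ⟨_, Or.inr ⟨b - 1, by omega, rfl⟩, (A.Yb h hb1).trans big⟩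
    · refine ⟨0, Or.inl rfl, ?_⟩
      obtain ⟨s1, s2⟩ := h.sr
      have s3 : t ^ 2 - t - 1 ≤ 0.5439 := by
        have := h.ss
        have := h.t1
        nlinarith
      have c1 : (t ^ 2 - t - 1) ^ b ≤ 0.5439 ^ 373 := by
        calc (t ^ 2 - t - 1) ^ b ≤ (t ^ 2 - t - 1) ^ 373 := pow_le_pow_of_le_one (by linarith) (by linarith) h1
          _ ≤ 0.5439 ^ 373 := by gcongr
      have c2 := h.sb hb1
      have c3 := neg_log_le c2.1.le (by linarith)
      rw [Nat.cast_zero, zero_sub, abs_neg, abs_of_nonneg (mul_nonneg (by positivity) c3.1)]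
      calc 2 ^ 350 * -log (1 - (t ^ 2 - t - 1) ^ b) ≤ 2 ^ 350 * (2.7 * 0.5439 ^ 373) := by
            gcongr; linarith
        _ ≤ _ := by norm_num
  have g := good_bd h (m := m) A kML3 (by norm_num) hXe hYe (h.fa ha1) (h.Gb hb1) kp3.1 kp3.2.2.2
    (chkC_spec kC hX hY) kp3.2.1 (kap_use hκ r2 (by norm_num) le_rfl) kp3.2.2.1
  rw [sub_neg_eq_add, ← sub_eq_add_neg, ← add_sub_assoc, ← add_assoc] at g
  have h3 := S.st3 h g
  rw [show ((317 : ℕ) : ℝ) = 317 by norm_num] at h3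
  exact le_of_log 470 0.479 (by norm_num) h.l1 h3 (by norm_num)

end FT

namespace FT
open Real

lemma tr (k : ℕ) : 0 ≤ trib k ∧ 1 ≤ trib (k + 1) ∧ trib (k + 1) ≤ trib (k + 2) ∧ (k : ℤ) ≤ trib (k + 2) := by
  induction k with
  | zero => simp [trib]
  | succ k ih =>
    obtain ⟨h1, h2, h3, h4⟩ := ih
    have e : trib (k + 1 + 2) = trib (k + 2) + trib (k + 1) + trib k := rfl
    rw [e]
    push_cast
    refine ⟨by omega, ?_, ?_, ?_⟩
    · show 1 ≤ trib (k + 2); omega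
    · show trib (k + 2) ≤ _; omega
    · omega

lemma m_small {n m n₁ m₁ : ℕ} (hm₁ : 2 ≤ m₁) (hm : m₁ < m) (hn : n < 20)
    (h : (Nat.fib n : ℤ) - Nat.fib n₁ = trib m - trib m₁) : m ≤ 5000 := by
  have hf : Nat.fib n ≤ Nat.fib 19 := Nat.fib_mono (by omega)
  have h19 : Nat.fib 19 = 4181 := by decide +kernel
  have mono : Monotone fun k => trib (k + 1) := monotone_nat_of_le_succ fun k => (tr k).2.2.1
  obtain ⟨k, rfl⟩ : ∃ k, m = k + 3 := ⟨m - 3, by omega⟩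
  have h1 : trib m₁ ≤ trib (k + 2) := by
    have := mono (show m₁ - 1 ≤ k + 1 by omega)
    simp only at this
    rwa [show m₁ - 1 + 1 = m₁ by omega] at this
  have e : trib (k + 3) = trib (k + 2) + trib (k + 1) + trib k := rfl
  rcases k with _ | k
  · omega
  · have := (tr k).2.2.2
    have h4 := (tr k).2.1
    have : trib (k + 1 + 1) = trib (k + 2) := rfl
    push_cast at *
    omega

lemma fin {α αT : ℝ} (h : Ctx α αT) {n m n₁ m₁ : ℕ} (hn3 : 3 ≤ n) (hn : n ≤ 5000) (hm : m ≤ 5000) :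
    max (((n : ℝ) - n₁) * Real.log α) (((m : ℝ) - m₁) * Real.log αT) <
        1.66 * 10 ^ 30 * Real.log n ^ 2 ∧ n < 8 * 10 ^ 51 := by
  refine ⟨?_, by omega⟩
  have hl : 1 ≤ Real.log n := by
    rw [Real.le_log_iff_exp_le (by positivity)]
    have := Real.exp_one_lt_d9
    have : (3 : ℝ) ≤ n := by exact_mod_cast hn3
    linarith
  have hl2 : 1 ≤ Real.log n ^ 2 := one_le_pow₀ hl
  have a1 := h.l1
  have a2 := h.l2
  have b1 := Real.log_le_sub_one_of_pos (show 0 < α by linarith [h.α1])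
  have b2 := Real.log_le_sub_one_of_pos (show 0 < αT by linarith [h.t1])
  have c1 := h.α2
  have c2 := h.t2
  have hn' : (n : ℝ) ≤ 5000 := by exact_mod_cast hn
  have hm' : (m : ℝ) ≤ 5000 := by exact_mod_cast hm
  have n0 : (0 : ℝ) ≤ n₁ := Nat.cast_nonneg _
  have m0 : (0 : ℝ) ≤ m₁ := Nat.cast_nonneg _
  have big : (5000 : ℝ) < 1.66 * 10 ^ 30 * Real.log n ^ 2 := by
    calc (5000 : ℝ) < 1.66 * 10 ^ 30 * 1 := by norm_num
      _ ≤ _ := by gcongr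
  refine max_lt (lt_of_le_of_lt ?_ big) (lt_of_le_of_lt ?_ big)
  · calc ((n : ℝ) - n₁) * Real.log α ≤ 5000 * Real.log α := by gcongr; linarith
      _ ≤ 5000 := by linarith
  · calc ((m : ℝ) - m₁) * Real.log αT ≤ 5000 * Real.log αT := by gcongr; linarith
      _ ≤ 5000 := by linarith

end FT

/-- If `n > n₁ ≥ 2`, `m > m₁ ≥ 2` and `F n - F n₁ = T m - T m₁`, then
`max {(n-n₁)·log α, (m-m₁)·log α_T} < 1.66×10³⁰·(log n)²` and `n < 8×10⁵¹`. -/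
theorem fib_trib_max_bound (α αT : ℝ)
    (hα : α = (1 + Real.sqrt 5) / 2)
    (hroot : αT ^ 3 - αT ^ 2 - αT - 1 = 0)
    (huniq : ∀ x : ℝ, x ^ 3 - x ^ 2 - x - 1 = 0 → x = αT)
    (n m n₁ m₁ : ℕ) (hn₁ : 2 ≤ n₁) (hn : n₁ < n) (hm₁ : 2 ≤ m₁) (hm : m₁ < m)
    (h : (Nat.fib n : ℤ) - Nat.fib n₁ = trib m - trib m₁) :
    max (((n : ℝ) - n₁) * Real.log α) (((m : ℝ) - m₁) * Real.log αT) <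
        1.66 * 10 ^ 30 * Real.log n ^ 2 ∧
      n < 8 * 10 ^ 51 := by
  have hc := FT.ctx_mk hα hroot
  rcases Nat.lt_or_ge n 20 with h20 | h20
  · exact FT.fin hc (by omega) (by omega) (FT.m_small hm₁ hm h20 h)
  · have S := FT.sol_mk hα hroot hn hm h20 h
    have := S.r3 hc
    have := S.mn
    exact FT.fin hc (by omega) (by omega) (by omega)
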